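/- For every integer k ≥ 1 and every d > 0 there exist constants ε₁ = ε₁(k) > 0 and C = C(k,d) such that the following holds. Let h : S² → S² be a rational map with |deg(h)| ≤ k, and suppose there is a nonempty finite collection of geodesic balls (B_{Rᵢ}(zᵢ))_{i∈J₁} and a further (possibly empty) collection (B_{Rᵢ}(zᵢ))_{i∈J₂}, with |J₁|+|J₂| ≤ k in total, such that: (a) E(h, S²∖⋃_{i∈J₁∪J₂} B_{Rᵢ}(zᵢ)) ≤ 2ε₁; (b) E(h, B_{2Rᵢ}(zᵢ)∖B_{Rᵢ}(zᵢ)) ≤ 2ε₁ for every i ∈ J₂; and (c) for every x ∈ ⋃_{i∈J₁} B_{4Rᵢ}(zᵢ) there exists j ∈ J₁ with x ∈ B_{d⁻¹R_j}(z_j) and E(h, B_{dR_j}(x)∖⋃_{i∈J₂} B_{Rᵢ}(zᵢ)) ≤ 2ε₁. Then the energy density of h satisfies |∇h|² ≤ C·∑_{i∈J₁∪J₂} ρ_{zᵢ,Rᵢ}² pointwise on S²∖⋃_{i∈J₂} B_{4Rᵢ}(zᵢ). -/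

import Mathlib

open MeasureTheory Metric Real Set Filter
open scoped RealInnerProductSpace

noncomputable section

abbrev E3 : Type := EuclideanSpace ℝ (Fin 3)

/-- The unit sphere `S² ⊂ ℝ³`. -/
def S2 : Set E3 := Metric.sphere (0 : E3) 1

/-- Surface measure on `S²`: 2-dimensional Hausdorff measure restricted to the sphere. -/
def sphVol : Measure E3 := (μH[2] : Measure E3).restrict S2

/-- The 0-homogeneous extension of a map defined on the sphere. -/
def homExt (u : E3 → E3) : E3 → E3 := fun y => u (‖y‖⁻¹ • y)

def e3 (i : Fin 3) : E3 := EuclideanSpace.single i (1 : ℝ)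

/-- Energy density `|∇u|²` of `u|_{S²}` at `x ∈ S²` (squared Hilbert-Schmidt norm of the
differential, computed via the 0-homogeneous extension). -/
def enDensity (u : E3 → E3) (x : E3) : ℝ :=
  ∑ i, ‖fderiv ℝ (homExt u) x (e3 i)‖ ^ 2

/-- Dirichlet energy `E(u,Ω) = (1/2)∫_Ω |∇u|²`. -/
def energyOn (u : E3 → E3) (Ω : Set E3) : ℝ :=
  (1 / 2) * ∫ x in Ω, enDensity u x ∂sphVol

def energy (u : E3 → E3) : ℝ := energyOn u S2

def det3 (a b c : E3) : ℝ :=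
  a 0 * (b 1 * c 2 - b 2 * c 1) - a 1 * (b 0 * c 2 - b 2 * c 0)
    + a 2 * (b 0 * c 1 - b 1 * c 0)

/-- The signed Jacobian of a sphere map. -/
def jacobian (u : E3 → E3) (x : E3) : ℝ :=
  (1 / 2) * ∑ i, ∑ j, det3 x (e3 i) (e3 j) *
      det3 (u x) (fderiv ℝ (homExt u) x (e3 i)) (fderiv ℝ (homExt u) x (e3 j))

/-- The (Brouwer) degree, `deg u = (1/4π) ∫ Jac(u)`. -/
def sphDeg (u : E3 → E3) : ℝ := (4 * π)⁻¹ * ∫ x, jacobian u x ∂sphVol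

/-- The energy defect `δ_u = E(u) - 4π|deg u|`. -/
def defect (u : E3 → E3) : ℝ := energy u - 4 * π * |sphDeg u|

def IsSphereMap (u : E3 → E3) : Prop :=
  ContDiff ℝ (⊤ : ℕ∞) u ∧ ∀ x ∈ S2, u x ∈ S2

/-- Laplace-Beltrami operator of the round sphere applied to `u`. -/
def sphLap (u : E3 → E3) (x : E3) : E3 :=
  ∑ i, fderiv ℝ (fun y => fderiv ℝ (homExt u) y (e3 i)) x (e3 i)

/-- Tension field `τ(u) = Δu + |∇u|² u`. -/
def tension (u : E3 → E3) (x : E3) : E3 :=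
  sphLap u x + enDensity u x • u x

/-- Harmonic (= rational, up to orientation) maps of the round sphere. -/
def IsHarmonicSphereMap (u : E3 → E3) : Prop :=
  IsSphereMap u ∧ ∀ x ∈ S2, tension u x = 0

/-- Geodesic distance on `S²`. -/
def gdist (x y : E3) : ℝ := Real.arccos ⟪x, y⟫

/-- Geodesic ball in `S²`. -/
def gBall (x : E3) (r : ℝ) : Set E3 := {y ∈ S2 | gdist x y < r}

/-- Oscillation of `u` over `U`. -/
def oscOn (u : E3 → E3) (U : Set E3) : ℝ := ⨆ x ∈ U, ⨆ y ∈ U, ‖u x - u y‖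

/-- The Möbius dilation of the sphere with centre `p` and dilation factor `μ`. -/
def mobius (p : E3) (μ : ℝ) (y : E3) : E3 :=
  ((1 + ⟪y, p⟫) + μ ^ 2 * (1 - ⟪y, p⟫))⁻¹ •
    (((1 + ⟪y, p⟫) - μ ^ 2 * (1 - ⟪y, p⟫)) • p + (2 * μ) • (y - ⟪y, p⟫ • p))

/-- The Möbius dilation `M_{p,r}` centred at `p` scaling `B_r(p)` to a hemisphere. -/
def mobiusDil (p : E3) (r : ℝ) : E3 → E3 := mobius p (Real.tan (r / 2))⁻¹

/-- `ρ_{p,r}² = (1/2)|∇M_{p,r}|²`, the conformal factor squared of `M_{p,r}`. -/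
def confSq (p : E3) (r : ℝ) (x : E3) : ℝ := (1 / 2) * enDensity (mobiusDil p r) x

/-- Möbius transformations (conformal diffeomorphisms) of the round sphere:
compositions of an isometry with a Möbius dilation. -/
def IsMobiusTransform (M : E3 → E3) : Prop :=
  ∃ (R : E3 ≃ₗᵢ[ℝ] E3) (p : E3) (μ : ℝ),
    p ∈ S2 ∧ 0 < μ ∧ ∀ x ∈ S2, M x = R (mobius p μ x)

/-- A set obtained from a geodesic ball by removing a finite collection of smaller balls. -/
def IsBallMinusBalls (Ω : Set E3) : Prop :=
  ∃ (c : E3) (R : ℝ) (m : ℕ) (cs : Fin m → E3) (rs : Fin m → ℝ),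
    c ∈ S2 ∧ 0 < R ∧ (∀ j, cs j ∈ S2 ∧ rs j < R) ∧
    Ω = gBall c R \ ⋃ j, gBall (cs j) (rs j)

/-- `ρ_{z,R}²` with the convention that `ρ_{z,R} ≡ 1` for `R ≥ π/2`. -/
def rhoSq (z : E3) (R : ℝ) (x : E3) : ℝ := if R < π / 2 then confSq z R x else 1


/-! ### Frames and stereographic coordinates -/

lemma exists_frame {x : E3} (hx : x ∈ S2) :
    ∃ B : OrthonormalBasis (Fin 3) ℝ E3, B 2 = x := by
  have hx1 : ‖x‖ = 1 := by simpa [S2] using hx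
  have ho : Orthonormal ℝ (({2} : Set (Fin 3)).domRestrict (fun _ : Fin 3 => x)) := by
    constructor
    · intro i; exact hx1
    · intro i j hij
      exact absurd (Subsingleton.elim i j) hij
  obtain ⟨b, hb⟩ := ho.exists_orthonormalBasis_extension_of_card_eq (by simp)
  exact ⟨b, hb 2 (by simp)⟩

lemma frame_inner (B : OrthonormalBasis (Fin 3) ℝ E3) (i j : Fin 3) :
    ⟪B i, B j⟫ = if i = j then (1 : ℝ) else 0 := orthonormal_iff_ite.mp B.orthonormal i j

/-- inverse stereographic projection in the frame `B`, with `0 ↦ B 2`. -/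
def psi (B : OrthonormalBasis (Fin 3) ℝ E3) (w : ℂ) : E3 :=
  (1 + Complex.normSq w)⁻¹ • ((2 * w.re) • B 0 + (2 * w.im) • B 1 + (1 - Complex.normSq w) • B 2)

lemma psi_zero (B : OrthonormalBasis (Fin 3) ℝ E3) : psi B 0 = B 2 := by simp [psi]

lemma one_add_normSq_pos (w : ℂ) : 0 < 1 + Complex.normSq w := by
  have := Complex.normSq_nonneg w; linarith

lemma inner_comb (B : OrthonormalBasis (Fin 3) ℝ E3) (a b c a' b' c' : ℝ) :
    ⟪a • B 0 + b • B 1 + c • B 2, a' • B 0 + b' • B 1 + c' • B 2⟫ = a * a' + b * b' + c * c' := by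
  simp only [inner_add_left, inner_add_right, real_inner_smul_left, real_inner_smul_right,
    frame_inner]
  simp; ring

lemma frame_expand (B : OrthonormalBasis (Fin 3) ℝ E3) (y : E3) :
    y = ⟪B 0, y⟫ • B 0 + ⟪B 1, y⟫ • B 1 + ⟪B 2, y⟫ • B 2 := by
  have := B.sum_repr' y
  rw [Fin.sum_univ_three] at this
  exact this.symm

lemma inner_psi_psi (B : OrthonormalBasis (Fin 3) ℝ E3) (w v : ℂ) :
    ⟪psi B w, psi B v⟫ = (1 + Complex.normSq w)⁻¹ * (1 + Complex.normSq v)⁻¹ *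
      (4 * (w.re * v.re + w.im * v.im) + (1 - Complex.normSq w) * (1 - Complex.normSq v)) := by
  unfold psi
  rw [real_inner_smul_left, real_inner_smul_right, inner_comb]; ring

lemma norm_psi (B : OrthonormalBasis (Fin 3) ℝ E3) (w : ℂ) : ‖psi B w‖ = 1 := by
  have h : ‖psi B w‖ ^ 2 = 1 := by
    rw [← real_inner_self_eq_norm_sq, inner_psi_psi]
    have := (one_add_normSq_pos w).ne'
    field_simp
    rw [Complex.normSq_apply]; ring
  have h0 := norm_nonneg (psi B w)
  nlinarith

lemma psi_mem (B : OrthonormalBasis (Fin 3) ℝ E3) (w : ℂ) : psi B w ∈ S2 := by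
  simp [S2, norm_psi]

lemma norm_psi_sub_sq (B : OrthonormalBasis (Fin 3) ℝ E3) (w v : ℂ) :
    ‖psi B w - psi B v‖ ^ 2 =
      4 * ‖w - v‖ ^ 2 / ((1 + Complex.normSq w) * (1 + Complex.normSq v)) := by
  rw [@norm_sub_sq_real, norm_psi, norm_psi, inner_psi_psi, ← Complex.normSq_eq_norm_sq]
  have := (one_add_normSq_pos w).ne'
  have := (one_add_normSq_pos v).ne'
  field_simp
  simp only [Complex.normSq_apply, Complex.sub_re, Complex.sub_im]; ring

lemma inner_psi_base (B : OrthonormalBasis (Fin 3) ℝ E3) (w : ℂ) :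
    ⟪B 2, psi B w⟫ = (1 + Complex.normSq w)⁻¹ * (1 - Complex.normSq w) := by
  rw [← psi_zero, inner_psi_psi]; simp

lemma norm_psi_add_sq (B : OrthonormalBasis (Fin 3) ℝ E3) (w : ℂ) :
    ‖psi B w + B 2‖ ^ 2 = 4 / (1 + Complex.normSq w) := by
  rw [@norm_add_sq_real, norm_psi, B.norm_eq_one, real_inner_comm, inner_psi_base]
  have := (one_add_normSq_pos w).ne'
  field_simp; ring

lemma norm_psi_sub_base_sq (B : OrthonormalBasis (Fin 3) ℝ E3) (w : ℂ) :
    ‖psi B w - B 2‖ ^ 2 = 4 * ‖w‖ ^ 2 / (1 + Complex.normSq w) := by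
  rw [← psi_zero B, norm_psi_sub_sq]; simp

lemma psi_surj (B : OrthonormalBasis (Fin 3) ℝ E3) {y : E3} (hy : y ∈ S2) (hne : y ≠ - B 2) :
    ∃ w, psi B w = y := by
  have hy1 : ‖y‖ = 1 := by simpa [S2] using hy
  set a := ⟪B 0, y⟫ with ha
  set b := ⟪B 1, y⟫ with hb
  set c := ⟪B 2, y⟫ with hc
  have hexp := frame_expand B y
  rw [← ha, ← hb, ← hc] at hexp
  have hsq : a * a + b * b + c * c = 1 := by
    have : ⟪y, y⟫ = (1 : ℝ) := by rw [real_inner_self_eq_norm_sq, hy1]; norm_num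
    rw [hexp, inner_comb] at this; exact this
  have hc1 : 1 + c ≠ 0 := by
    intro h0
    have hc' : c = -1 := by linarith
    have ha0 : a = 0 := by rw [hc'] at hsq; nlinarith [mul_self_nonneg a, mul_self_nonneg b]
    have hb0 : b = 0 := by rw [hc'] at hsq; nlinarith [mul_self_nonneg a, mul_self_nonneg b]
    apply hne
    rw [hexp, ha0, hb0, hc']; simp
  refine ⟨⟨a / (1 + c), b / (1 + c)⟩, ?_⟩
  have hn : Complex.normSq ⟨a / (1 + c), b / (1 + c)⟩ = (1 - c) / (1 + c) := by
    rw [Complex.normSq_mk]; field_simp; nlinarith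
  have h1 : (1 : ℝ) + (1 - c) / (1 + c) = 2 / (1 + c) := by field_simp; ring
  have h2 : (1 : ℝ) - (1 - c) / (1 + c) = 2 * c / (1 + c) := by field_simp; ring
  unfold psi
  rw [hn, h1, h2]
  conv_rhs => rw [hexp]
  rw [smul_add, smul_add, smul_smul, smul_smul, smul_smul]
  congr 1
  · congr 1
    · congr 1; field_simp
    · congr 1; field_simp
  · congr 1; field_simp

lemma psi_contDiff (B : OrthonormalBasis (Fin 3) ℝ E3) : ContDiff ℝ (⊤ : ℕ∞) (psi B) := by
  have hre : ContDiff ℝ (⊤ : ℕ∞) (fun w : ℂ => w.re) := Complex.reCLM.contDiff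
  have him : ContDiff ℝ (⊤ : ℕ∞) (fun w : ℂ => w.im) := Complex.imCLM.contDiff
  have hn : ContDiff ℝ (⊤ : ℕ∞) (fun w : ℂ => Complex.normSq w) := by
    simp only [Complex.normSq_apply]; exact (hre.mul hre).add (him.mul him)
  unfold psi
  apply ContDiff.fun_smul
  · exact (contDiff_const.add hn).inv (fun w => (one_add_normSq_pos w).ne')
  · exact (((contDiff_const.mul hre).fun_smul contDiff_const).add
      ((contDiff_const.mul him).fun_smul contDiff_const)).add
      ((contDiff_const.sub hn).fun_smul contDiff_const)

/-- first derivative of `psi`: conformality. -/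
def lam (w : ℂ) : ℝ := 2 / (1 + Complex.normSq w)

lemma lam_pos (w : ℂ) : 0 < lam w := div_pos two_pos (one_add_normSq_pos w)

lemma psi_conf (B : OrthonormalBasis (Fin 3) ℝ E3) (w v : ℂ) :
    ‖fderiv ℝ (psi B) w v‖ = lam w * ‖v‖ := by
  -- take the limit of the chord formula
  have hd : HasFDerivAt (psi B) (fderiv ℝ (psi B) w) w :=
    ((psi_contDiff B).differentiable (by simp) w).hasFDerivAt
  have hl : HasDerivAt (fun t : ℝ => psi B (w + t * v)) (fderiv ℝ (psi B) w v) 0 := by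
    have h1 : HasDerivAt (fun t : ℝ => w + (t : ℂ) * v) v 0 := by
      have := ((Complex.ofRealCLM.hasDerivAt (x := (0:ℝ))).mul_const v).const_add w
      simpa using this
    have hd' : HasFDerivAt (psi B) (fderiv ℝ (psi B) w) (w + ((0:ℝ) : ℂ) * v) := by simpa using hd
    exact hd'.comp_hasDerivAt (0:ℝ) h1
  have ht := hl.tendsto_slope_zero
  have ht2 := (ht.norm).pow 2
  have hlim : Tendsto (fun t : ℝ => 4 * ‖v‖ ^ 2 /
      ((1 + Complex.normSq (w + t * v)) * (1 + Complex.normSq w))) (nhdsWithin 0 {0}ᶜ)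
      (nhds ((lam w * ‖v‖) ^ 2)) := by
    have hc : Continuous (fun t : ℝ => 4 * ‖v‖ ^ 2 /
      ((1 + Complex.normSq (w + t * v)) * (1 + Complex.normSq w))) := by
      apply Continuous.div continuous_const
      · exact ((continuous_const.add (Complex.continuous_normSq.comp (by fun_prop))).mul
          continuous_const)
      · intro t
        exact (mul_pos (one_add_normSq_pos _) (one_add_normSq_pos _)).ne'
    have := (hc.tendsto 0).mono_left (nhdsWithin_le_nhds (s := {0}ᶜ))
    convert this using 2
    unfold lam
    have := (one_add_normSq_pos w).ne'
    simp only [Complex.ofReal_zero, zero_mul, add_zero]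
    field_simp
    try ring
  have heq : (fun t : ℝ => ‖t⁻¹ • (psi B (w + ((0 + t : ℝ) : ℂ) * v) -
      psi B (w + ((0 : ℝ) : ℂ) * v))‖ ^ 2)
      =ᶠ[nhdsWithin 0 {0}ᶜ] (fun t : ℝ => 4 * ‖v‖ ^ 2 /
      ((1 + Complex.normSq (w + t * v)) * (1 + Complex.normSq w))) := by
    filter_upwards [self_mem_nhdsWithin] with t ht
    have ht0 : t ≠ 0 := ht
    rw [norm_smul, mul_pow, norm_psi_sub_sq]
    simp only [zero_add, Complex.ofReal_zero, zero_mul, add_zero, add_sub_cancel_left, norm_mul,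
      Complex.norm_real, norm_inv]
    have := (one_add_normSq_pos w).ne'
    have := (one_add_normSq_pos (w + t * v)).ne'
    have : ‖t‖ ≠ 0 := by simpa using ht0
    field_simp
  have := tendsto_nhds_unique (ht2.congr' heq) hlim
  have h0 : 0 ≤ lam w * ‖v‖ := mul_nonneg (lam_pos w).le (norm_nonneg _)
  exact (pow_left_inj₀ (norm_nonneg _) h0 two_ne_zero).mp this

lemma psi_conf_inner (B : OrthonormalBasis (Fin 3) ℝ E3) (w : ℂ) :
    ⟪fderiv ℝ (psi B) w 1, fderiv ℝ (psi B) w Complex.I⟫ = 0 := by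
  have h1 := psi_conf B w 1
  have h2 := psi_conf B w Complex.I
  have h3 := psi_conf B w (1 + Complex.I)
  have hn : ‖(1 : ℂ) + Complex.I‖ ^ 2 = 2 := by
    rw [← Complex.normSq_eq_norm_sq, Complex.normSq_apply]; simp; norm_num
  have h4 := @norm_add_sq_real E3 _ _ (fderiv ℝ (psi B) w 1) (fderiv ℝ (psi B) w Complex.I)
  rw [← map_add, h3, h1, h2, mul_pow, hn] at h4
  simp at h4
  linarith

/-! ### Hausdorff measure on the sphere -/

lemma norm_psi_sub_le (B : OrthonormalBasis (Fin 3) ℝ E3) (w v : ℂ) :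
    ‖psi B w - psi B v‖ ≤ 2 * ‖w - v‖ := by
  have h := norm_psi_sub_sq B w v
  have h1 : 4 * ‖w - v‖ ^ 2 / ((1 + Complex.normSq w) * (1 + Complex.normSq v)) ≤
      4 * ‖w - v‖ ^ 2 := by
    apply div_le_self (by positivity)
    have := Complex.normSq_nonneg w
    have := Complex.normSq_nonneg v
    nlinarith
  rw [← h] at h1
  have : ‖psi B w - psi B v‖ ^ 2 ≤ (2 * ‖w - v‖) ^ 2 := by rw [mul_pow]; norm_num; exact h1
  exact (pow_le_pow_iff_left₀ (norm_nonneg _) (by positivity) two_ne_zero).mp this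

lemma mkC_lip (a b : Fin 2 → ℝ) :
    ‖(⟨a 0, a 1⟩ : ℂ) - ⟨b 0, b 1⟩‖ ≤ 2 * ‖a - b‖ := by
  have h0 : |a 0 - b 0| ≤ ‖a - b‖ := by simpa using norm_le_pi_norm (a - b) 0
  have h1 : |a 1 - b 1| ≤ ‖a - b‖ := by simpa using norm_le_pi_norm (a - b) 1
  have := Complex.norm_le_abs_re_add_abs_im ((⟨a 0, a 1⟩ : ℂ) - ⟨b 0, b 1⟩)
  simp only [Complex.sub_re, Complex.sub_im] at this
  linarith

lemma haus_pi2 : (μH[2] : Measure (Fin 2 → ℝ)) = volume := by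
  have := hausdorffMeasure_pi_real (ι := Fin 2)
  simpa using this

lemma haus_cap (y : E3) (hy : y ∈ S2) (r : ℝ) (hr : 0 < r) (hr2 : r ^ 2 ≤ 2) :
    (μH[2] : Measure E3) (S2 ∩ closedBall y r) ≤ ENNReal.ofReal (64 * r ^ 2) := by
  obtain ⟨B, hB⟩ := exists_frame hy
  let g : (Fin 2 → ℝ) → E3 := fun a => psi B ⟨a 0, a 1⟩
  have hg : LipschitzWith 4 g := by
    apply LipschitzWith.of_dist_le_mul
    intro a b
    rw [dist_eq_norm, dist_eq_norm]
    have h1 := norm_psi_sub_le B ⟨a 0, a 1⟩ ⟨b 0, b 1⟩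
    have h2 := mkC_lip a b
    simp only [NNReal.coe_ofNat]
    show ‖psi B _ - psi B _‖ ≤ _
    linarith
  have hsub : S2 ∩ closedBall y r ⊆ g '' (Icc (fun _ => -r) (fun _ => r)) := by
    rintro p ⟨hp, hpr⟩
    rw [mem_closedBall, dist_eq_norm] at hpr
    have hne : p ≠ - B 2 := by
      rintro rfl
      rw [← hB] at hpr
      have h2 : ‖-B 2 - B 2‖ = 2 := by
        have : -B 2 - B 2 = (-2 : ℝ) • B 2 := by module
        rw [this, norm_smul, B.norm_eq_one]; norm_num
      rw [h2] at hpr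
      nlinarith
    obtain ⟨w, rfl⟩ := psi_surj B hp hne
    have h1 := norm_psi_sub_base_sq B w
    rw [hB] at h1
    have h2 : ‖psi B w - y‖ ^ 2 ≤ r ^ 2 := by gcongr
    rw [h1, Complex.normSq_eq_norm_sq] at h2
    rw [div_le_iff₀ (by positivity)] at h2
    have h3 : ‖w‖ ^ 2 ≤ r ^ 2 := by nlinarith [sq_nonneg ‖w‖]
    have h4 : ‖w‖ ≤ r := (pow_le_pow_iff_left₀ (norm_nonneg _) hr.le two_ne_zero).mp h3
    have h5 := (Complex.abs_re_le_norm w).trans h4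
    have h6 := (Complex.abs_im_le_norm w).trans h4
    rw [abs_le] at h5 h6
    refine ⟨![w.re, w.im], ⟨?_, ?_⟩, ?_⟩
    · intro i; fin_cases i <;> simp <;> linarith
    · intro i; fin_cases i <;> simp <;> linarith
    · simp [g]
  calc (μH[2] : Measure E3) (S2 ∩ closedBall y r) ≤ μH[2] (g '' (Icc (fun _ => -r) (fun _ => r))) :=
        measure_mono hsub
    _ ≤ ((4 : NNReal) : ENNReal) ^ (2:ℝ) * μH[2] (Icc (fun _ : Fin 2 => -r) (fun _ => r)) :=
        hg.lipschitzOnWith.hausdorffMeasure_image_le (by norm_num)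
    _ = ENNReal.ofReal (64 * r ^ 2) := by
        rw [haus_pi2, Real.volume_Icc_pi]
        simp only [Fin.prod_univ_two]
        rw [← ENNReal.ofReal_mul (by linarith)]
        have : ((4 : NNReal) : ENNReal) ^ (2:ℝ) = ENNReal.ofReal 16 := by
          rw [show (2:ℝ) = ((2:ℕ):ℝ) by norm_num, ENNReal.rpow_natCast]
          norm_num
        rw [this, ← ENNReal.ofReal_mul (by norm_num)]
        congr 1; ring

lemma haus_S2_le : (μH[2] : Measure E3) S2 ≤ ENNReal.ofReal 256 := by
  obtain ⟨y, hy⟩ : ∃ y : E3, y ∈ S2 := ⟨EuclideanSpace.single 0 1, by simp [S2]⟩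
  have hy' : -y ∈ S2 := by simpa [S2] using hy
  have h2 : (√2) ^ 2 = (2 : ℝ) := Real.sq_sqrt (by norm_num)
  have hsub : S2 ⊆ (S2 ∩ closedBall y (√2)) ∪ (S2 ∩ closedBall (-y) (√2)) := by
    intro p hp
    have hp1 : ‖p‖ = 1 := by simpa [S2] using hp
    have hy1 : ‖y‖ = 1 := by simpa [S2] using hy
    rcases le_total 0 ⟪p, y⟫ with h | h
    · left
      refine ⟨hp, ?_⟩
      rw [mem_closedBall, dist_eq_norm]
      apply Real.le_sqrt_of_sq_le
      rw [@norm_sub_sq_real, hp1, hy1]; linarith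
    · right
      refine ⟨hp, ?_⟩
      rw [mem_closedBall, dist_eq_norm]
      apply Real.le_sqrt_of_sq_le
      rw [sub_neg_eq_add, @norm_add_sq_real, hp1, hy1]; linarith
  calc (μH[2] : Measure E3) S2 ≤ _ := measure_mono hsub
    _ ≤ _ := measure_union_le _ _
    _ ≤ ENNReal.ofReal (64 * (√2) ^ 2) + ENNReal.ofReal (64 * (√2) ^ 2) := by
        gcongr
        · exact haus_cap y hy _ (by positivity) h2.le
        · exact haus_cap (-y) hy' _ (by positivity) h2.le
    _ = ENNReal.ofReal 256 := by
        rw [h2, ← ENNReal.ofReal_add (by norm_num) (by norm_num)]; norm_num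

lemma haus_cap' (y : E3) (hy : y ∈ S2) (r : ℝ) (hr : 0 < r) :
    (μH[2] : Measure E3) (S2 ∩ closedBall y r) ≤ ENNReal.ofReal (256 * r ^ 2) := by
  rcases le_total (r ^ 2) 2 with h | h
  · refine (haus_cap y hy r hr h).trans (ENNReal.ofReal_le_ofReal ?_)
    nlinarith
  · refine (measure_mono inter_subset_left).trans (haus_S2_le.trans (ENNReal.ofReal_le_ofReal ?_))
    nlinarith

lemma one_le_haus_S2 : 1 ≤ (μH[2] : Measure E3) S2 := by
  let g : E3 → (Fin 2 → ℝ) := fun y => ![y 0, y 1]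
  have hg : LipschitzWith 1 g := by
    apply LipschitzWith.of_dist_le_mul
    intro a b
    rw [NNReal.coe_one, one_mul, dist_pi_le_iff dist_nonneg, dist_eq_norm]
    intro i
    fin_cases i
    · simpa [g, Real.dist_eq] using PiLp.norm_apply_le (a - b) 0
    · simpa [g, Real.dist_eq] using PiLp.norm_apply_le (a - b) 1
  have hsub : Icc (fun _ => (-1/2:ℝ)) (fun _ => 1/2) ⊆ g '' S2 := by
    rintro v ⟨h1, h2⟩
    have a1 := h1 0
    have a2 := h1 1
    have a3 := h2 0
    have a4 := h2 1
    simp only at a1 a2 a3 a4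
    have hp : 0 ≤ 1 - v 0 ^ 2 - v 1 ^ 2 := by nlinarith
    refine ⟨!₂[v 0, v 1, √(1 - v 0 ^ 2 - v 1 ^ 2)], ?_, ?_⟩
    · simp only [S2, mem_sphere_iff_norm, sub_zero]
      rw [EuclideanSpace.norm_eq, Fin.sum_univ_three]
      simp [Real.sq_sqrt hp]
    · ext i; fin_cases i <;> simp [g]
  calc (1 : ENNReal) = μH[2] (Icc (fun _ : Fin 2 => (-1/2:ℝ)) (fun _ => 1/2)) := by
        rw [haus_pi2, Real.volume_Icc_pi]; norm_num
    _ ≤ μH[2] (g '' S2) := measure_mono hsub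
    _ ≤ ((1 : NNReal) : ENNReal) ^ (2:ℝ) * μH[2] S2 :=
        hg.lipschitzOnWith.hausdorffMeasure_image_le (by norm_num)
    _ = _ := by simp

lemma measurableSet_S2 : MeasurableSet S2 := isClosed_sphere.measurableSet

lemma isCompact_S2 : IsCompact S2 := isCompact_sphere _ _

instance : IsFiniteMeasure sphVol :=
  ⟨by rw [sphVol, Measure.restrict_apply_univ]; exact haus_S2_le.trans_lt ENNReal.ofReal_lt_top⟩

lemma potential_bound (y : E3) (hy : y ∈ S2) :
    ∫⁻ p, ENNReal.ofReal (‖y - p‖⁻¹) ∂sphVol ≤ ENNReal.ofReal 2048 := by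
  have hpt : ∀ p ∈ S2, ENNReal.ofReal (‖y - p‖⁻¹) ≤
      ∑' n : ℕ, (closedBall y (2 * (1/2:ℝ) ^ n)).indicator
        (fun _ => ENNReal.ofReal (2 ^ n)) p := by
    intro p hp
    have hp1 : ‖p‖ = 1 := by simpa [S2] using hp
    have hy1 : ‖y‖ = 1 := by simpa [S2] using hy
    rcases eq_or_ne y p with rfl | hne
    · simp
    have hpos : 0 < ‖y - p‖ := norm_sub_pos_iff.mpr hne
    have hle : ‖y - p‖ ≤ 2 := by
      have := norm_sub_le y p; linarith
    obtain ⟨n, hn1, hn2⟩ := exists_nat_pow_near_of_lt_one (x := ‖y - p‖ / 2) (y := (1/2:ℝ))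
      (by positivity) (by linarith) (by norm_num) (by norm_num)
    refine le_trans ?_ (ENNReal.le_tsum n)
    rw [indicator_of_mem]
    · apply ENNReal.ofReal_le_ofReal
      rw [pow_succ] at hn1
      have h3 : (1/2:ℝ) ^ n < ‖y - p‖ := by linarith
      rw [inv_le_comm₀ hpos (by positivity), ← inv_pow]
      norm_num at h3 ⊢
      exact h3.le
    · rw [mem_closedBall, dist_comm, dist_eq_norm]; linarith
  calc ∫⁻ p, ENNReal.ofReal (‖y - p‖⁻¹) ∂sphVol
      ≤ ∫⁻ p, ∑' n : ℕ, (closedBall y (2 * (1/2:ℝ) ^ n)).indicator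
        (fun _ => ENNReal.ofReal (2 ^ n)) p ∂sphVol := by
        apply lintegral_mono_ae
        rw [sphVol, ae_restrict_iff' measurableSet_S2]
        exact Eventually.of_forall hpt
    _ = ∑' n : ℕ, ∫⁻ p, (closedBall y (2 * (1/2:ℝ) ^ n)).indicator
        (fun _ => ENNReal.ofReal (2 ^ n)) p ∂sphVol := by
        apply lintegral_tsum
        intro n
        exact (measurable_const.indicator isClosed_closedBall.measurableSet).aemeasurable
    _ ≤ ∑' n : ℕ, ENNReal.ofReal (1024 * (1/2) ^ n) := by
        apply ENNReal.tsum_le_tsum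
        intro n
        rw [lintegral_indicator isClosed_closedBall.measurableSet, setLIntegral_const]
        rw [sphVol, Measure.restrict_apply isClosed_closedBall.measurableSet, inter_comm]
        refine (mul_le_mul_right (haus_cap' y hy _ (by positivity)) _).trans ?_
        rw [← ENNReal.ofReal_mul (by positivity)]
        apply ENNReal.ofReal_le_ofReal
        apply le_of_eq
        have : (2:ℝ) ^ n * (1/2) ^ n = 1 := by rw [← mul_pow]; norm_num
        calc (2:ℝ) ^ n * (256 * (2 * (1/2) ^ n) ^ 2) =
            1024 * ((2:ℝ) ^ n * (1/2) ^ n) * (1/2) ^ n := by ring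
          _ = _ := by rw [this]; ring
    _ = ENNReal.ofReal 2048 := by
        rw [← ENNReal.ofReal_tsum_of_nonneg]
        · rw [tsum_mul_left, tsum_geometric_two]; norm_num
        · intro n; positivity
        · exact summable_geometric_two.mul_left _

/-! ### Energy density and the area of images -/

lemma homExt_contDiffAt {h : E3 → E3} (hh : ContDiff ℝ (⊤ : ℕ∞) h) {y : E3} (hy : y ≠ 0) :
    ContDiffAt ℝ (⊤ : ℕ∞) (homExt h) y := by
  unfold homExt
  apply ContDiffAt.comp (g := h) (f := fun y : E3 => ‖y‖⁻¹ • y)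
  · exact hh.contDiffAt
  · apply ContDiffAt.fun_smul
    · exact (contDiffAt_norm ℝ hy).inv (norm_ne_zero_iff.mpr hy)
    · exact contDiffAt_id

lemma homExt_eq {h : E3 → E3} {y : E3} (hy : y ∈ S2) : homExt h y = h y := by
  have hy1 : ‖y‖ = 1 := by simpa [S2] using hy
  simp [homExt, hy1]

lemma S2_ne_zero {y : E3} (hy : y ∈ S2) : y ≠ 0 := by
  rintro rfl; simp [S2] at hy

lemma homExt_fderiv_continuousOn {h : E3 → E3} (hh : ContDiff ℝ (⊤ : ℕ∞) h) :
    ContinuousOn (fderiv ℝ (homExt h)) {0}ᶜ := by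
  intro y hy
  exact ((homExt_contDiffAt hh hy).continuousAt_fderiv (by simp)).continuousWithinAt

lemma enDensity_continuousOn {h : E3 → E3} (hh : ContDiff ℝ (⊤ : ℕ∞) h) :
    ContinuousOn (enDensity h) {0}ᶜ := by
  unfold enDensity
  apply continuousOn_finsetSum
  intro i _
  exact (((homExt_fderiv_continuousOn hh).clm_apply continuousOn_const).norm).pow 2

lemma S2_sub : S2 ⊆ {0}ᶜ := fun _ hy => S2_ne_zero hy

lemma enDensity_nonneg (h : E3 → E3) (x : E3) : 0 ≤ enDensity h x := by
  unfold enDensity; positivity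

lemma hs_bound (L : E3 →L[ℝ] E3) (v : E3) :
    ‖L v‖ ^ 2 ≤ (∑ i, ‖L (e3 i)‖ ^ 2) * ‖v‖ ^ 2 := by
  have hv : v = ∑ i, v i • e3 i := by
    ext j
    simp only [Fin.sum_univ_three, e3]
    fin_cases j <;> simp
  have h1 : ‖L v‖ ≤ ∑ i, ‖L (e3 i)‖ * ‖v i‖ := by
    conv_lhs => rw [hv, map_sum]
    refine (norm_sum_le _ _).trans (le_of_eq ?_)
    apply Finset.sum_congr rfl
    intro i _
    rw [map_smul, norm_smul, mul_comm]
  calc ‖L v‖ ^ 2 ≤ (∑ i, ‖L (e3 i)‖ * ‖v i‖) ^ 2 := by gcongr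
    _ ≤ (∑ i, ‖L (e3 i)‖ ^ 2) * ∑ i, ‖v i‖ ^ 2 := Finset.sum_mul_sq_le_sq_mul_sq _ _ _
    _ = _ := by rw [EuclideanSpace.norm_sq_eq]

lemma fderiv_norm_le (h : E3 → E3) (x : E3) :
    ‖fderiv ℝ (homExt h) x‖ ≤ √(enDensity h x) := by
  apply ContinuousLinearMap.opNorm_le_bound _ (Real.sqrt_nonneg _)
  intro v
  have := hs_bound (fderiv ℝ (homExt h) x) v
  rw [← Real.sqrt_sq (norm_nonneg v), ← Real.sqrt_mul (enDensity_nonneg h x)]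
  exact Real.le_sqrt_of_sq_le this

lemma area_local {h : E3 → E3} (hh : ContDiff ℝ (⊤ : ℕ∞) h) {δ : ℝ} (hδ : 0 < δ)
    {x : E3} (hx : x ∈ S2) :
    ∃ U : Set E3, IsOpen U ∧ x ∈ U ∧ ∀ A : Set E3, MeasurableSet A → A ⊆ S2 → A ⊆ U →
      (μH[2] : Measure E3) (h '' A) ≤
        ∫⁻ y in A, ENNReal.ofReal ((√(enDensity h y) + δ) ^ 2) ∂μH[2] := by
  set L : E3 → ℝ := fun y => ‖fderiv ℝ (homExt h) y‖ with hL
  have hLc : ContinuousAt L x :=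
    ((homExt_contDiffAt hh (S2_ne_zero hx)).continuousAt_fderiv (by simp)).norm
  have hev : ∀ᶠ y in nhds x, dist (L y) (L x) < δ / 2 :=
    hLc.eventually (Metric.ball_mem_nhds _ (by positivity))
  obtain ⟨r, hr, hball⟩ := Metric.eventually_nhds_iff_ball.mp hev
  have hx1 : ‖x‖ = 1 := by simpa [S2] using hx
  set r' := min r 1 with hr'
  have hr'0 : 0 < r' := lt_min hr one_pos
  refine ⟨ball x r', isOpen_ball, mem_ball_self hr'0, ?_⟩
  intro A hA hAS hAU
  have hc0 : 0 ≤ L x + δ / 2 := by positivity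
  have hlip : LipschitzOnWith (Real.toNNReal (L x + δ / 2)) (homExt h) (ball x r') := by
    apply Convex.lipschitzOnWith_of_nnnorm_fderiv_le (𝕜 := ℝ)
    · intro y hy
      have hy0 : y ≠ 0 := by
        rintro rfl
        rw [mem_ball, dist_zero_left, hx1] at hy
        exact absurd hy (not_lt.mpr (min_le_right _ _))
      exact (homExt_contDiffAt hh hy0).differentiableAt (by simp)
    · intro y hy
      have := hball y (ball_subset_ball (min_le_left _ _) hy)
      rw [Real.dist_eq, abs_lt] at this
      rw [← NNReal.coe_le_coe, Real.coe_toNNReal _ hc0, coe_nnnorm]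
      show L y ≤ _
      linarith
    · exact convex_ball _ _
  have himg : h '' A = homExt h '' A := by
    apply image_congr
    intro y hy; exact (homExt_eq (hAS hy)).symm
  rw [himg]
  refine ((hlip.mono hAU).hausdorffMeasure_image_le (by norm_num : (0:ℝ) ≤ 2)).trans ?_
  rw [← setLIntegral_const]
  apply setLIntegral_mono' hA
  intro y hy
  have h1 : (((L x + δ / 2).toNNReal : NNReal) : ENNReal) ^ (2:ℝ) =
      ENNReal.ofReal ((L x + δ / 2) ^ 2) := by
    rw [ENNReal.ofReal_pow hc0, ← ENNReal.rpow_natCast]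
    norm_num [ENNReal.ofReal]
  rw [h1]
  apply ENNReal.ofReal_le_ofReal
  have h2 := hball y (ball_subset_ball (min_le_left _ _) (hAU hy))
  rw [Real.dist_eq, abs_lt] at h2
  have h3 : L y ≤ _ := fderiv_norm_le h y
  have h4 : L x + δ / 2 ≤ √(enDensity h y) + δ := by linarith
  gcongr

lemma area_delta {h : E3 → E3} (hh : ContDiff ℝ (⊤ : ℕ∞) h) {δ : ℝ} (hδ : 0 < δ)
    {K : Set E3} (hK : MeasurableSet K) (hKS : K ⊆ S2) :
    (μH[2] : Measure E3) (h '' K) ≤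
        ∫⁻ y in K, ENNReal.ofReal ((√(enDensity h y) + δ) ^ 2) ∂μH[2] := by
  classical
  choose! U hUo hxU hU using fun x (hx : x ∈ S2) => area_local hh hδ hx
  obtain ⟨t, ht, htc⟩ := isCompact_S2.elim_nhds_subcover U
    (fun x hx => (hUo x hx).mem_nhds (hxU x hx))
  have key : ∀ s : Finset E3, (∀ x ∈ s, x ∈ S2) → ∀ A : Set E3, MeasurableSet A → A ⊆ S2 →
      A ⊆ ⋃ x ∈ s, U x → (μH[2] : Measure E3) (h '' A) ≤
        ∫⁻ y in A, ENNReal.ofReal ((√(enDensity h y) + δ) ^ 2) ∂μH[2] := by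
    intro s
    induction s using Finset.induction_on with
    | empty =>
      intro _ A _ _ hA
      have : A = ∅ := by simpa using hA
      simp [this]
    | insert a s ha ih =>
      intro hs A hA hAS hAU
      have haS : a ∈ S2 := hs a (Finset.mem_insert_self _ _)
      have hUm : MeasurableSet (U a) := (hUo a haS).measurableSet
      have h1 := hU a haS (A ∩ U a) (hA.inter hUm) (inter_subset_left.trans hAS) inter_subset_right
      have h2 := ih (fun x hx => hs x (Finset.mem_insert_of_mem hx)) (A \ U a) (hA.diff hUm)
        (sdiff_subset.trans hAS) (by
          rintro y ⟨hy, hyU⟩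
          have := hAU hy
          rw [Finset.set_biUnion_insert] at this
          exact this.resolve_left hyU)
      rw [← lintegral_inter_add_sdiff _ A hUm]
      calc (μH[2] : Measure E3) (h '' A) = μH[2] (h '' (A ∩ U a) ∪ h '' (A \ U a)) := by
            rw [← image_union, inter_union_sdiff]
        _ ≤ _ := measure_union_le _ _
        _ ≤ _ := add_le_add h1 h2
  exact key t ht K hK hKS (hKS.trans htc)

lemma area_bound {h : E3 → E3} (hh : ContDiff ℝ (⊤ : ℕ∞) h)
    {K : Set E3} (hK : MeasurableSet K) (hKS : K ⊆ S2) :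
    (μH[2] : Measure E3) (h '' K) ≤ ∫⁻ y in K, ENNReal.ofReal (enDensity h y) ∂μH[2] := by
  obtain ⟨M, hM⟩ := isCompact_S2.bddAbove_image ((enDensity_continuousOn hh).mono S2_sub)
  set M' := √M with hM'
  have hle : ∀ y ∈ S2, √(enDensity h y) ≤ M' := fun y hy =>
    Real.sqrt_le_sqrt (hM (mem_image_of_mem _ hy))
  have step : ∀ δ : ℝ, 0 < δ → (μH[2] : Measure E3) (h '' K) ≤
      (∫⁻ y in K, ENNReal.ofReal (enDensity h y) ∂μH[2]) +
        ENNReal.ofReal ((2 * M' * δ + δ ^ 2) * 256) := by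
    intro δ hδ
    refine (area_delta hh hδ hK hKS).trans ?_
    have hc : 0 ≤ 2 * M' * δ + δ ^ 2 := by positivity
    calc _ ≤ ∫⁻ y in K, (ENNReal.ofReal (enDensity h y) +
            ENNReal.ofReal (2 * M' * δ + δ ^ 2)) ∂μH[2] := by
          apply setLIntegral_mono' hK
          intro y hy
          rw [← ENNReal.ofReal_add (enDensity_nonneg _ _) hc]
          apply ENNReal.ofReal_le_ofReal
          have h1 := hle y (hKS hy)
          have h2 := Real.sq_sqrt (enDensity_nonneg h y)
          nlinarith
      _ = (∫⁻ y in K, ENNReal.ofReal (enDensity h y) ∂μH[2]) +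
            ENNReal.ofReal (2 * M' * δ + δ ^ 2) * μH[2] K := by
          rw [lintegral_add_right _ measurable_const, setLIntegral_const]
      _ ≤ _ := by
          rw [ENNReal.ofReal_mul hc]
          gcongr
          exact (measure_mono hKS).trans haus_S2_le
  have hlim : Tendsto (fun δ : ℝ => (∫⁻ y in K, ENNReal.ofReal (enDensity h y) ∂μH[2]) +
        ENNReal.ofReal ((2 * M' * δ + δ ^ 2) * 256)) (nhdsWithin 0 (Ioi 0))
        (nhds ((∫⁻ y in K, ENNReal.ofReal (enDensity h y) ∂μH[2]) + 0)) := by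
    apply Tendsto.const_add
    have hc : Continuous fun δ : ℝ => ENNReal.ofReal ((2 * M' * δ + δ ^ 2) * 256) := by
      apply ENNReal.continuous_ofReal.comp; fun_prop
    have := (hc.tendsto 0).mono_left (nhdsWithin_le_nhds (s := Ioi 0))
    simpa using this
  rw [add_zero] at hlim
  exact ge_of_tendsto hlim (by
    filter_upwards [self_mem_nhdsWithin] with δ hδ using step δ hδ)

lemma energy_lintegral {h : E3 → E3} (hh : ContDiff ℝ (⊤ : ℕ∞) h)
    {Ω : Set E3} (hΩ : MeasurableSet Ω) (hΩS : Ω ⊆ S2) {ε : ℝ} (hE : energyOn h Ω ≤ ε) :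
    ∫⁻ y in Ω, ENNReal.ofReal (enDensity h y) ∂μH[2] ≤ ENNReal.ofReal (2 * ε) := by
  obtain ⟨M, hM⟩ := isCompact_S2.bddAbove_image ((enDensity_continuousOn hh).mono S2_sub)
  have hr : sphVol.restrict Ω = (μH[2] : Measure E3).restrict Ω := by
    rw [sphVol, Measure.restrict_restrict hΩ, inter_eq_self_of_subset_left hΩS]
  have hIntg : Integrable (enDensity h) (sphVol.restrict Ω) := by
    have hm : AEStronglyMeasurable (enDensity h) sphVol :=
      ((enDensity_continuousOn hh).mono S2_sub).aestronglyMeasurable measurableSet_S2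
    have hi : Integrable (enDensity h) sphVol := by
      apply Integrable.of_bound hm M
      rw [sphVol, ae_restrict_iff' measurableSet_S2]
      refine Eventually.of_forall fun y hy => ?_
      rw [Real.norm_of_nonneg (enDensity_nonneg h y)]
      exact hM (mem_image_of_mem _ hy)
    exact hi.restrict
  rw [← hr, ← ofReal_integral_eq_lintegral_ofReal hIntg
    (Eventually.of_forall fun y => enDensity_nonneg h y)]
  apply ENNReal.ofReal_le_ofReal
  unfold energyOn at hE
  linarith

/-! ### Directional derivatives on the plane -/

/-- directional derivative -/
def pd {F : Type*} [NormedAddCommGroup F] [NormedSpace ℝ F] (v : ℂ) (f : ℂ → F) : ℂ → F :=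
  fun w => fderiv ℝ f w v

section pdlib
variable {F : Type*} [NormedAddCommGroup F] [NormedSpace ℝ F]

lemma pd_contDiffAt {f : ℂ → F} {w : ℂ} (hf : ContDiffAt ℝ (⊤ : ℕ∞) f w) (v : ℂ) :
    ContDiffAt ℝ (⊤ : ℕ∞) (pd v f) w := by
  unfold pd
  exact (hf.fderiv_right (m := (⊤ : ℕ∞)) (by simp)).clm_apply contDiffAt_const

lemma cda_diff {f : ℂ → F} {w : ℂ} (hf : ContDiffAt ℝ (⊤ : ℕ∞) f w) : DifferentiableAt ℝ f w :=
  hf.differentiableAt (by simp)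

lemma pd_pd {f : ℂ → F} {w : ℂ} (hf : ContDiffAt ℝ (⊤ : ℕ∞) f w) (v v' : ℂ) :
    pd v (pd v' f) w = fderiv ℝ (fderiv ℝ f) w v v' := by
  have h1 : DifferentiableAt ℝ (fderiv ℝ f) w :=
    (hf.fderiv_right (m := (⊤ : ℕ∞)) (by simp)).differentiableAt (by simp)
  unfold pd
  rw [fderiv_clm_apply h1 (differentiableAt_const _)]
  simp

lemma pd_comm {f : ℂ → F} {w : ℂ} (hf : ContDiffAt ℝ (⊤ : ℕ∞) f w) (v v' : ℂ) :
    pd v (pd v' f) w = pd v' (pd v f) w := by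
  rw [pd_pd hf, pd_pd hf]
  exact (hf.isSymmSndFDerivAt (by
    rw [minSmoothness_of_isRCLikeNormedField]
    exact WithTop.coe_le_coe.mpr (le_top : (2 : ℕ∞) ≤ ⊤))) v v'

lemma pd_inner {f g : ℂ → E3} {w : ℂ} (hf : DifferentiableAt ℝ f w) (hg : DifferentiableAt ℝ g w)
    (v : ℂ) : pd v (fun w => ⟪f w, g w⟫) w = ⟪pd v f w, g w⟫ + ⟪f w, pd v g w⟫ := by
  unfold pd
  rw [fderiv_inner_apply ℝ hf hg]; ring

lemma pd_congr {f g : ℂ → F} {w : ℂ} (h : f =ᶠ[nhds w] g) (v : ℂ) : pd v f w = pd v g w := by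
  unfold pd; rw [h.fderiv_eq]

lemma pd_const (c : F) (v w : ℂ) : pd v (fun _ => c) w = 0 := by simp [pd]

end pdlib

/-! ### Change of orthonormal basis -/

lemma trace_basis {F : Type*} [AddCommGroup F] [Module ℝ F] (Q : E3 →ₗ[ℝ] E3 →ₗ[ℝ] F)
    (b b' : OrthonormalBasis (Fin 3) ℝ E3) : ∑ i, Q (b i) (b i) = ∑ j, Q (b' j) (b' j) := by
  have h1 : ∀ i, Q (b i) (b i) =
      ∑ j, ∑ k, (⟪b' j, b i⟫ * ⟪b i, b' k⟫) • Q (b' j) (b' k) := by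
    intro i
    conv_lhs => rw [← b'.sum_repr' (b i)]
    simp only [map_sum, LinearMap.sum_apply, map_smul, LinearMap.smul_apply, Finset.smul_sum,
      smul_smul]
    rw [Finset.sum_comm]
    refine Finset.sum_congr rfl fun j _ => Finset.sum_congr rfl fun k _ => ?_
    rw [real_inner_comm (b' k), mul_comm]
  simp only [h1]
  rw [Finset.sum_comm]
  refine Finset.sum_congr rfl fun j _ => ?_
  rw [Finset.sum_comm]
  simp only [← Finset.sum_smul, b.sum_inner_mul_inner, frame_inner]
  simp

lemma exists_basis_of_orth {a b c : E3} {l : ℝ} (hl : 0 < l) (ha : ‖a‖ = l) (hb : ‖b‖ = l)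
    (hc : ‖c‖ = 1) (hab : ⟪a, b⟫ = (0:ℝ)) (hac : ⟪a, c⟫ = (0:ℝ)) (hbc : ⟪b, c⟫ = (0:ℝ)) :
    ∃ B : OrthonormalBasis (Fin 3) ℝ E3, B 0 = l⁻¹ • a ∧ B 1 = l⁻¹ • b ∧ B 2 = c := by
  have ho : Orthonormal ℝ ((univ : Set (Fin 3)).domRestrict ![l⁻¹ • a, l⁻¹ • b, c]) := by
    rw [orthonormal_iff_ite]
    have haa : ⟪a, a⟫ = l ^ 2 := by rw [real_inner_self_eq_norm_sq, ha]
    have hbb : ⟪b, b⟫ = l ^ 2 := by rw [real_inner_self_eq_norm_sq, hb]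
    have hcc : ⟪c, c⟫ = (1:ℝ) := by rw [real_inner_self_eq_norm_sq, hc]; norm_num
    have hba : ⟪b, a⟫ = (0:ℝ) := by rw [real_inner_comm]; exact hab
    have hca : ⟪c, a⟫ = (0:ℝ) := by rw [real_inner_comm]; exact hac
    have hcb : ⟪c, b⟫ = (0:ℝ) := by rw [real_inner_comm]; exact hbc
    rintro ⟨i, hi⟩ ⟨j, hj⟩
    fin_cases i <;> fin_cases j <;>
      simp [Set.domRestrict, real_inner_smul_left, real_inner_smul_right, haa, hbb, hcc, hab, hac,
        hbc, hba, hca, hcb, -inner_self_eq_norm_sq_to_K] <;> field_simp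
  obtain ⟨B, hB⟩ := ho.exists_orthonormalBasis_extension_of_card_eq (by simp)
  exact ⟨B, by simpa using hB 0 (by simp), by simpa using hB 1 (by simp),
    by simpa using hB 2 (by simp)⟩

lemma trace_conf {F : Type*} [AddCommGroup F] [Module ℝ F] (Q : E3 →ₗ[ℝ] E3 →ₗ[ℝ] F)
    {a b c : E3} {l : ℝ} (hl : 0 < l) (ha : ‖a‖ = l) (hb : ‖b‖ = l)
    (hc : ‖c‖ = 1) (hab : ⟪a, b⟫ = (0:ℝ)) (hac : ⟪a, c⟫ = (0:ℝ)) (hbc : ⟪b, c⟫ = (0:ℝ)) :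
    (l ^ 2) • ∑ i, Q (e3 i) (e3 i) = Q a a + Q b b + (l ^ 2) • Q c c := by
  obtain ⟨B, h0, h1, h2⟩ := exists_basis_of_orth hl ha hb hc hab hac hbc
  have he : ∀ i, e3 i = EuclideanSpace.basisFun (Fin 3) ℝ i := by intro i; simp [e3]
  simp only [he]
  rw [trace_basis Q _ B, Fin.sum_univ_three, h0, h1, h2]
  simp only [map_smul, LinearMap.smul_apply, smul_add, smul_smul]
  have : l ^ 2 * (l⁻¹ * l⁻¹) = 1 := by field_simp
  simp [this]

/-! ### The map in stereographic coordinates -/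

lemma homExt_radial {h : E3 → E3} (hh : ContDiff ℝ (⊤ : ℕ∞) h) {y : E3} (hy : y ≠ 0) :
    fderiv ℝ (homExt h) y y = 0 := by
  have hd := ((homExt_contDiffAt hh hy).differentiableAt (by simp)).hasFDerivAt
  have h1 : HasDerivAt (fun t : ℝ => t • y) y 1 := by
    simpa using (hasDerivAt_id (1:ℝ)).smul_const y
  have hd' : HasFDerivAt (homExt h) (fderiv ℝ (homExt h) y) ((1:ℝ) • y) := by simpa using hd
  have h2 := hd'.comp_hasDerivAt (1:ℝ) h1
  have h3 : (homExt h ∘ fun t : ℝ => t • y) =ᶠ[nhds 1] fun _ => homExt h y := by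
    filter_upwards [lt_mem_nhds (zero_lt_one (α := ℝ))] with t ht
    simp only [Function.comp, homExt, norm_smul, smul_smul, Real.norm_of_nonneg ht.le]
    congr 2
    field_simp
  have h4 : HasDerivAt (homExt h ∘ fun t : ℝ => t • y) 0 1 :=
    (hasDerivAt_const (1:ℝ) (homExt h y)).congr_of_eventuallyEq h3
  exact h2.unique h4

lemma homExt_radial2 {h : E3 → E3} (hh : ContDiff ℝ (⊤ : ℕ∞) h) {y : E3} (hy : y ≠ 0) :
    fderiv ℝ (fderiv ℝ (homExt h)) y y y = 0 := by
  have h1 : DifferentiableAt ℝ (fderiv ℝ (homExt h)) y :=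
    ((homExt_contDiffAt hh hy).fderiv_right (m := (⊤ : ℕ∞)) (by simp)).differentiableAt (by simp)
  have h2 : (fun y => fderiv ℝ (homExt h) y y) =ᶠ[nhds y] fun _ => 0 := by
    filter_upwards [isOpen_ne.mem_nhds hy] with z hz using homExt_radial hh hz
  have h3 := h2.fderiv_eq (𝕜 := ℝ)
  rw [fderiv_clm_apply h1 (show DifferentiableAt ℝ (fun y : E3 => y) y from differentiableAt_id)] at h3
  have h4 := congrArg (fun L : E3 →L[ℝ] E3 => L y) h3
  simpa [homExt_radial hh hy] using h4

lemma cda_psi (B : OrthonormalBasis (Fin 3) ℝ E3) (w : ℂ) : ContDiffAt ℝ (⊤ : ℕ∞) (psi B) w :=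
  (psi_contDiff B).contDiffAt

lemma psi_pd_orth (B : OrthonormalBasis (Fin 3) ℝ E3) (w v : ℂ) : ⟪pd v (psi B) w, psi B w⟫ = (0:ℝ) := by
  have h1 := pd_inner (cda_diff (cda_psi B w)) (cda_diff (cda_psi B w)) v
  have h2 : (fun w => ⟪psi B w, psi B w⟫) = fun _ => (1:ℝ) := by
    ext w; rw [real_inner_self_eq_norm_sq, norm_psi]; norm_num
  rw [h2, pd_const, real_inner_comm (pd v (psi B) w)] at h1
  linarith

/-- the Laplacian of `psi` is radial -/
lemma psi_lap (B : OrthonormalBasis (Fin 3) ℝ E3) (w : ℂ) :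
    ∃ c : ℝ, pd 1 (pd 1 (psi B)) w + pd Complex.I (pd Complex.I (psi B)) w = c • psi B w := by
  set p1 := pd 1 (psi B) with hp1
  set p2 := pd Complex.I (psi B) with hp2
  have d1 : DifferentiableAt ℝ p1 w := cda_diff (pd_contDiffAt (cda_psi B w) 1)
  have d2 : DifferentiableAt ℝ p2 w := cda_diff (pd_contDiffAt (cda_psi B w) Complex.I)
  have n1 : ∀ w, ‖p1 w‖ = lam w := fun w => by simpa [hp1, pd] using psi_conf B w 1
  have n2 : ∀ w, ‖p2 w‖ = lam w := fun w => by simpa [hp2, pd] using psi_conf B w Complex.I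
  have o12 : ∀ w, ⟪p1 w, p2 w⟫ = (0:ℝ) := fun w => psi_conf_inner B w
  have hA : (fun w => ⟪p1 w, p1 w⟫) = fun w => ⟪p2 w, p2 w⟫ := by
    ext w; rw [real_inner_self_eq_norm_sq, real_inner_self_eq_norm_sq, n1, n2]
  have hB : (fun w => ⟪p1 w, p2 w⟫) = fun _ => (0:ℝ) := by ext w; exact o12 w
  have A : ∀ v, ⟪pd v p1 w, p1 w⟫ = ⟪pd v p2 w, p2 w⟫ := by
    intro v
    have e1 := pd_inner d1 d1 v
    have e2 := pd_inner d2 d2 v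
    rw [hA, e2, real_inner_comm (pd v p2 w), real_inner_comm (pd v p1 w)] at e1
    linarith
  have Bq : ∀ v, ⟪pd v p1 w, p2 w⟫ + ⟪p1 w, pd v p2 w⟫ = 0 := by
    intro v
    rw [← pd_inner d1 d2 v, hB, pd_const]
  have hs : pd 1 p2 w = pd Complex.I p1 w := pd_comm (cda_psi B w) _ _
  obtain ⟨O, O0, O1, O2⟩ := exists_basis_of_orth (lam_pos w) (n1 w) (n2 w) (norm_psi B w) (o12 w)
    (psi_pd_orth B w 1) (psi_pd_orth B w Complex.I)
  refine ⟨⟪O 2, pd 1 p1 w + pd Complex.I p2 w⟫, ?_⟩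
  have hex := frame_expand O (pd 1 p1 w + pd Complex.I p2 w)
  have z0 : ⟪O 0, pd 1 p1 w + pd Complex.I p2 w⟫ = (0:ℝ) := by
    rw [O0, real_inner_smul_left, inner_add_right, real_inner_comm, A 1, hs]
    have := Bq Complex.I
    rw [this, mul_zero]
  have z1 : ⟪O 1, pd 1 p1 w + pd Complex.I p2 w⟫ = (0:ℝ) := by
    rw [O1, real_inner_smul_left, inner_add_right, real_inner_comm (pd Complex.I p2 w),
      ← A Complex.I, ← hs, real_inner_comm]
    have := Bq 1
    rw [real_inner_comm (pd 1 p2 w)] at this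
    rw [this, mul_zero]
  rw [z0, z1, zero_smul, zero_smul, zero_add, zero_add] at hex
  rw [hex]
  congr 1
  · rw [← hex]

/-! ### The harmonic map equation in stereographic coordinates -/

/-- the map in stereographic coordinates -/
def um (h : E3 → E3) (B : OrthonormalBasis (Fin 3) ℝ E3) : ℂ → E3 := fun w => homExt h (psi B w)

section um
variable {h : E3 → E3} (B : OrthonormalBasis (Fin 3) ℝ E3)

lemma psi_ne (w : ℂ) : psi B w ≠ 0 := S2_ne_zero (psi_mem B w)

lemma um_contDiffAt (hh : ContDiff ℝ (⊤ : ℕ∞) h) (w : ℂ) :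
    ContDiffAt ℝ (⊤ : ℕ∞) (um h B) w :=
  ContDiffAt.comp w (homExt_contDiffAt hh (psi_ne B w)) (cda_psi B w)

lemma um_eq (w : ℂ) : um h B w = h (psi B w) := homExt_eq (psi_mem B w)

lemma norm_um (hs : ∀ x ∈ S2, h x ∈ S2) (w : ℂ) : ‖um h B w‖ = 1 := by
  rw [um_eq]; simpa [S2] using hs _ (psi_mem B w)

lemma um_pd (hh : ContDiff ℝ (⊤ : ℕ∞) h) (v w : ℂ) :
    pd v (um h B) w = fderiv ℝ (homExt h) (psi B w) (pd v (psi B) w) := by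
  unfold pd um
  have := fderiv_comp w ((homExt_contDiffAt hh (psi_ne B w)).differentiableAt (by simp))
    (cda_diff (cda_psi B w))
  simp only [Function.comp_def] at this
  rw [this]; rfl

lemma um_pd2 (hh : ContDiff ℝ (⊤ : ℕ∞) h) (v w : ℂ) :
    pd v (pd v (um h B)) w =
      fderiv ℝ (fderiv ℝ (homExt h)) (psi B w) (pd v (psi B) w) (pd v (psi B) w)
        + fderiv ℝ (homExt h) (psi B w) (pd v (pd v (psi B)) w) := by
  have e : pd v (um h B) = fun w => fderiv ℝ (homExt h) (psi B w) (pd v (psi B) w) :=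
    funext fun w => um_pd B hh v w
  have h1 : DifferentiableAt ℝ (fderiv ℝ (homExt h)) (psi B w) :=
    ((homExt_contDiffAt hh (psi_ne B w)).fderiv_right (m := (⊤ : ℕ∞)) (by simp)).differentiableAt
      (by simp)
  have h2 := fderiv_comp w h1 (cda_diff (cda_psi B w))
  have h3 : DifferentiableAt ℝ (fun w => fderiv ℝ (homExt h) (psi B w)) w :=
    h1.comp w (cda_diff (cda_psi B w))
  have h4 : DifferentiableAt ℝ (pd v (psi B)) w := cda_diff (pd_contDiffAt (cda_psi B w) v)
  rw [e]
  change fderiv ℝ (fun w => fderiv ℝ (homExt h) (psi B w) (pd v (psi B) w)) w v = _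
  rw [fderiv_clm_apply h3 h4]
  simp only [Function.comp_def] at h2
  rw [h2]
  simp [pd, add_comm]

lemma pd_psi_norm1 (w : ℂ) : ‖pd 1 (psi B) w‖ = lam w := by simpa [pd] using psi_conf B w 1
lemma pd_psi_normI (w : ℂ) : ‖pd Complex.I (psi B) w‖ = lam w := by
  simpa [pd] using psi_conf B w Complex.I

lemma um_lap (hH : IsHarmonicSphereMap h) (w : ℂ) :
    pd 1 (pd 1 (um h B)) w + pd Complex.I (pd Complex.I (um h B)) w =
      -(lam w ^ 2 * enDensity h (psi B w)) • um h B w := by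
  have hh := hH.1.1
  rw [um_pd2 B hh, um_pd2 B hh]
  obtain ⟨c, hc⟩ := psi_lap B w
  have h0 := homExt_radial hh (psi_ne B w)
  have h00 := homExt_radial2 hh (psi_ne B w)
  have hD : fderiv ℝ (homExt h) (psi B w) (pd 1 (pd 1 (psi B)) w) +
      fderiv ℝ (homExt h) (psi B w) (pd Complex.I (pd Complex.I (psi B)) w) = 0 := by
    rw [← map_add, hc, map_smul, h0, smul_zero]
  let Q : E3 →ₗ[ℝ] E3 →ₗ[ℝ] E3 :=
    (ContinuousLinearMap.coeLM ℝ).comp (fderiv ℝ (fderiv ℝ (homExt h)) (psi B w)).toLinearMap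
  have hQ : ∀ a b, Q a b = fderiv ℝ (fderiv ℝ (homExt h)) (psi B w) a b := fun a b => rfl
  have ht := trace_conf Q (lam_pos w) (pd_psi_norm1 B w) (pd_psi_normI B w) (norm_psi B w)
    (psi_conf_inner B w) (psi_pd_orth B w 1) (psi_pd_orth B w Complex.I)
  simp only [hQ, h00, smul_zero, add_zero] at ht
  have hl : sphLap h (psi B w) =
      ∑ i, fderiv ℝ (fderiv ℝ (homExt h)) (psi B w) (e3 i) (e3 i) := by
    unfold sphLap
    refine Finset.sum_congr rfl fun i _ => ?_
    have h1 : DifferentiableAt ℝ (fderiv ℝ (homExt h)) (psi B w) :=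
      ((homExt_contDiffAt hh (psi_ne B w)).fderiv_right (m := (⊤ : ℕ∞)) (by simp)).differentiableAt
        (by simp)
    rw [fderiv_clm_apply h1 (differentiableAt_const _)]
    simp
  have ht2 := hH.2 _ (psi_mem B w)
  unfold tension at ht2
  rw [← hl, eq_neg_of_add_eq_zero_left ht2, ← um_eq (h := h)] at ht
  rw [show ∀ a b c d : E3, (a + b) + (c + d) = (a + c) + (b + d) from fun a b c d => by abel, hD,
    add_zero, ← ht, smul_neg, smul_smul, neg_smul]

lemma um_en (hh : ContDiff ℝ (⊤ : ℕ∞) h) (w : ℂ) :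
    ‖pd 1 (um h B) w‖ ^ 2 + ‖pd Complex.I (um h B) w‖ ^ 2 =
      lam w ^ 2 * enDensity h (psi B w) := by
  rw [um_pd B hh, um_pd B hh]
  have h0 := homExt_radial hh (psi_ne B w)
  set L := fderiv ℝ (homExt h) (psi B w)
  let Q : E3 →ₗ[ℝ] E3 →ₗ[ℝ] ℝ := (innerₗ E3).compl₁₂ L.toLinearMap L.toLinearMap
  have hQ : ∀ a b, Q a b = ⟪L a, L b⟫ := fun a b => rfl
  have ht := trace_conf Q (lam_pos w) (pd_psi_norm1 B w) (pd_psi_normI B w) (norm_psi B w)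
    (psi_conf_inner B w) (psi_pd_orth B w 1) (psi_pd_orth B w Complex.I)
  simp only [hQ, h0, inner_zero_left, smul_zero, add_zero, real_inner_self_eq_norm_sq] at ht
  rw [← ht]; rfl

lemma um_pd_orth (hH : IsHarmonicSphereMap h) (w v : ℂ) :
    ⟪um h B w, pd v (um h B) w⟫ = (0:ℝ) := by
  have hd := cda_diff (um_contDiffAt B hH.1.1 w)
  have h1 := pd_inner hd hd v
  have h2 : (fun w => ⟪um h B w, um h B w⟫) = fun _ => (1:ℝ) := by
    ext w; rw [real_inner_self_eq_norm_sq, norm_um B hH.1.2]; norm_num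
  rw [h2, pd_const, real_inner_comm (um h B w)] at h1
  linarith

/-! ### The Hopf differential vanishes -/

/-- Hopf differential -/
def hopf (h : E3 → E3) (B : OrthonormalBasis (Fin 3) ℝ E3) (w : ℂ) : ℂ :=
  ((⟪pd 1 (um h B) w, pd 1 (um h B) w⟫ - ⟪pd Complex.I (um h B) w, pd Complex.I (um h B) w⟫ : ℝ) : ℂ)
    - 2 * ((⟪pd 1 (um h B) w, pd Complex.I (um h B) w⟫ : ℝ) : ℂ) * Complex.I

lemma pd_ofReal {a : ℂ → ℝ} {w : ℂ} (ha : DifferentiableAt ℝ a w) (v : ℂ) :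
    pd v (fun w => (a w : ℂ)) w = ((pd v a w : ℝ) : ℂ) := by
  have := (Complex.ofRealCLM.hasFDerivAt (x := a w)).comp w ha.hasFDerivAt
  unfold pd
  have h2 : (fun w => (a w : ℂ)) = Complex.ofRealCLM ∘ a := rfl
  rw [h2, this.fderiv]; rfl

lemma diff_ofReal {a : ℂ → ℝ} {w : ℂ} (ha : DifferentiableAt ℝ a w) :
    DifferentiableAt ℝ (fun w => (a w : ℂ)) w :=
  (Complex.ofRealCLM.differentiableAt (x := a w)).comp w ha

lemma hopf_differentiable (hH : IsHarmonicSphereMap h) : Differentiable ℂ (hopf h B) := by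
  intro w
  have hu := um_contDiffAt B hH.1.1 w
  set u := um h B with hu0
  have d1 : DifferentiableAt ℝ (pd 1 u) w := cda_diff (pd_contDiffAt hu 1)
  have d2 : DifferentiableAt ℝ (pd Complex.I u) w := cda_diff (pd_contDiffAt hu Complex.I)
  have dA : DifferentiableAt ℝ (fun w => ⟪pd 1 u w, pd 1 u w⟫ - ⟪pd Complex.I u w, pd Complex.I u w⟫) w :=
    (d1.inner ℝ d1).sub (d2.inner ℝ d2)
  have dB : DifferentiableAt ℝ (fun w => ⟪pd 1 u w, pd Complex.I u w⟫) w := d1.inner ℝ d2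
  have dA' := diff_ofReal dA
  have dB' := diff_ofReal dB
  have pA : ∀ v, pd v (fun w => ⟪pd 1 u w, pd 1 u w⟫ - ⟪pd Complex.I u w, pd Complex.I u w⟫) w
      = 2 * ⟪pd v (pd 1 u) w, pd 1 u w⟫ - 2 * ⟪pd v (pd Complex.I u) w, pd Complex.I u w⟫ := by
    intro v
    have := fderiv_fun_sub (d1.inner ℝ d1) (d2.inner ℝ d2)
    have e1 := pd_inner d1 d1 v
    have e2 := pd_inner d2 d2 v
    unfold pd at e1 e2 this ⊢
    rw [this, sub_apply, e1, e2,
      real_inner_comm (fderiv ℝ (fun w => fderiv ℝ u w 1) w v),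
      real_inner_comm (fderiv ℝ (fun w => fderiv ℝ u w Complex.I) w v)]
    ring
  have pB : ∀ v, pd v (fun w => ⟪pd 1 u w, pd Complex.I u w⟫) w
      = ⟪pd v (pd 1 u) w, pd Complex.I u w⟫ + ⟪pd v (pd Complex.I u) w, pd 1 u w⟫ := by
    intro v
    rw [pd_inner d1 d2, real_inner_comm (pd v (pd Complex.I u) w)]
  have pH : ∀ v, fderiv ℝ (hopf h B) w v = 
     ((2 * ⟪pd v (pd 1 u) w, pd 1 u w⟫ - 2 * ⟪pd v (pd Complex.I u) w, pd Complex.I u w⟫ : ℝ) : ℂ)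
      - 2 * ((⟪pd v (pd 1 u) w, pd Complex.I u w⟫ + ⟪pd v (pd Complex.I u) w, pd 1 u w⟫ : ℝ) : ℂ)
        * Complex.I := by
    intro v
    have : hopf h B = fun w => ((⟪pd 1 u w, pd 1 u w⟫ - ⟪pd Complex.I u w, pd Complex.I u w⟫ : ℝ) : ℂ)
      - 2 * ((⟪pd 1 u w, pd Complex.I u w⟫ : ℝ) : ℂ) * Complex.I := rfl
    rw [this, fderiv_fun_sub dA' ((dB'.const_mul 2).mul_const _), fderiv_mul_const (dB'.const_mul 2),
      fderiv_const_mul dB', ← pA, ← pB, ← pd_ofReal dA, ← pd_ofReal dB]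
    simp only [pd, sub_apply, smul_apply, smul_eq_mul]
    ring
  rw [differentiableAt_complex_iff_differentiableAt_real]
  refine ⟨dA'.sub ((dB'.const_mul 2).mul_const _), ?_⟩
  rw [pH, pH, smul_eq_mul]
  have hl := um_lap B hH w
  rw [← hu0] at hl
  have hs : pd 1 (pd Complex.I u) w = pd Complex.I (pd 1 u) w := pd_comm hu _ _
  have o1 : ⟪pd 1 (pd 1 u) w, pd 1 u w⟫ + ⟪pd Complex.I (pd Complex.I u) w, pd 1 u w⟫ = 0 := by
    rw [← inner_add_left, hl, real_inner_smul_left, um_pd_orth B hH, mul_zero]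
  have o2 : ⟪pd 1 (pd 1 u) w, pd Complex.I u w⟫ + ⟪pd Complex.I (pd Complex.I u) w, pd Complex.I u w⟫ = 0 := by
    rw [← inner_add_left, hl, real_inner_smul_left, um_pd_orth B hH, mul_zero]
  rw [hs]
  apply Complex.ext
  · simp; linarith
  · simp; linarith

lemma en_bounded (hh : ContDiff ℝ (⊤ : ℕ∞) h) : ∃ M, 0 ≤ M ∧ ∀ y ∈ S2, enDensity h y ≤ M := by
  obtain ⟨M, hM⟩ := isCompact_S2.exists_bound_of_continuousOn
    ((enDensity_continuousOn hh).mono S2_sub)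
  exact ⟨max M 0, le_max_right _ _, fun y hy =>
    (le_trans (le_abs_self _) (hM y hy)).trans (le_max_left _ _)⟩

lemma lam_le (w : ℂ) : lam w ≤ 2 := by
  unfold lam
  rw [div_le_iff₀ (one_add_normSq_pos w)]
  nlinarith [Complex.normSq_nonneg w]

lemma lam_tendsto : Tendsto lam (cocompact ℂ) (nhds 0) := by
  have h1 : Tendsto (fun w : ℂ => 1 + Complex.normSq w) (cocompact ℂ) atTop := by
    apply tendsto_atTop_add_const_left
    have := (tendsto_norm_cocompact_atTop (E := ℂ))
    have h2 := (tendsto_pow_atTop (α := ℝ) (n := 2) (by norm_num)).comp this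
    refine h2.congr fun w => ?_
    simp [Complex.normSq_eq_norm_sq]
  exact h1.const_div_atTop 2

lemma hopf_zero (hH : IsHarmonicSphereMap h) (w : ℂ) : hopf h B w = 0 := by
  obtain ⟨M, hM0, hM⟩ := en_bounded hH.1.1
  apply (hopf_differentiable B hH).apply_eq_of_tendsto_cocompact
  have hb : ∀ w, ‖hopf h B w‖ ≤ 4 * M * lam w := by
    intro w
    have he := um_en B hH.1.1 w
    have hi := abs_real_inner_le_norm (pd 1 (um h B) w) (pd Complex.I (um h B) w)
    have : ‖hopf h B w‖ ≤ 2 * (lam w ^ 2 * enDensity h (psi B w)) := by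
      unfold hopf
      refine (norm_sub_le _ _).trans ?_
      rw [norm_mul, norm_mul, Complex.norm_I, Complex.norm_real, Complex.norm_real,
        real_inner_self_eq_norm_sq, real_inner_self_eq_norm_sq, ← he, Real.norm_eq_abs,
        Real.norm_eq_abs]
      have : |‖pd 1 (um h B) w‖ ^ 2 - ‖pd Complex.I (um h B) w‖ ^ 2| ≤
          ‖pd 1 (um h B) w‖ ^ 2 + ‖pd Complex.I (um h B) w‖ ^ 2 := by
        rw [abs_le]; constructor <;> nlinarith [sq_nonneg ‖pd 1 (um h B) w‖, sq_nonneg ‖pd Complex.I (um h B) w‖]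
      have h2 : ‖(2:ℂ)‖ = 2 := by norm_num
      rw [h2]
      nlinarith [sq_nonneg (‖pd 1 (um h B) w‖ - ‖pd Complex.I (um h B) w‖)]
    refine this.trans ?_
    have h1 := hM _ (psi_mem B w)
    have h2 := lam_le w
    have h3 := lam_pos w
    have h4 : lam w ^ 2 ≤ 2 * lam w := by nlinarith
    have h5 : lam w ^ 2 * enDensity h (psi B w) ≤ 2 * lam w * M :=
      mul_le_mul h4 h1 (enDensity_nonneg _ _) (by positivity)
    linarith
  refine squeeze_zero_norm hb ?_
  simpa using lam_tendsto.const_mul (4 * M)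

lemma um_conf (hH : IsHarmonicSphereMap h) (w : ℂ) :
    ‖pd Complex.I (um h B) w‖ = ‖pd 1 (um h B) w‖ ∧
      ⟪pd 1 (um h B) w, pd Complex.I (um h B) w⟫ = (0:ℝ) := by
  have h0 := hopf_zero B hH w
  have h1 := congrArg Complex.re h0
  have h2 := congrArg Complex.im h0
  simp only [hopf] at h1 h2
  simp [-inner_self_eq_norm_sq_to_K] at h1 h2
  rw [real_inner_self_eq_norm_sq, real_inner_self_eq_norm_sq] at h1
  refine ⟨?_, h2⟩
  have : ‖pd Complex.I (um h B) w‖ ^ 2 = ‖pd 1 (um h B) w‖ ^ 2 := by linarith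
  exact (sq_eq_sq₀ (norm_nonneg _) (norm_nonneg _)).1 this

lemma um_en' (hH : IsHarmonicSphereMap h) (w : ℂ) :
    2 * ‖pd 1 (um h B) w‖ ^ 2 = lam w ^ 2 * enDensity h (psi B w) := by
  have := um_en B hH.1.1 w
  rw [(um_conf B hH w).1] at this
  linarith

lemma um_parseval (hH : IsHarmonicSphereMap h) (w : ℂ) (c c' : E3) :
    ⟪pd 1 (um h B) w, c⟫ * ⟪pd 1 (um h B) w, c'⟫ +
      ⟪pd Complex.I (um h B) w, c⟫ * ⟪pd Complex.I (um h B) w, c'⟫ =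
      ‖pd 1 (um h B) w‖ ^ 2 * (⟪c, c'⟫ - ⟪um h B w, c⟫ * ⟪um h B w, c'⟫) := by
  obtain ⟨hn, ho⟩ := um_conf B hH w
  rcases (norm_nonneg (pd 1 (um h B) w)).eq_or_lt with h0 | h0
  · have z1 : pd 1 (um h B) w = 0 := norm_eq_zero.1 h0.symm
    have z2 : pd Complex.I (um h B) w = 0 := norm_eq_zero.1 (hn.trans h0.symm)
    simp [z1, z2]
  · obtain ⟨O, O0, O1, O2⟩ := exists_basis_of_orth h0 rfl hn (norm_um B hH.1.2 w) ho
      (by rw [real_inner_comm]; exact um_pd_orth B hH w 1)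
      (by rw [real_inner_comm]; exact um_pd_orth B hH w Complex.I)
    have := O.sum_inner_mul_inner c c'
    rw [Fin.sum_univ_three, O0, O1, O2] at this
    rw [← this]
    simp only [real_inner_smul_left, real_inner_smul_right, real_inner_comm c]
    field_simp
    ring

end um

/-! ### Stereographic coordinates in the target -/

/-- horizontal coordinates -/
def LN (T : OrthonormalBasis (Fin 3) ℝ E3) : E3 →L[ℝ] ℂ :=
  Complex.ofRealCLM ∘L innerSL ℝ (T 0) + Complex.I • (Complex.ofRealCLM ∘L innerSL ℝ (T 1))

/-- vertical coordinate -/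
def LZ (T : OrthonormalBasis (Fin 3) ℝ E3) : E3 →L[ℝ] ℂ := Complex.ofRealCLM ∘L innerSL ℝ (T 2)

lemma LN_apply (T : OrthonormalBasis (Fin 3) ℝ E3) (y : E3) :
    LN T y = ((⟪T 0, y⟫ : ℝ) : ℂ) + Complex.I * ((⟪T 1, y⟫ : ℝ) : ℂ) := by simp [LN]

lemma LZ_apply (T : OrthonormalBasis (Fin 3) ℝ E3) (y : E3) :
    LZ T y = ((⟪T 2, y⟫ : ℝ) : ℂ) := by simp [LZ]

/-- stereographic projection in the target -/
def fst (h : E3 → E3) (B T : OrthonormalBasis (Fin 3) ℝ E3) (w : ℂ) : ℂ :=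
  LN T (um h B w) / (1 - LZ T (um h B w))

lemma pd_clm {F : Type*} [NormedAddCommGroup F] [NormedSpace ℝ F] (L : E3 →L[ℝ] F) {u : ℂ → E3}
    {w : ℂ} (hu : DifferentiableAt ℝ u w) (v : ℂ) :
    pd v (fun w => L (u w)) w = L (pd v u w) := by
  have := (L.hasFDerivAt (x := u w)).comp w hu.hasFDerivAt
  unfold pd
  rw [show (fun w => L (u w)) = L ∘ u from rfl, this.fderiv]; rfl

lemma pd_mul {f g : ℂ → ℂ} {w : ℂ} (hf : DifferentiableAt ℝ f w) (hg : DifferentiableAt ℝ g w)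
    (v : ℂ) : pd v (fun w => f w * g w) w = pd v f w * g w + f w * pd v g w := by
  unfold pd
  rw [fderiv_fun_mul hf hg]
  simp [mul_comm]; ring

lemma pd_add {f g : ℂ → ℂ} {w : ℂ} (hf : DifferentiableAt ℝ f w) (hg : DifferentiableAt ℝ g w)
    (v : ℂ) : pd v (fun w => f w + g w) w = pd v f w + pd v g w := by
  unfold pd
  rw [fderiv_fun_add hf hg]; rfl

lemma pd_sub {f g : ℂ → ℂ} {w : ℂ} (hf : DifferentiableAt ℝ f w) (hg : DifferentiableAt ℝ g w)
    (v : ℂ) : pd v (fun w => f w - g w) w = pd v f w - pd v g w := by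
  unfold pd
  rw [fderiv_fun_sub hf hg]; rfl

lemma pd_one_sub {g : ℂ → ℂ} {w : ℂ} 
    (v : ℂ) : pd v (fun w => 1 - g w) w = - pd v g w := by
  unfold pd
  rw [fderiv_const_sub]; rfl

section fst
variable {h : E3 → E3} (B T : OrthonormalBasis (Fin 3) ℝ E3)

lemma one_sub_LZ_ne {u : E3} (hu : ‖u‖ = 1) (hne : u ≠ T 2) : 1 - LZ T u ≠ 0 := by
  rw [LZ_apply]
  intro h0
  have h1 : ⟪T 2, u⟫ = (1:ℝ) := by exact_mod_cast (sub_eq_zero.1 h0).symm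
  exact hne ((inner_eq_one_iff_of_norm_eq_one (T.norm_eq_one 2) hu).1 h1).symm

/-- domain of `fst` -/
def Ufst (h : E3 → E3) (B T : OrthonormalBasis (Fin 3) ℝ E3) : Set ℂ := {w | um h B w ≠ T 2}

lemma Ufst_open (hh : ContDiff ℝ (⊤ : ℕ∞) h) : IsOpen (Ufst h B T) := by
  have : Continuous (um h B) := continuous_iff_continuousAt.2 fun w =>
    (um_contDiffAt B hh w).continuousAt
  exact isOpen_ne_fun this continuous_const

variable {B T}

lemma fst_ne (hH : IsHarmonicSphereMap h) {w : ℂ} (hw : w ∈ Ufst h B T) :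
    1 - LZ T (um h B w) ≠ 0 := one_sub_LZ_ne T (norm_um B hH.1.2 w) hw

lemma fst_contDiffAt (hH : IsHarmonicSphereMap h) {w : ℂ} (hw : w ∈ Ufst h B T) :
    ContDiffAt ℝ (⊤ : ℕ∞) (fst h B T) w := by
  have hu := um_contDiffAt B hH.1.1 w
  unfold fst
  simp only [div_eq_mul_inv]
  have h1 : ContDiffAt ℝ (⊤ : ℕ∞) (fun w => LN T (um h B w)) w :=
    ContDiffAt.comp w (LN T).contDiff.contDiffAt hu
  have h2 : ContDiffAt ℝ (⊤ : ℕ∞) (fun w => 1 - LZ T (um h B w)) w :=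
    contDiffAt_const.sub (ContDiffAt.comp w (LZ T).contDiff.contDiffAt hu)
  exact h1.mul (h2.inv (fst_ne hH hw))

lemma fst_mul (hH : IsHarmonicSphereMap h) {w : ℂ} (hw : w ∈ Ufst h B T) :
    fst h B T w * (1 - LZ T (um h B w)) = LN T (um h B w) := by
  unfold fst
  exact div_mul_cancel₀ _ (fst_ne hH hw)

lemma fst_pd (hH : IsHarmonicSphereMap h) {w : ℂ} (hw : w ∈ Ufst h B T) (v : ℂ) :
    pd v (fst h B T) w * (1 - LZ T (um h B w)) =
      LN T (pd v (um h B) w) + fst h B T w * LZ T (pd v (um h B) w) := by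
  have hu := cda_diff (um_contDiffAt B hH.1.1 w)
  have hf := cda_diff (fst_contDiffAt hH hw)
  have hL : DifferentiableAt ℝ (fun w => LZ T (um h B w)) w := (LZ T).differentiableAt.comp w hu
  have e : (fun w => fst h B T w * (1 - LZ T (um h B w))) =ᶠ[nhds w] fun w => LN T (um h B w) := by
    filter_upwards [(Ufst_open B T hH.1.1).mem_nhds hw] with w' hw' using fst_mul hH hw'
  have := pd_congr e v
  rw [pd_mul hf (hL.const_sub 1), pd_clm _ hu, pd_one_sub, pd_clm _ hu] at this
  linear_combination this

lemma fst_pd2 (hH : IsHarmonicSphereMap h) {w : ℂ} (hw : w ∈ Ufst h B T) (v : ℂ) :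
    pd v (pd v (fst h B T)) w * (1 - LZ T (um h B w)) =
      LN T (pd v (pd v (um h B)) w) + fst h B T w * LZ T (pd v (pd v (um h B)) w)
        + 2 * pd v (fst h B T) w * LZ T (pd v (um h B) w) := by
  have hu := cda_diff (um_contDiffAt B hH.1.1 w)
  have hu1 := cda_diff (pd_contDiffAt (um_contDiffAt B hH.1.1 w) v)
  have hf := cda_diff (fst_contDiffAt hH hw)
  have hf1 := cda_diff (pd_contDiffAt (fst_contDiffAt hH hw) v)
  have hL : DifferentiableAt ℝ (fun w => LZ T (um h B w)) w := (LZ T).differentiableAt.comp w hu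
  have hL1 : DifferentiableAt ℝ (fun w => LZ T (pd v (um h B) w)) w :=
    (LZ T).differentiableAt.comp w hu1
  have hN1 : DifferentiableAt ℝ (fun w => LN T (pd v (um h B) w)) w :=
    (LN T).differentiableAt.comp w hu1
  have e : (fun w => pd v (fst h B T) w * (1 - LZ T (um h B w))) =ᶠ[nhds w]
      fun w => LN T (pd v (um h B) w) + fst h B T w * LZ T (pd v (um h B) w) := by
    filter_upwards [(Ufst_open B T hH.1.1).mem_nhds hw] with w' hw' using fst_pd hH hw' v
  have := pd_congr e v
  rw [pd_mul hf1 (hL.const_sub 1), pd_one_sub, pd_clm _ hu, pd_add hN1 (hf.fun_mul hL1),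
    pd_mul hf hL1, pd_clm _ hu1, pd_clm _ hu1] at this
  linear_combination this

lemma pars (hH : IsHarmonicSphereMap h) (w : ℂ) (i j : Fin 3) :
    ⟪T i, pd 1 (um h B) w⟫ * ⟪T j, pd 1 (um h B) w⟫ +
      ⟪T i, pd Complex.I (um h B) w⟫ * ⟪T j, pd Complex.I (um h B) w⟫ =
      ‖pd 1 (um h B) w‖ ^ 2 * ((if i = j then 1 else 0) - ⟪T i, um h B w⟫ * ⟪T j, um h B w⟫) := by
  have := um_parseval B hH w (T i) (T j)
  rw [frame_inner] at this
  simpa only [real_inner_comm] using this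

lemma sum_sq_T (hH : IsHarmonicSphereMap h) (w : ℂ) :
    ⟪T 0, um h B w⟫ ^ 2 + ⟪T 1, um h B w⟫ ^ 2 + ⟪T 2, um h B w⟫ ^ 2 = (1:ℝ) := by
  have := T.sum_inner_mul_inner (um h B w) (um h B w)
  rw [Fin.sum_univ_three, real_inner_self_eq_norm_sq, norm_um B hH.1.2] at this
  simp only [real_inner_comm (T _)] at this
  simp only [real_inner_comm (um h B w)] at this ⊢
  linarith

open ComplexConjugate

lemma fst_alg (hH : IsHarmonicSphereMap h) (w : ℂ) :
    (LN T (pd 1 (um h B) w) ^ 2 + LN T (pd Complex.I (um h B) w) ^ 2 =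
      - (‖pd 1 (um h B) w‖ ^ 2 : ℝ) * LN T (um h B w) ^ 2) ∧
    (LN T (pd 1 (um h B) w) * LZ T (pd 1 (um h B) w) +
        LN T (pd Complex.I (um h B) w) * LZ T (pd Complex.I (um h B) w) =
      - (‖pd 1 (um h B) w‖ ^ 2 : ℝ) * (LN T (um h B w) * LZ T (um h B w))) ∧
    (LZ T (pd 1 (um h B) w) ^ 2 + LZ T (pd Complex.I (um h B) w) ^ 2 =
      (‖pd 1 (um h B) w‖ ^ 2 : ℝ) * (1 - LZ T (um h B w) ^ 2)) ∧
    (LN T (pd 1 (um h B) w) * conj (LN T (pd 1 (um h B) w)) +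
        LN T (pd Complex.I (um h B) w) * conj (LN T (pd Complex.I (um h B) w)) =
      (‖pd 1 (um h B) w‖ ^ 2 : ℝ) * (1 + LZ T (um h B w) ^ 2)) ∧
    (LN T (um h B w) * conj (LN T (um h B w)) = 1 - LZ T (um h B w) ^ 2) := by
  have q := sum_sq_T (T := T) (B := B) hH w
  have p00 := pars (T := T) (B := B) hH w 0 0
  have p11 := pars (T := T) (B := B) hH w 1 1
  have p22 := pars (T := T) (B := B) hH w 2 2
  have p01 := pars (T := T) (B := B) hH w 0 1
  have p02 := pars (T := T) (B := B) hH w 0 2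
  have p12 := pars (T := T) (B := B) hH w 1 2
  simp only [if_true, Fin.reduceEq, if_false, LN_apply, LZ_apply, map_add, map_mul,
    Complex.conj_ofReal, Complex.conj_I] at *
  replace q := congrArg (fun x : ℝ => (x : ℂ)) q
  replace p00 := congrArg (fun x : ℝ => (x : ℂ)) p00
  replace p11 := congrArg (fun x : ℝ => (x : ℂ)) p11
  replace p22 := congrArg (fun x : ℝ => (x : ℂ)) p22
  replace p01 := congrArg (fun x : ℝ => (x : ℂ)) p01
  replace p02 := congrArg (fun x : ℝ => (x : ℂ)) p02
  replace p12 := congrArg (fun x : ℝ => (x : ℂ)) p12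
  push_cast at *
  have hI := Complex.I_sq
  generalize ((⟪T 0, um h B w⟫ : ℝ) : ℂ) = x at *
  generalize ((⟪T 1, um h B w⟫ : ℝ) : ℂ) = y at *
  generalize ((⟪T 2, um h B w⟫ : ℝ) : ℂ) = t at *
  generalize ((⟪T 0, pd 1 (um h B) w⟫ : ℝ) : ℂ) = a1 at *
  generalize ((⟪T 1, pd 1 (um h B) w⟫ : ℝ) : ℂ) = b1 at *
  generalize ((⟪T 2, pd 1 (um h B) w⟫ : ℝ) : ℂ) = c1 at *
  generalize ((⟪T 0, pd Complex.I (um h B) w⟫ : ℝ) : ℂ) = a2 at *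
  generalize ((⟪T 1, pd Complex.I (um h B) w⟫ : ℝ) : ℂ) = b2 at *
  generalize ((⟪T 2, pd Complex.I (um h B) w⟫ : ℝ) : ℂ) = c2 at *
  generalize ((‖pd 1 (um h B) w‖ : ℝ) : ℂ) = m at *
  generalize Complex.I = J at *
  refine ⟨?_, ?_, ?_, ?_, ?_⟩
  · linear_combination p00 + 2 * J * p01 - p11 + (b1 ^ 2 + b2 ^ 2 + m ^ 2 * y ^ 2) * hI
  · linear_combination p02 + J * p12
  · linear_combination p22
  · linear_combination p00 + p11 - m ^ 2 * q - (b1 ^ 2 + b2 ^ 2) * hI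
  · linear_combination q - y ^ 2 * hI

lemma fst_conf (hH : IsHarmonicSphereMap h) {w : ℂ} (hw : w ∈ Ufst h B T) :
    pd 1 (fst h B T) w ^ 2 + pd Complex.I (fst h B T) w ^ 2 = 0 := by
  obtain ⟨h1, h2, h3, -, -⟩ := fst_alg (T := T) (B := B) hH w
  have e1 := fst_pd hH hw 1
  have e2 := fst_pd hH hw Complex.I
  have e0 := fst_mul hH hw
  have hne := fst_ne hH hw
  have : (pd 1 (fst h B T) w ^ 2 + pd Complex.I (fst h B T) w ^ 2) *
      (1 - LZ T (um h B w)) ^ 2 = 0 := by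
    rw [add_mul, ← mul_pow, ← mul_pow, e1, e2]
    rw [← e0] at h1 h2
    linear_combination h1 + 2 * fst h B T w * h2 + fst h B T w ^ 2 * h3
  simpa [hne] using this

lemma fst_lap (hH : IsHarmonicSphereMap h) {w : ℂ} (hw : w ∈ Ufst h B T) :
    pd 1 (pd 1 (fst h B T)) w + pd Complex.I (pd Complex.I (fst h B T)) w = 0 := by
  obtain ⟨h1, h2, h3, -, -⟩ := fst_alg (T := T) (B := B) hH w
  have e1 := fst_pd hH hw 1
  have e2 := fst_pd hH hw Complex.I
  have d1 := fst_pd2 hH hw 1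
  have d2 := fst_pd2 hH hw Complex.I
  have e0 := fst_mul hH hw
  have hne := fst_ne hH hw
  have hl := um_lap B hH w
  rw [← um_en' B hH] at hl
  have l1 := congrArg (LN T) hl
  have l2 := congrArg (LZ T) hl
  simp only [map_add, map_smul, Complex.real_smul] at l1 l2
  push_cast at *
  have : (pd 1 (pd 1 (fst h B T)) w + pd Complex.I (pd Complex.I (fst h B T)) w) *
      (1 - LZ T (um h B w)) ^ 2 = 0 := by
    rw [← e0] at h2 l1
    linear_combination (1 - LZ T (um h B w)) * (d1 + d2) + (1 - LZ T (um h B w)) * (l1 + fst h B T w * l2)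
      + 2 * LZ T (pd 1 (um h B) w) * e1 + 2 * LZ T (pd Complex.I (um h B) w) * e2 
      + 2 * h2 + 2 * fst h B T w * h3
  simpa [hne] using this

lemma fst_norm (hH : IsHarmonicSphereMap h) {w : ℂ} (hw : w ∈ Ufst h B T) :
    ‖pd 1 (um h B) w‖ ≤ 2 * ‖pd 1 (fst h B T) w‖ := by
  obtain ⟨-, h2, h3, h4, h5⟩ := fst_alg (T := T) (B := B) hH w
  have e1 := fst_pd hH hw 1
  have e2 := fst_pd hH hw Complex.I
  have e0 := fst_mul hH hw
  have hne := fst_ne hH hw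
  have cT : ∀ y, conj (LZ T y) = LZ T y := fun y => by rw [LZ_apply, Complex.conj_ofReal]
  have c0 := congrArg conj e0
  have c1 := congrArg conj e1
  have c2 := congrArg conj e2
  have k2 := congrArg conj h2
  simp only [map_mul, map_sub, map_add, map_one, map_neg, cT, Complex.conj_ofReal] at c0 c1 c2 k2
  have hcf := fst_conf hH hw
  have hN : ‖pd Complex.I (fst h B T) w‖ = ‖pd 1 (fst h B T) w‖ := by
    have : ‖pd Complex.I (fst h B T) w ^ 2‖ = ‖pd 1 (fst h B T) w ^ 2‖ := by
      rw [eq_neg_of_add_eq_zero_left hcf, norm_neg]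
    rw [norm_pow, norm_pow] at this
    exact (sq_eq_sq₀ (norm_nonneg _) (norm_nonneg _)).1 this
  have key : (pd 1 (fst h B T) w * conj (pd 1 (fst h B T) w) +
      pd Complex.I (fst h B T) w * conj (pd Complex.I (fst h B T) w)) *
      (1 - LZ T (um h B w)) ^ 2 = 2 * (‖pd 1 (um h B) w‖ ^ 2 : ℝ) := by
    have : (pd 1 (fst h B T) w * (1 - LZ T (um h B w))) * (conj (pd 1 (fst h B T) w) * (1 - LZ T (um h B w)))
        + (pd Complex.I (fst h B T) w * (1 - LZ T (um h B w))) * (conj (pd Complex.I (fst h B T) w) * (1 - LZ T (um h B w)))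
        = 2 * (‖pd 1 (um h B) w‖ ^ 2 : ℝ) := by
      have h6 : fst h B T w * conj (fst h B T w) * (1 - LZ T (um h B w)) = 1 + LZ T (um h B w) := by
        have : (fst h B T w * conj (fst h B T w) * (1 - LZ T (um h B w)) - (1 + LZ T (um h B w))) *
          (1 - LZ T (um h B w)) = 0 := by
          rw [← c0, ← e0] at h5
          linear_combination h5
        have := (mul_eq_zero.1 this).resolve_right hne
        exact sub_eq_zero.1 this
      rw [e1, e2, c1, c2]
      rw [← c0] at k2
      rw [← e0] at h2
      linear_combination h4 + conj (fst h B T w) * h2 + fst h B T w * k2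
        + fst h B T w * conj (fst h B T w) * h3 + (‖pd 1 (um h B) w‖ ^ 2 : ℝ) * (1 - LZ T (um h B w)) * h6
    linear_combination this
  rw [Complex.mul_conj, Complex.mul_conj, Complex.normSq_eq_norm_sq, Complex.normSq_eq_norm_sq, hN,
    LZ_apply] at key
  have key' : (‖pd 1 (fst h B T) w‖ ^ 2 + ‖pd 1 (fst h B T) w‖ ^ 2) * (1 - ⟪T 2, um h B w⟫) ^ 2
      = 2 * ‖pd 1 (um h B) w‖ ^ 2 := by exact_mod_cast key
  have ht : |⟪T 2, um h B w⟫| ≤ 1 := by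
    have := abs_real_inner_le_norm (T 2) (um h B w)
    rwa [T.norm_eq_one, norm_um B hH.1.2, one_mul] at this
  rw [abs_le] at ht
  apply le_of_sq_le_sq _ (by positivity)
  have h7 : (1 - ⟪T 2, um h B w⟫) ^ 2 ≤ 4 := by nlinarith
  have h8 := mul_le_mul_of_nonneg_left h7 (sq_nonneg ‖pd 1 (fst h B T) w‖)
  nlinarith

lemma fst_bound (hH : IsHarmonicSphereMap h) {w : ℂ} (hw : w ∈ Ufst h B T) :
    ‖fst h B T w‖ ≤ 2 * ‖um h B w - T 2‖⁻¹ := by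
  obtain ⟨-, -, -, -, h5⟩ := fst_alg (T := T) (B := B) hH w
  have e0 := fst_mul hH hw
  have hne := fst_ne hH hw
  have ht : |⟪T 2, um h B w⟫| ≤ 1 := by
    have := abs_real_inner_le_norm (T 2) (um h B w)
    rwa [T.norm_eq_one, norm_um B hH.1.2, one_mul] at this
  rw [abs_le] at ht
  have hd : ‖um h B w - T 2‖ ^ 2 = 2 * (1 - ⟪T 2, um h B w⟫) := by
    rw [norm_sub_sq_real, T.norm_eq_one, norm_um B hH.1.2, real_inner_comm]; ring
  rw [← e0, Complex.mul_conj, Complex.normSq_eq_norm_sq, norm_mul, LZ_apply] at h5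
  have h6 : (1 - ((⟪T 2, um h B w⟫ : ℝ) : ℂ)) = ((1 - ⟪T 2, um h B w⟫ : ℝ) : ℂ) := by push_cast; rfl
  rw [h6, Complex.norm_real, Real.norm_of_nonneg (by linarith)] at h5
  have h7 : (‖fst h B T w‖ * (1 - ⟪T 2, um h B w⟫)) ^ 2 = 1 - ⟪T 2, um h B w⟫ ^ 2 := by
    exact_mod_cast h5
  have hpos : 0 < ‖um h B w - T 2‖ := norm_pos_iff.2 (sub_ne_zero.2 hw)
  have hs : 0 < 1 - ⟪T 2, um h B w⟫ := by nlinarith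
  rw [← div_eq_mul_inv, le_div_iff₀ hpos]
  apply le_of_sq_le_sq _ (by positivity)
  rw [mul_pow, hd]
  have h8 : ‖fst h B T w‖ ^ 2 * (1 - ⟪T 2, um h B w⟫) = 1 + ⟪T 2, um h B w⟫ := by
    have : (‖fst h B T w‖ ^ 2 * (1 - ⟪T 2, um h B w⟫) - (1 + ⟪T 2, um h B w⟫)) * (1 - ⟪T 2, um h B w⟫) = 0 := by
      linear_combination h7
    have := (mul_eq_zero.1 this).resolve_right hs.ne'
    linarith
  nlinarith

end fst

/-! ### Orientation -/

open ComplexConjugate in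
lemma pd_conj {f : ℂ → ℂ} {w : ℂ} (hf : DifferentiableAt ℝ f w) (v : ℂ) :
    pd v (fun w => conj (f w)) w = conj (pd v f w) := by
  have := (Complex.conjCLE.toContinuousLinearMap.hasFDerivAt (x := f w)).comp w hf.hasFDerivAt
  unfold pd
  rw [show (fun w => conj (f w)) = Complex.conjCLE.toContinuousLinearMap ∘ f from rfl, this.fderiv]
  rfl

lemma pd_const_mul {f : ℂ → ℂ} {w : ℂ} (hf : DifferentiableAt ℝ f w) (c v : ℂ) :
    pd v (fun w => c * f w) w = c * pd v f w := by
  unfold pd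
  rw [fderiv_const_mul hf]; rfl

lemma hol_of_lap {f : ℂ → ℂ} {w : ℂ} (hf : ContDiffAt ℝ (⊤ : ℕ∞) f w)
    (hl : pd 1 (pd 1 f) w + pd Complex.I (pd Complex.I f) w = 0) :
    DifferentiableAt ℂ (fun w => pd 1 f w - Complex.I * pd Complex.I f w) w := by
  have d1 := cda_diff (pd_contDiffAt hf 1)
  have d2 := cda_diff (pd_contDiffAt hf Complex.I)
  rw [differentiableAt_complex_iff_differentiableAt_real]
  refine ⟨d1.sub (d2.const_mul _), ?_⟩
  have e : ∀ v, fderiv ℝ (fun w => pd 1 f w - Complex.I * pd Complex.I f w) w v =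
      pd v (pd 1 f) w - Complex.I * pd v (pd Complex.I f) w := by
    intro v
    have := pd_sub d1 (d2.const_mul Complex.I) v
    rw [pd_const_mul d2] at this
    exact this
  rw [e, e, smul_eq_mul, pd_comm hf 1 Complex.I]
  linear_combination (-Complex.I) * hl + (pd Complex.I (pd 1 f) w) * Complex.I_sq

open ComplexConjugate in
lemma orient_aux {f : ℂ → ℂ} {V : Set ℂ} (hVo : IsOpen V) (hVc : IsPreconnected V)
    (h0 : (0:ℂ) ∈ V)
    (hf : ∀ w ∈ V, ContDiffAt ℝ (⊤ : ℕ∞) f w)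
    (hc : ∀ w ∈ V, pd 1 f w ^ 2 + pd Complex.I f w ^ 2 = 0)
    (hl : ∀ w ∈ V, pd 1 (pd 1 f) w + pd Complex.I (pd Complex.I f) w = 0)
    (hn : pd 1 f 0 - Complex.I * pd Complex.I f 0 ≠ 0) :
    ∀ w ∈ V, pd 1 f w + Complex.I * pd Complex.I f w = 0 := by
  set G : ℂ → ℂ := fun w => conj (pd 1 f w + Complex.I * pd Complex.I f w) with hG
  have hfc : ∀ w ∈ V, ContDiffAt ℝ (⊤ : ℕ∞) (fun w => conj (f w)) w := fun w hw =>
    ContDiffAt.comp w (Complex.conjCLE.toContinuousLinearMap.contDiff.contDiffAt) (hf w hw)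
  have ev : ∀ v, ∀ w ∈ V, pd v (fun w => conj (f w)) =ᶠ[nhds w] fun w => conj (pd v f w) := by
    intro v w hw
    filter_upwards [hVo.mem_nhds hw] with w' hw' using pd_conj (cda_diff (hf w' hw')) v
  have hGd : DifferentiableOn ℂ G V := by
    intro w hw
    have hl' : pd 1 (pd 1 (fun w => conj (f w))) w +
        pd Complex.I (pd Complex.I (fun w => conj (f w))) w = 0 := by
      rw [pd_congr (ev 1 w hw), pd_congr (ev Complex.I w hw),
        pd_conj (cda_diff (pd_contDiffAt (hf w hw) 1)),
        pd_conj (cda_diff (pd_contDiffAt (hf w hw) Complex.I)), ← map_add, hl w hw, map_zero]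
    have := hol_of_lap (hfc w hw) hl'
    refine DifferentiableAt.differentiableWithinAt (this.congr_of_eventuallyEq ?_)
    filter_upwards [ev 1 w hw, ev Complex.I w hw] with w' h1 h2
    simp only [hG, h1, h2, map_add, map_mul, Complex.conj_I]
    ring
  have hcont : ContinuousAt (fun w => pd 1 f w - Complex.I * pd Complex.I f w) 0 :=
    (hol_of_lap (hf 0 h0) (hl 0 h0)).continuousAt
  have hG0 : G =ᶠ[nhds 0] 0 := by
    filter_upwards [hcont.eventually_ne hn, hVo.mem_nhds h0] with w hw hwV
    have : (pd 1 f w - Complex.I * pd Complex.I f w) * (pd 1 f w + Complex.I * pd Complex.I f w) = 0 := by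
      linear_combination hc w hwV - (pd Complex.I f w) ^ 2 * Complex.I_sq
    have := (mul_eq_zero.1 this).resolve_left hw
    simp only [hG, this, map_zero, Pi.zero_apply]
  have := (hGd.analyticOnNhd hVo).eqOn_zero_of_preconnected_of_eventuallyEq_zero hVc h0 hG0
  intro w hw
  have h1 := this hw
  simp only [hG, Pi.zero_apply, map_eq_zero] at h1
  exact h1

open ComplexConjugate in
lemma orient {f : ℂ → ℂ} {U : Set ℂ} (hU : IsOpen U) (h0 : (0:ℂ) ∈ U)
    (hf : ∀ w ∈ U, ContDiffAt ℝ (⊤ : ℕ∞) f w)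
    (hc : ∀ w ∈ U, pd 1 f w ^ 2 + pd Complex.I f w ^ 2 = 0)
    (hl : ∀ w ∈ U, pd 1 (pd 1 f) w + pd Complex.I (pd Complex.I f) w = 0)
    (hn : pd 1 f 0 ≠ 0) :
    ∃ (g : ℂ → ℂ) (V : Set ℂ), IsOpen V ∧ V ⊆ U ∧ (0:ℂ) ∈ V ∧ (∀ w ∈ U, w ∈ closure V → w ∈ V) ∧
      (∀ w ∈ U, ContDiffAt ℝ (⊤ : ℕ∞) g w) ∧ (∀ w, ‖g w‖ = ‖f w‖) ∧ ‖pd 1 g 0‖ = ‖pd 1 f 0‖ ∧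
      ∀ w ∈ V, pd 1 g w + Complex.I * pd Complex.I g w = 0 := by
  set V := connectedComponentIn U 0 with hV
  have hVo : IsOpen V := hU.connectedComponentIn
  have hVU : V ⊆ U := connectedComponentIn_subset U 0
  have hV0 : (0:ℂ) ∈ V := mem_connectedComponentIn h0
  have hVp : IsPreconnected V := isPreconnected_connectedComponentIn
  have hcl : ∀ w ∈ U, w ∈ closure V → w ∈ V := by
    intro w hw hwc
    have h1 : IsPreconnected (insert w V) :=
      hVp.subset_closure (subset_insert _ _) (insert_subset hwc subset_closure)
    exact h1.subset_connectedComponentIn (mem_insert_of_mem _ hV0) (insert_subset hw hVU)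
      (mem_insert _ _)
  by_cases hg : pd 1 f 0 - Complex.I * pd Complex.I f 0 = 0
  · refine ⟨fun w => conj (f w), V, hVo, hVU, hV0, hcl, ?_, ?_, ?_, ?_⟩
    · exact fun w hw =>
        ContDiffAt.comp w (Complex.conjCLE.toContinuousLinearMap.contDiff.contDiffAt) (hf w hw)
    · intro w; simp
    · rw [pd_conj (cda_diff (hf 0 h0))]; simp
    · have ev : ∀ v, ∀ w ∈ U, pd v (fun w => conj (f w)) =ᶠ[nhds w] fun w => conj (pd v f w) := by
        intro v w hw
        filter_upwards [hU.mem_nhds hw] with w' hw' using pd_conj (cda_diff (hf w' hw')) v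
      refine orient_aux hVo hVp hV0 ?_ ?_ ?_ ?_
      · exact fun w hw =>
          ContDiffAt.comp w (Complex.conjCLE.toContinuousLinearMap.contDiff.contDiffAt) (hf w (hVU hw))
      · intro w hw
        rw [pd_conj (cda_diff (hf w (hVU hw))), pd_conj (cda_diff (hf w (hVU hw))), ← map_pow,
          ← map_pow, ← map_add, hc w (hVU hw), map_zero]
      · intro w hw
        rw [pd_congr (ev 1 w (hVU hw)), pd_congr (ev Complex.I w (hVU hw)),
          pd_conj (cda_diff (pd_contDiffAt (hf w (hVU hw)) 1)),
          pd_conj (cda_diff (pd_contDiffAt (hf w (hVU hw)) Complex.I)), ← map_add, hl w (hVU hw),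
          map_zero]
      · rw [pd_conj (cda_diff (hf 0 h0)), pd_conj (cda_diff (hf 0 h0))]
        intro h1
        have h2 : conj (pd 1 f 0 + Complex.I * pd Complex.I f 0) = 0 := by
          rw [map_add, map_mul, Complex.conj_I]; linear_combination h1
        rw [map_eq_zero] at h2
        apply hn
        linear_combination (hg + h2) / 2
  · exact ⟨f, V, hVo, hVU, hV0, hcl, hf, fun _ => rfl, rfl,
      orient_aux hVo hVp hV0 (fun w hw => hf w (hVU hw)) (fun w hw => hc w (hVU hw))
        (fun w hw => hl w (hVU hw)) hg⟩

/-! ### A Pompeiu type inequality -/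

/-- the (unnormalised) `∂̄` operator -/
def dbar (F : ℂ → ℂ) (w : ℂ) : ℂ := pd 1 F w + Complex.I * pd Complex.I F w

lemma exp_fderiv_real (ζ : ℂ) : HasFDerivAt Complex.exp
    (Complex.exp ζ • (1 : ℂ →L[ℝ] ℂ)) ζ := (Complex.hasDerivAt_exp ζ).complexToReal_fderiv

lemma det_mul_complex (a : ℂ) :
    (a • (1 : ℂ →L[ℝ] ℂ)).det = Complex.normSq a := by
  rw [← Algebra.norm_complex_apply, Algebra.norm_apply]
  unfold ContinuousLinearMap.det
  congr 1

lemma clm_C (L : ℂ →L[ℝ] ℂ) (a : ℂ) : L a = L 1 * a.re + L Complex.I * a.im := by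
  conv_lhs => rw [← Complex.re_add_im a]
  rw [map_add, show ((a.re : ℂ)) = a.re • (1:ℂ) by simp,
    show ((a.im : ℂ) * Complex.I) = a.im • Complex.I by simp, map_smul, map_smul]
  simp [mul_comm]

/-- logarithmic pull back -/
def Glog (F : ℂ → ℂ) (ζ : ℂ) : ℂ := F (Complex.exp ζ) * Complex.exp (-ζ)

lemma Glog_cd {F : ℂ → ℂ} (hF : ContDiff ℝ (⊤ : ℕ∞) F) : ContDiff ℝ (⊤ : ℕ∞) (Glog F) := by
  have h1 : ContDiff ℝ (⊤ : ℕ∞) Complex.exp := (Complex.contDiff_exp (𝕜 := ℂ)).restrict_scalars ℝ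
  exact (hF.comp h1).mul (h1.comp contDiff_neg)

lemma Glog_dbar {F : ℂ → ℂ} (hF : ContDiff ℝ (⊤ : ℕ∞) F) (ζ : ℂ) :
    ‖Complex.I • fderiv ℝ (Glog F) ζ 1 - fderiv ℝ (Glog F) ζ Complex.I‖ =
      ‖dbar F (Complex.exp ζ)‖ := by
  have hd : HasFDerivAt F (fderiv ℝ F (Complex.exp ζ)) (Complex.exp ζ) :=
    (hF.differentiable (by simp) _).hasFDerivAt
  have h1 := hd.comp ζ (exp_fderiv_real ζ)
  have h2 := (exp_fderiv_real (-ζ)).comp ζ ((hasFDerivAt_id (𝕜 := ℝ) ζ).neg)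
  have h3 := h1.mul h2
  have h4 : fderiv ℝ (Glog F) ζ = _ := h3.fderiv
  set L := fderiv ℝ F (Complex.exp ζ) with hL
  have hv : ∀ v, fderiv ℝ (Glog F) ζ v =
      L (Complex.exp ζ * v) * Complex.exp (-ζ) - F (Complex.exp ζ) * Complex.exp (-ζ) * v := by
    intro v
    rw [h4]
    simp
    ring
  rw [hv, hv]
  set a := Complex.exp ζ with ha
  have hab : ‖a‖ * ‖Complex.exp (-ζ)‖ = 1 := by
    rw [← norm_mul, ha, ← Complex.exp_add]; simp
  have key : Complex.I * L a - L (a * Complex.I) =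
      Complex.I * (starRingEnd ℂ) a * (L 1 + Complex.I * L Complex.I) := by
    rw [clm_C L a, clm_C L (a * Complex.I)]
    have : (starRingEnd ℂ) a = a.re - a.im * Complex.I := by
      apply Complex.ext <;> simp
    rw [this]
    simp
    linear_combination (L 1 * a.im + a.im * L Complex.I * Complex.I - a.re * L Complex.I) * Complex.I_sq
  have : Complex.I • (L (a * 1) * Complex.exp (-ζ) - F a * Complex.exp (-ζ) * 1) -
      (L (a * Complex.I) * Complex.exp (-ζ) - F a * Complex.exp (-ζ) * Complex.I) =
      (Complex.I * (starRingEnd ℂ) a * (L 1 + Complex.I * L Complex.I)) * Complex.exp (-ζ) := by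
    rw [← key, smul_eq_mul, mul_one]; ring
  rw [this, norm_mul, norm_mul, norm_mul, Complex.norm_I, one_mul, RCLike.norm_conj,
    mul_right_comm, hab, one_mul]
  rfl

lemma exp_log_circle {δ : ℝ} (hδ : 0 < δ) (y : ℝ) :
    Complex.exp ((Real.log δ : ℝ) + (y : ℂ) * Complex.I) = circleMap 0 δ y := by
  rw [Complex.exp_add, ← Complex.ofReal_exp, Real.exp_log hδ]; simp [circleMap]

lemma left_side {F : ℂ → ℂ} (hF : ContDiff ℝ (⊤ : ℕ∞) F) {r δ : ℝ}
    (hol : ∀ w ∈ ball (0:ℂ) r, dbar F w = 0) (hδ : 0 < δ) (hδr : δ < r) :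
    ∫ y in (0:ℝ)..(2 * π), Glog F ((Real.log δ : ℝ) + (y : ℂ) * Complex.I) = 2 * π * pd 1 F 0 := by
  have hdC : ∀ w ∈ ball (0:ℂ) r, DifferentiableAt ℂ F w := by
    intro w hw
    rw [differentiableAt_complex_iff_differentiableAt_real]
    refine ⟨hF.differentiable (by simp) _, ?_⟩
    have := hol w hw
    unfold dbar pd at this
    rw [smul_eq_mul]
    linear_combination (-Complex.I) * this + (fderiv ℝ F w Complex.I) * Complex.I_sq
  have hD : DifferentiableOn ℂ F (ball 0 r) := fun w hw => (hdC w hw).differentiableWithinAt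
  have hc := Complex.two_pi_I_inv_smul_circleIntegral_sub_sq_inv_smul_of_differentiable
    isOpen_ball (closedBall_subset_ball hδr) hD (mem_ball_self hδ : (0:ℂ) ∈ ball 0 δ)
  have hd : deriv F 0 = pd 1 F 0 := by
    unfold pd
    rw [(hdC 0 (mem_ball_self (hδ.trans hδr))).fderiv_restrictScalars ℝ]
    simp
  rw [hd] at hc
  unfold circleIntegral at hc
  have : ∀ y : ℝ, deriv (circleMap 0 δ) y • (((circleMap 0 δ y - 0) ^ 2)⁻¹ • F (circleMap 0 δ y)) =
      Complex.I * Glog F ((Real.log δ : ℝ) + (y : ℂ) * Complex.I) := by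
    intro y
    have hne : circleMap 0 δ y ≠ 0 := circleMap_ne_center hδ.ne'
    unfold Glog
    rw [Complex.exp_neg, exp_log_circle hδ, deriv_circleMap, sub_zero, smul_eq_mul, smul_eq_mul]
    field_simp
  simp only [this] at hc
  rw [intervalIntegral.integral_const_mul, smul_eq_mul] at hc
  rw [← hc]
  generalize (∫ x in (0:ℝ)..(2 * π), Glog F ((Real.log δ : ℝ) + (x : ℂ) * Complex.I)) = X
  have : (π : ℂ) ≠ 0 := by exact_mod_cast Real.pi_ne_zero
  have := Complex.I_ne_zero
  field_simp

lemma right_side {F : ℂ → ℂ} {M T : ℝ} (hM : ∀ w, ‖F w‖ ≤ M) (hT : 0 < T) :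
    ‖∫ y in (0:ℝ)..(2 * π), Glog F ((Real.log T : ℝ) + (y : ℂ) * Complex.I)‖ ≤ M / T * (2 * π) := by
  have := intervalIntegral.norm_integral_le_of_norm_le_const (a := 0) (b := 2 * π) (C := M / T)
    (f := fun y : ℝ => Glog F ((Real.log T : ℝ) + (y : ℂ) * Complex.I)) (by
      intro y _
      unfold Glog
      rw [norm_mul, Complex.exp_neg, exp_log_circle hT, norm_inv, norm_circleMap_zero, abs_of_pos hT,
        ← div_eq_mul_inv]
      gcongr
      exact hM _)
  simpa [abs_of_pos Real.pi_pos] using this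

lemma dbar_continuous {F : ℂ → ℂ} (hF : ContDiff ℝ (⊤ : ℕ∞) F) : Continuous (dbar F) := by
  have h1 : ∀ v, Continuous (pd v F) := fun v => continuous_iff_continuousAt.2 fun w =>
    (pd_contDiffAt hF.contDiffAt v).continuousAt
  exact (h1 1).add (continuous_const.mul (h1 _))

lemma area_side {F : ℂ → ℂ} (hF : ContDiff ℝ (⊤ : ℕ∞) F) (a b : ℝ) :
    ∫⁻ x in Ioc a b, ∫⁻ y in Ioc (0:ℝ) (2 * π),
      ENNReal.ofReal ‖dbar F (Complex.exp ((x : ℂ) + (y : ℂ) * Complex.I))‖ ≤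
    ∫⁻ w, ENNReal.ofReal (‖dbar F w‖ / Complex.normSq w) := by
  have hcont := dbar_continuous hF
  have hm : Measurable fun ζ : ℂ => ENNReal.ofReal ‖dbar F (Complex.exp ζ)‖ :=
    (hcont.comp Complex.continuous_exp).norm.measurable.ennreal_ofReal
  set s : Set ℂ := Complex.measurableEquivRealProd ⁻¹' (Ioc a b ×ˢ Ioc (0:ℝ) (2 * π)) with hs
  have hsm : MeasurableSet s :=
    Complex.measurableEquivRealProd.measurable (measurableSet_Ioc.prod measurableSet_Ioc)
  have e1 : ∫⁻ x in Ioc a b, ∫⁻ y in Ioc (0:ℝ) (2 * π),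
      ENNReal.ofReal ‖dbar F (Complex.exp ((x : ℂ) + (y : ℂ) * Complex.I))‖ =
      ∫⁻ ζ in s, ENNReal.ofReal ‖dbar F (Complex.exp ζ)‖ := by
    have hmp := Complex.volume_preserving_equiv_real_prod
    have := hmp.setLIntegral_comp_preimage (s := Ioc a b ×ˢ Ioc (0:ℝ) (2 * π))
      (measurableSet_Ioc.prod measurableSet_Ioc)
      (f := fun p => ENNReal.ofReal ‖dbar F (Complex.exp (Complex.measurableEquivRealProd.symm p))‖)
      (hm.comp Complex.measurableEquivRealProd.symm.measurable)
    simp only [MeasurableEquiv.symm_apply_apply] at this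
    rw [← hs] at this
    rw [this, Measure.volume_eq_prod, ← Measure.prod_restrict, lintegral_prod]
    · refine lintegral_congr fun x => lintegral_congr fun y => ?_
      congr 4
      apply Complex.ext <;> simp
    · exact (hm.comp Complex.measurableEquivRealProd.symm.measurable).aemeasurable
  rw [e1]
  have hinj : InjOn Complex.exp s := by
    intro ζ hζ ξ hξ h
    obtain ⟨n, hn⟩ := Complex.exp_eq_exp_iff_exists_int.1 h
    simp only [hs, mem_preimage, mem_prod, mem_Ioc, Complex.measurableEquivRealProd_apply] at hζ hξ
    have him := congrArg Complex.im hn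
    simp at him
    have hn0 : n = 0 := by
      have hp := Real.pi_pos
      have h1 : (n : ℝ) < 1 := by
        by_contra hc
        push Not at hc
        nlinarith [hζ.2.1, hζ.2.2, hξ.2.1, hξ.2.2]
      have h2 : (-1:ℝ) < n := by
        by_contra hc
        push Not at hc
        nlinarith [hζ.2.1, hζ.2.2, hξ.2.1, hξ.2.2]
      have h3 : n < 1 := by exact_mod_cast h1
      have h4 : -1 < n := by exact_mod_cast h2
      omega
    rw [hn, hn0]; simp
  have e2 := lintegral_image_eq_lintegral_abs_det_fderiv_mul volume hsm
    (fun ζ _ => (exp_fderiv_real ζ).hasFDerivWithinAt) hinj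
    (fun w => ENNReal.ofReal (‖dbar F w‖ / Complex.normSq w))
  calc _ = ∫⁻ ζ in s, ENNReal.ofReal |(Complex.exp ζ • (1 : ℂ →L[ℝ] ℂ)).det| *
        ENNReal.ofReal (‖dbar F (Complex.exp ζ)‖ / Complex.normSq (Complex.exp ζ)) := by
        refine lintegral_congr fun ζ => ?_
        rw [det_mul_complex, abs_of_nonneg (Complex.normSq_nonneg _),
          ← ENNReal.ofReal_mul (Complex.normSq_nonneg _)]
        have : Complex.normSq (Complex.exp ζ) ≠ 0 := by simp
        congr 1
        field_simp
    _ = _ := e2.symm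
    _ ≤ _ := setLIntegral_le_lintegral _ _

lemma pompeiu {F : ℂ → ℂ} (hF : ContDiff ℝ (⊤ : ℕ∞) F) {M r : ℝ} (hM : ∀ w, ‖F w‖ ≤ M) (hr : 0 < r)
    (hol : ∀ w ∈ ball (0:ℂ) r, dbar F w = 0) :
    ENNReal.ofReal (2 * π * ‖pd 1 F 0‖) ≤
      ∫⁻ w, ENNReal.ofReal (‖dbar F w‖ / Complex.normSq w) := by
  set A := ∫⁻ w, ENNReal.ofReal (‖dbar F w‖ / Complex.normSq w) with hA
  have hG := Glog_cd hF
  have key : ∀ T : ℝ, r ≤ T →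
      ENNReal.ofReal (2 * π * ‖pd 1 F 0‖) ≤ A + ENNReal.ofReal (M / T * (2 * π)) := by
    intro T hT
    set δ := r / 2
    have hδ : 0 < δ := half_pos hr
    have hT0 : 0 < T := hr.trans_le hT
    have hl := left_side hF hol hδ (half_lt_self hr)
    have hR := right_side hM hT0
    have hab : Real.log δ ≤ Real.log T :=
      Real.log_le_log hδ ((half_lt_self hr).le.trans hT)
    have hGd : Continuous fun ζ => Complex.I • fderiv ℝ (Glog F) ζ 1 - fderiv ℝ (Glog F) ζ Complex.I := by
      have h1 : ∀ v, Continuous fun ζ => fderiv ℝ (Glog F) ζ v := fun v =>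
        continuous_iff_continuousAt.2 fun w => (pd_contDiffAt hG.contDiffAt v).continuousAt
      exact ((h1 1).const_smul (Complex.I)).sub (h1 _)
    have hrect := Complex.integral_boundary_rect_of_differentiableOn_real (Glog F)
      ((Real.log δ : ℝ) : ℂ) ((Real.log T : ℝ) + (2 * π : ℝ) * Complex.I)
      (hG.differentiable (by simp)).differentiableOn
      (hGd.continuousOn.integrableOn_compact
        (isCompact_uIcc.reProdIm isCompact_uIcc))
    have hper : ∀ ζ : ℂ, Glog F (ζ + 2 * π * Complex.I) = Glog F ζ := by
      intro ζ
      unfold Glog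
      rw [Complex.exp_periodic ζ, Complex.exp_neg, Complex.exp_periodic ζ, Complex.exp_neg]
    simp at hrect
    simp only [hper, sub_self, zero_add] at hrect
    rw [hl] at hrect
    set Y := ∫ (x : ℝ) in Real.log δ..Real.log T, ∫ (y : ℝ) in (0:ℝ)..2 * π,
        (Complex.I * (fderiv ℝ (Glog F) (↑x + ↑y * Complex.I)) 1 -
          (fderiv ℝ (Glog F) (↑x + ↑y * Complex.I)) Complex.I) with hY
    have hYb : ‖Y‖ₑ ≤ A := by
      rw [hY, intervalIntegral.integral_of_le hab]
      refine (enorm_integral_le_lintegral_enorm _).trans (le_trans ?_ (area_side hF (Real.log δ) (Real.log T)))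
      refine lintegral_mono fun x => ?_
      rw [intervalIntegral.integral_of_le (by positivity)]
      refine (enorm_integral_le_lintegral_enorm _).trans (lintegral_mono fun y => ?_)
      rw [← Glog_dbar hF, ofReal_norm, smul_eq_mul]
    have h1 : 2 * π * ‖pd 1 F 0‖ = ‖Complex.I * (2 * ↑π * pd 1 F 0)‖ := by
      simp [abs_of_pos Real.pi_pos]
    have h2 : Complex.I * (2 * ↑π * pd 1 F 0) =
      (Complex.I * ∫ (y : ℝ) in (0:ℝ)..2 * π, Glog F (↑(Real.log T) + ↑y * Complex.I)) - Y := by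
      rw [← hrect]; ring
    rw [h1, ofReal_norm, h2, add_comm]
    refine (enorm_sub_le).trans (add_le_add ?_ hYb)
    rw [← ofReal_norm, norm_mul, Complex.norm_I, one_mul]
    exact ENNReal.ofReal_le_ofReal hR
  have hlim : Tendsto (fun T : ℝ => A + ENNReal.ofReal (M / T * (2 * π))) atTop (nhds (A + ENNReal.ofReal (0 * (2 * π)))) := by
    refine tendsto_const_nhds.add (ENNReal.tendsto_ofReal ?_)
    exact (tendsto_const_nhds.div_atTop tendsto_id).mul_const _
  have := ge_of_tendsto hlim (eventually_atTop.2 ⟨r, key⟩)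
  simpa using this

/-! ### The basic estimate -/

/-- a cutoff in stereographic coordinates -/
def Xc (χ : E3 → ℝ) (B : OrthonormalBasis (Fin 3) ℝ E3) (w : ℂ) : ℂ := ((χ (psi B w) : ℝ) : ℂ)

lemma Xc_contDiff {χ : E3 → ℝ} (hχ : ContDiff ℝ (⊤ : ℕ∞) χ) (B : OrthonormalBasis (Fin 3) ℝ E3) :
    ContDiff ℝ (⊤ : ℕ∞) (Xc χ B) :=
  Complex.ofRealCLM.contDiff.comp (hχ.comp (psi_contDiff B))

lemma dbar_congr {f g : ℂ → ℂ} {w : ℂ} (h : f =ᶠ[nhds w] g) : dbar f w = dbar g w := by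
  unfold dbar; rw [pd_congr h, pd_congr h]

lemma dbar_const (c w : ℂ) : dbar (fun _ => c) w = 0 := by simp [dbar, pd_const]

lemma dbar_mul {f g : ℂ → ℂ} {w : ℂ} (hf : DifferentiableAt ℝ f w) (hg : DifferentiableAt ℝ g w) :
    dbar (fun w => f w * g w) w = dbar f w * g w + f w * dbar g w := by
  unfold dbar; rw [pd_mul hf hg, pd_mul hf hg]; ring

lemma two_mul_ofReal (a : ℝ) : (2:ENNReal) * ENNReal.ofReal a = ENNReal.ofReal (2 * a) := by
  rw [ENNReal.ofReal_mul (by norm_num)]; simp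

lemma two_half_ofReal (a : ℝ) :
    ENNReal.ofReal a = (2:ENNReal) * (ENNReal.ofReal (1 / 2) * ENNReal.ofReal a) := by
  rw [← ENNReal.ofReal_mul (by norm_num), two_mul_ofReal]; congr 1; ring

lemma two_mul_2048 (X : ENNReal) : (2:ENNReal) * (X * ENNReal.ofReal 2048) = 4096 * X := by
  rw [mul_comm X, ← mul_assoc, two_mul_ofReal]; norm_num

lemma point_est {h : E3 → E3} (hH : IsHarmonicSphereMap h) (B : OrthonormalBasis (Fin 3) ℝ E3)
    {χ : E3 → ℝ} (hχ : ContDiff ℝ (⊤ : ℕ∞) χ) {K : Set E3} (hK : IsCompact K) (hKS : K ⊆ S2)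
    (hχK : ∀ y ∈ S2, y ∉ K → χ y = 0) (hχ1 : ∀ᶠ y in nhds (B 2), χ y = 1)
    {p : E3} (hp : p ∈ S2) (hpK : p ∉ h '' K) :
    ENNReal.ofReal ‖pd 1 (um h B) 0‖ ≤
      ∫⁻ w, ENNReal.ofReal (‖dbar (Xc χ B) w‖ / Complex.normSq w) *
        ENNReal.ofReal ‖um h B w - p‖⁻¹ := by
  by_cases hz : pd 1 (um h B) 0 = 0
  · simp [hz]
  obtain ⟨T, hT⟩ := exists_frame hp
  have hX := Xc_contDiff hχ B
  have hUK : ∀ w, psi B w ∈ K → w ∈ Ufst h B T := by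
    intro w hw he
    apply hpK
    exact ⟨psi B w, hw, by rw [← um_eq (h := h) B, he, hT]⟩
  have hB2 : B 2 ∈ S2 := by rw [← psi_zero B]; exact psi_mem B 0
  have hxK : psi B 0 ∈ K := by
    by_contra hc
    have h1 := hχK _ (psi_mem B 0) hc
    rw [psi_zero] at h1
    have h2 := hχ1.self_of_nhds
    rw [h1] at h2
    norm_num at h2
  have h0U : (0:ℂ) ∈ Ufst h B T := hUK 0 hxK
  have hf1 := fst_norm hH h0U
  have hfne : pd 1 (fst h B T) 0 ≠ 0 := by
    intro h0
    rw [h0, norm_zero, mul_zero] at hf1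
    exact hz (norm_le_zero_iff.1 hf1)
  obtain ⟨g, V, hVo, hVU, h0V, hVcl, hgs, hgn, hg1, hgV⟩ := orient (Ufst_open B T hH.1.1) h0U
    (fun w hw => fst_contDiffAt hH hw) (fun w hw => fst_conf hH hw) (fun w hw => fst_lap hH hw) hfne
  classical
  set F : ℂ → ℂ := fun w => if w ∈ V then Xc χ B w * g w else 0 with hF
  have hFV : ∀ w ∈ V, F =ᶠ[nhds w] fun w => Xc χ B w * g w := by
    intro w hw
    filter_upwards [hVo.mem_nhds hw] with w' hw'
    simp [hF, hw']
  have hψc : Continuous (psi B) := (psi_contDiff B).continuous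
  have hXK : ∀ w, psi B w ∉ K → Xc χ B w = 0 := by
    intro w hw
    unfold Xc
    rw [hχK _ (psi_mem B w) hw]; simp
  have hFn : ∀ w, w ∉ V → F =ᶠ[nhds w] fun _ => 0 := by
    intro w hw
    by_cases hwU : w ∈ Ufst h B T
    · have : w ∉ closure V := fun hc => hw (hVcl w hwU hc)
      filter_upwards [isClosed_closure.isOpen_compl.mem_nhds this] with w' hw'
      have : w' ∉ V := fun hc => hw' (subset_closure hc)
      simp [hF, this]
    · have : psi B w ∉ K := fun hc => hwU (hUK w hc)
      filter_upwards [(hK.isClosed.isOpen_compl.preimage hψc).mem_nhds this] with w' hw'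
      simp [hF, hXK w' hw']
  have hFs : ContDiff ℝ (⊤ : ℕ∞) F := by
    rw [contDiff_iff_contDiffAt]
    intro w
    by_cases hw : w ∈ V
    · exact (hX.contDiffAt.mul (hgs w (hVU hw))).congr_of_eventuallyEq (hFV w hw)
    · exact contDiffAt_const.congr_of_eventuallyEq (hFn w hw)
  have hcont : ContinuousOn h K := hH.1.1.continuous.continuousOn
  have hhK : IsCompact (h '' K) := hK.image_of_continuousOn hcont
  obtain ⟨MX, hMX⟩ := isCompact_S2.exists_bound_of_continuousOn (hχ.continuous.continuousOn (s := S2))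
  have hMX0 : 0 ≤ MX := (norm_nonneg _).trans (hMX _ hB2)
  obtain ⟨ρ, hρ, hρb⟩ := Metric.isOpen_iff.1 hhK.isClosed.isOpen_compl p hpK
  have hgb : ∀ w ∈ V, ‖g w‖ ≤ 2 * ‖um h B w - p‖⁻¹ := by
    intro w hw
    rw [hgn, ← hT]; exact fst_bound hH (hVU hw)
  have hFb : ∀ w, ‖F w‖ ≤ MX * (2 * ρ⁻¹) := by
    intro w
    by_cases hw : w ∈ V
    · by_cases hwK : psi B w ∈ K
      · have h1 : ρ ≤ ‖um h B w - p‖ := by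
          by_contra hc
          push Not at hc
          have : um h B w ∈ ball p ρ := by rwa [mem_ball, dist_eq_norm]
          exact hρb this ⟨_, hwK, (um_eq B w).symm⟩
        have h2 : ‖g w‖ ≤ 2 * ρ⁻¹ := (hgb w hw).trans (by gcongr)
        have h3 : ‖Xc χ B w‖ ≤ MX := by
          unfold Xc; rw [Complex.norm_real]; exact hMX _ (psi_mem B w)
        simp only [hF, hw, if_true, norm_mul]
        gcongr
      · simp only [hF, hw, if_true, hXK w hwK, zero_mul, norm_zero]; positivity
    · simp only [hF, hw, if_false, norm_zero]; positivity
  have hX1 : Xc χ B =ᶠ[nhds 0] fun _ => 1 := by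
    have : Tendsto (psi B) (nhds 0) (nhds (B 2)) := by
      rw [← psi_zero B]; exact hψc.continuousAt
    filter_upwards [this.eventually hχ1] with w hw
    simp [Xc, hw]
  have hFg : F =ᶠ[nhds 0] g := by
    filter_upwards [hFV 0 h0V, hX1] with w h1 h2
    rw [h1, h2, one_mul]
  have hdb : ∀ w, ‖dbar F w‖ ≤ ‖dbar (Xc χ B) w‖ * (2 * ‖um h B w - p‖⁻¹) := by
    intro w
    by_cases hw : w ∈ V
    · rw [dbar_congr (hFV w hw), dbar_mul (cda_diff hX.contDiffAt) (cda_diff (hgs w (hVU hw)))]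
      have : dbar g w = 0 := hgV w hw
      rw [this, mul_zero, add_zero, norm_mul]
      gcongr
      exact hgb w hw
    · rw [dbar_congr (hFn w hw), dbar_const, norm_zero]; positivity
  have hol : ∀ᶠ w in nhds (0:ℂ), dbar F w = 0 := by
    filter_upwards [hX1.eventuallyEq_nhds, hVo.mem_nhds h0V] with w h1 h2
    have := hdb w
    rw [dbar_congr h1, dbar_const, norm_zero, zero_mul] at this
    exact norm_le_zero_iff.1 this
  obtain ⟨r, hr, hol⟩ := Metric.eventually_nhds_iff_ball.1 hol
  have hP := pompeiu hFs hFb hr hol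
  rw [pd_congr hFg, hg1] at hP
  have hpi := Real.pi_gt_three
  have h4 : ∀ w, ENNReal.ofReal (‖dbar F w‖ / Complex.normSq w) ≤
      2 * (ENNReal.ofReal (‖dbar (Xc χ B) w‖ / Complex.normSq w) * ENNReal.ofReal ‖um h B w - p‖⁻¹) := by
    intro w
    rw [← ENNReal.ofReal_mul (by have := Complex.normSq_nonneg w; positivity), two_mul_ofReal]
    apply ENNReal.ofReal_le_ofReal
    have := hdb w
    have h5 := Complex.normSq_nonneg w
    calc _ ≤ (‖dbar (Xc χ B) w‖ * (2 * ‖um h B w - p‖⁻¹)) / Complex.normSq w := by gcongr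
      _ = _ := by ring
  have h5 : 2 * ENNReal.ofReal ‖pd 1 (um h B) 0‖ ≤ ENNReal.ofReal (2 * π * ‖pd 1 (fst h B T) 0‖) := by
    rw [two_mul_ofReal]
    apply ENNReal.ofReal_le_ofReal
    nlinarith [norm_nonneg (pd 1 (fst h B T) 0)]
  have h6 := h5.trans (hP.trans (lintegral_mono h4))
  rw [lintegral_const_mul' _ _ (by simp)] at h6
  exact (ENNReal.mul_le_mul_iff_right (by simp) (by simp)).1 h6

lemma main_est {h : E3 → E3} (hH : IsHarmonicSphereMap h) (B : OrthonormalBasis (Fin 3) ℝ E3)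
    {χ : E3 → ℝ} (hχ : ContDiff ℝ (⊤ : ℕ∞) χ) {K : Set E3} (hK : IsCompact K) (hKS : K ⊆ S2)
    (hχK : ∀ y ∈ S2, y ∉ K → χ y = 0) (hχ1 : ∀ᶠ y in nhds (B 2), χ y = 1)
    (hvol : (μH[2] : Measure E3) (h '' K) ≤ ENNReal.ofReal (((μH[2] : Measure E3) S2).toReal / 2)) :
    ENNReal.ofReal (√(enDensity h (B 2))) ≤
      4096 * ∫⁻ w, ENNReal.ofReal (‖dbar (Xc χ B) w‖ / Complex.normSq w) := by
  have hhK : IsCompact (h '' K) := hK.image_of_continuousOn hH.1.1.continuous.continuousOn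
  have hfin : (μH[2] : Measure E3) S2 ≠ ⊤ := (haus_S2_le.trans_lt ENNReal.ofReal_lt_top).ne
  set σ := ((μH[2] : Measure E3) S2).toReal with hσ
  have hσe : (μH[2] : Measure E3) S2 = ENNReal.ofReal σ := (ENNReal.ofReal_toReal hfin).symm
  have hσ1 : 1 ≤ σ := by
    have := one_le_haus_S2
    rw [hσe] at this
    rw [← ENNReal.ofReal_one] at this
    exact (ENNReal.ofReal_le_ofReal_iff (by positivity)).1 this
  have hvol2 : ENNReal.ofReal (1 / 2) ≤ sphVol (S2 \ h '' K) := by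
    have h1 : sphVol (S2 \ h '' K) = (μH[2] : Measure E3) (S2 \ h '' K) := by
      unfold sphVol
      rw [Measure.restrict_apply (measurableSet_S2.diff hhK.measurableSet)]
      congr 1
      ext; simp; tauto
    rw [h1]
    refine le_trans ?_ (le_measure_sdiff)
    rw [hσe]
    refine le_trans ?_ (tsub_le_tsub_left hvol _)
    rw [← ENNReal.ofReal_sub _ (by positivity)]
    apply ENNReal.ofReal_le_ofReal
    linarith
  set φ : ℂ → ENNReal := fun w => ENNReal.ofReal (‖dbar (Xc χ B) w‖ / Complex.normSq w) with hφ
  have hφm : Measurable φ := by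
    have h1 := (dbar_continuous (Xc_contDiff hχ B)).norm.measurable
    exact (h1.div Complex.continuous_normSq.measurable).ennreal_ofReal
  have hum : Continuous (um h B) := continuous_iff_continuousAt.2 fun w =>
    (um_contDiffAt B hH.1.1 w).continuousAt
  have h1 : ENNReal.ofReal (1 / 2) * ENNReal.ofReal ‖pd 1 (um h B) 0‖ ≤
      ∫⁻ p, (∫⁻ w, φ w * ENNReal.ofReal ‖um h B w - p‖⁻¹) ∂sphVol := by
    calc _ ≤ ENNReal.ofReal ‖pd 1 (um h B) 0‖ * sphVol (S2 \ h '' K) := by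
          rw [mul_comm]; gcongr
      _ = ∫⁻ p in S2 \ h '' K, ENNReal.ofReal ‖pd 1 (um h B) 0‖ ∂sphVol := by
          rw [setLIntegral_const]
      _ ≤ ∫⁻ p in S2 \ h '' K, (∫⁻ w, φ w * ENNReal.ofReal ‖um h B w - p‖⁻¹) ∂sphVol :=
          setLIntegral_mono' (measurableSet_S2.diff hhK.measurableSet) fun p hp =>
            point_est hH B hχ hK hKS hχK hχ1 hp.1 hp.2
      _ ≤ _ := setLIntegral_le_lintegral _ _
  rw [lintegral_lintegral_swap] at h1
  · have h2 : ∫⁻ w, ∫⁻ p, φ w * ENNReal.ofReal ‖um h B w - p‖⁻¹ ∂sphVol ≤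
        (∫⁻ w, φ w) * ENNReal.ofReal 2048 := by
      rw [← lintegral_mul_const _ hφm]
      refine lintegral_mono fun w => ?_
      rw [lintegral_const_mul]
      · gcongr
        have : um h B w ∈ S2 := by rw [um_eq]; exact hH.1.2 _ (psi_mem B w)
        exact potential_bound _ this
      · exact ((measurable_const.sub measurable_id).norm.inv).ennreal_ofReal
    have h3 := h1.trans h2
    have h4 : √(enDensity h (B 2)) ≤ ‖pd 1 (um h B) 0‖ := by
      have := um_en' B hH 0
      rw [psi_zero, show lam 0 = 2 by simp [lam]] at this
      rw [Real.sqrt_le_left (norm_nonneg _)]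
      have h5 := enDensity_nonneg h (B 2)
      linarith
    calc _ ≤ ENNReal.ofReal ‖pd 1 (um h B) 0‖ := ENNReal.ofReal_le_ofReal h4
      _ = 2 * (ENNReal.ofReal (1 / 2) * ENNReal.ofReal ‖pd 1 (um h B) 0‖) := two_half_ofReal _
      _ ≤ 2 * ((∫⁻ w, φ w) * ENNReal.ofReal 2048) := by gcongr
      _ = _ := two_mul_2048 _
  · refine Measurable.aemeasurable ?_
    refine (hφm.comp measurable_snd).mul ?_
    have : Measurable fun q : E3 × ℂ => um h B q.2 - q.1 :=
      ((hum.comp continuous_snd).sub continuous_fst).measurable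
    exact this.norm.inv.ennreal_ofReal

/-! ### Area of caps in stereographic coordinates -/

lemma lam_eq_add (B : OrthonormalBasis (Fin 3) ℝ E3) (w : ℂ) :
    ‖psi B w + B 2‖ ^ 2 = 2 * lam w := by
  rw [norm_psi_add_sq]; unfold lam; ring

lemma lam_eq_sub (B : OrthonormalBasis (Fin 3) ℝ E3) (w : ℂ) :
    ‖psi B w - B 2‖ ^ 2 = 2 * lam w * Complex.normSq w := by
  rw [norm_psi_sub_base_sq, Complex.normSq_eq_norm_sq]; unfold lam
  rw [Complex.normSq_eq_norm_sq]; ring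

lemma vol_closedBall_le (c : ℂ) {r : ℝ} (hr : 0 ≤ r) :
    volume (closedBall c r) ≤ ENNReal.ofReal (4 * r ^ 2) := by
  rw [Complex.volume_closedBall]
  have : (NNReal.pi : ENNReal) ≤ ENNReal.ofReal 4 := by
    rw [← ENNReal.ofReal_coe_nnreal]
    exact ENNReal.ofReal_le_ofReal (by simpa using Real.pi_le_four)
  calc _ ≤ ENNReal.ofReal r ^ 2 * ENNReal.ofReal 4 := by gcongr
    _ = _ := by
      rw [← ENNReal.ofReal_pow hr, ← ENNReal.ofReal_mul (by positivity)]; congr 1; ring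

lemma lam_continuous : Continuous lam := by
  unfold lam
  exact continuous_const.div (continuous_const.add Complex.continuous_normSq)
    fun w => (one_add_normSq_pos w).ne'

lemma lam_tail {s : ℝ} (hs : 0 < s) :
    ∫⁻ w in {w | lam w ≤ s}, ENNReal.ofReal (lam w ^ 2) ≤ ENNReal.ofReal (32 * s) := by
  set T : ℕ → Set ℂ := fun n => {w | s * (1 / 2) ^ (n + 1) < lam w ∧ lam w ≤ s * (1 / 2) ^ n} with hT
  have hsub : {w | lam w ≤ s} ⊆ ⋃ n, T n := by
    intro w hw
    have h0 := lam_pos w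
    obtain ⟨n, h1, h2⟩ := exists_nat_pow_near_of_lt_one (x := lam w / s) (y := 1 / 2)
      (by positivity) ((div_le_one hs).2 hw) (by norm_num) (by norm_num)
    refine mem_iUnion.2 ⟨n, ?_, ?_⟩
    · rw [lt_div_iff₀ hs] at h1; linarith
    · rw [div_le_iff₀ hs] at h2; linarith
  have hTm : ∀ n, MeasurableSet (T n) := fun n =>
    (measurableSet_lt measurable_const lam_continuous.measurable).inter
      (measurableSet_le lam_continuous.measurable measurable_const)
  have hTn : ∀ n, ∫⁻ w in T n, ENNReal.ofReal (lam w ^ 2) ≤ ENNReal.ofReal (16 * s * (1 / 2) ^ n) := by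
    intro n
    have hsub : T n ⊆ closedBall 0 (√(2 ^ (n + 2) / s)) := by
      intro w hw
      rw [mem_closedBall_zero_iff]
      apply Real.le_sqrt_of_sq_le
      have h1 := hw.1
      unfold lam at h1
      rw [lt_div_iff₀ (one_add_normSq_pos w), Complex.normSq_eq_norm_sq] at h1
      rw [le_div_iff₀ hs]
      have h2 : (1 / 2 : ℝ) ^ (n + 1) * 2 ^ (n + 1) = 1 := by rw [← mul_pow]; norm_num
      have h3 : (0:ℝ) < 2 ^ (n + 1) := by positivity
      have h4 := mul_lt_mul_of_pos_right h1 h3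
      have h5 : s * (1 / 2) ^ (n + 1) * (1 + ‖w‖ ^ 2) * 2 ^ (n + 1) = s * (1 + ‖w‖ ^ 2) := by
        linear_combination (s * (1 + ‖w‖ ^ 2)) * h2
      rw [h5] at h4
      have h6 : (2:ℝ) ^ (n + 2) = 2 * 2 ^ (n + 1) := by ring
      rw [h6]
      nlinarith
    calc _ ≤ ∫⁻ w in T n, ENNReal.ofReal ((s * (1 / 2) ^ n) ^ 2) := by
          refine setLIntegral_mono' (hTm n) fun w hw => ENNReal.ofReal_le_ofReal ?_
          have := hw.2
          have := lam_pos w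
          gcongr
      _ = ENNReal.ofReal ((s * (1 / 2) ^ n) ^ 2) * volume (T n) := by rw [setLIntegral_const]
      _ ≤ ENNReal.ofReal ((s * (1 / 2) ^ n) ^ 2) * ENNReal.ofReal (4 * (√(2 ^ (n + 2) / s)) ^ 2) := by
          gcongr; exact (measure_mono hsub).trans (vol_closedBall_le 0 (by positivity))
      _ = _ := by
          rw [← ENNReal.ofReal_mul (by positivity)]; congr 1
          rw [Real.sq_sqrt (by positivity)]
          have h2 : (1 / 2 : ℝ) ^ n * 2 ^ n = 1 := by rw [← mul_pow]; norm_num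
          rw [pow_add]
          field_simp
          linear_combination 16 * h2
  calc _ ≤ ∫⁻ w in ⋃ n, T n, ENNReal.ofReal (lam w ^ 2) := lintegral_mono_set hsub
    _ ≤ ∑' n, ∫⁻ w in T n, ENNReal.ofReal (lam w ^ 2) := lintegral_iUnion_le _ _
    _ ≤ ∑' n, ENNReal.ofReal (16 * s * (1 / 2) ^ n) := ENNReal.tsum_le_tsum hTn
    _ = ENNReal.ofReal (∑' n : ℕ, 16 * s * (1 / 2) ^ n) :=
        (ENNReal.ofReal_tsum_of_nonneg (fun n => by positivity)
          (summable_geometric_two.mul_left _)).symm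
    _ = _ := by rw [tsum_mul_left, tsum_geometric_two]; congr 1; ring

lemma cap_area (B : OrthonormalBasis (Fin 3) ℝ E3) (z : E3) {ρ : ℝ} (hρ : 0 < ρ) :
    ∫⁻ w in {w | ‖psi B w - z‖ ≤ ρ}, ENNReal.ofReal (lam w ^ 2) ≤ ENNReal.ofReal (1296 * ρ ^ 2) := by
  set τ := ‖z + B 2‖ with hτ
  have hm : MeasurableSet {w | ‖psi B w - z‖ ≤ ρ} :=
    measurableSet_le (((psi_contDiff B).continuous.sub continuous_const).norm.measurable) measurable_const
  by_cases hc : 2 * ρ ≤ τ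
  · have hτ0 : 0 < τ := by linarith
    rcases eq_empty_or_nonempty {w | ‖psi B w - z‖ ≤ ρ} with he | ⟨v, hv⟩
    · rw [he]; simp
    have hb : ∀ w, ‖psi B w - z‖ ≤ ρ → lam w ≤ 9 / 8 * τ ^ 2 ∧ τ ^ 2 / 8 ≤ lam w := by
      intro w hw
      have h1 := lam_eq_add B w
      have h2 : ‖psi B w + B 2‖ ≤ 3 / 2 * τ := by
        have : psi B w + B 2 = (psi B w - z) + (z + B 2) := by abel
        rw [this]; refine (norm_add_le _ _).trans ?_
        linarith
      have h3 : τ / 2 ≤ ‖psi B w + B 2‖ := by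
        have : z + B 2 = (psi B w + B 2) - (psi B w - z) := by abel
        have h4 := norm_sub_le (psi B w + B 2) (psi B w - z)
        rw [← this] at h4
        linarith
      constructor <;> nlinarith [norm_nonneg (psi B w + B 2)]
    have hsub : {w | ‖psi B w - z‖ ≤ ρ} ⊆ closedBall v (16 * ρ / τ ^ 2) := by
      intro w hw
      rw [mem_closedBall, dist_eq_norm]
      refine abs_le_of_sq_le_sq' ?_ (by positivity) |>.2
      have h1 := norm_psi_sub_sq B w v
      have e : 4 * ‖w - v‖ ^ 2 / ((1 + Complex.normSq w) * (1 + Complex.normSq v)) =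
        lam w * lam v * ‖w - v‖ ^ 2 := by
        have := one_add_normSq_pos w
        have := one_add_normSq_pos v
        unfold lam; field_simp; ring
      rw [e] at h1
      have h2 : ‖psi B w - psi B v‖ ≤ 2 * ρ := by
        have : psi B w - psi B v = (psi B w - z) - (psi B v - z) := by abel
        rw [this]; refine (norm_sub_le _ _).trans ?_
        have : ‖psi B w - z‖ ≤ ρ := hw
        have : ‖psi B v - z‖ ≤ ρ := hv
        linarith
      have h3 : ‖psi B w - psi B v‖ ^ 2 ≤ (2 * ρ) ^ 2 := by gcongr
      have h4 : (τ ^ 2 / 8) * (τ ^ 2 / 8) ≤ lam w * lam v :=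
        mul_le_mul (hb w hw).2 (hb v hv).2 (by positivity) (lam_pos w).le
      have h5 : (τ ^ 2 / 8) * (τ ^ 2 / 8) * ‖w - v‖ ^ 2 ≤ (2 * ρ) ^ 2 :=
        (mul_le_mul_of_nonneg_right h4 (sq_nonneg _)).trans (h1 ▸ h3)
      rw [div_pow, le_div_iff₀ (by positivity)]
      nlinarith
    calc _ ≤ ∫⁻ w in {w | ‖psi B w - z‖ ≤ ρ}, ENNReal.ofReal ((9 / 8 * τ ^ 2) ^ 2) := by
          refine setLIntegral_mono' hm fun w hw => ENNReal.ofReal_le_ofReal ?_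
          have := (hb w hw).1
          have := lam_pos w
          gcongr
      _ = ENNReal.ofReal ((9 / 8 * τ ^ 2) ^ 2) * volume {w | ‖psi B w - z‖ ≤ ρ} := by
          rw [setLIntegral_const]
      _ ≤ ENNReal.ofReal ((9 / 8 * τ ^ 2) ^ 2) * ENNReal.ofReal (4 * (16 * ρ / τ ^ 2) ^ 2) := by
          gcongr; exact (measure_mono hsub).trans (vol_closedBall_le v (by positivity))
      _ = _ := by
          rw [← ENNReal.ofReal_mul (by positivity)]; congr 1
          field_simp; norm_num
  · push Not at hc
    have hsub : {w | ‖psi B w - z‖ ≤ ρ} ⊆ {w | lam w ≤ 9 / 2 * ρ ^ 2} := by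
      intro w hw
      have h1 := lam_eq_add B w
      have hw' : ‖psi B w - z‖ ≤ ρ := hw
      have h2 : ‖psi B w + B 2‖ ≤ 3 * ρ := by
        have : psi B w + B 2 = (psi B w - z) + (z + B 2) := by abel
        rw [this]; refine (norm_add_le _ _).trans ?_
        linarith
      show lam w ≤ _
      nlinarith [norm_nonneg (psi B w + B 2)]
    refine (lintegral_mono_set hsub).trans ((lam_tail (by positivity)).trans ?_)
    apply ENNReal.ofReal_le_ofReal
    nlinarith [sq_nonneg ρ]

/-! ### The weighted gradient integral -/

lemma grad_int (B : OrthonormalBasis (Fin 3) ℝ E3) {q : E3 → ℝ} {z : E3} {A D G : ℝ}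
    (hA : 0 < A) (hD : 0 < D) (hG : 0 ≤ G)
    (hq : ∀ y ∈ S2, q y ≤ G) (hs : ∀ y ∈ S2, q y ≠ 0 → ‖y - z‖ ≤ A ∧ D ≤ ‖y - B 2‖) :
    ∫⁻ w, ENNReal.ofReal (q (psi B w) * lam w / Complex.normSq w) ≤
      ENNReal.ofReal (2592 * (G * A ^ 2 / D ^ 2)) := by
  have hm : MeasurableSet {w | ‖psi B w - z‖ ≤ A} :=
    measurableSet_le (((psi_contDiff B).continuous.sub continuous_const).norm.measurable) measurable_const
  calc _ ≤ ∫⁻ w in {w | ‖psi B w - z‖ ≤ A}, ENNReal.ofReal (2 * G / D ^ 2) * ENNReal.ofReal (lam w ^ 2) := by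
        rw [← lintegral_indicator hm]
        refine lintegral_mono fun w => ?_
        by_cases h0 : q (psi B w) = 0
        · simp [h0]
        obtain ⟨h1, h2⟩ := hs _ (psi_mem B w) h0
        rw [indicator_of_mem (show w ∈ {w | ‖psi B w - z‖ ≤ A} from h1),
          ← ENNReal.ofReal_mul (by positivity)]
        apply ENNReal.ofReal_le_ofReal
        have h3 := lam_eq_sub B w
        have hl := lam_pos w
        have hD2 : D ^ 2 ≤ 2 * lam w * Complex.normSq w := by rw [← h3]; gcongr
        have hn : 0 < Complex.normSq w := by
          by_contra hc
          push Not at hc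
          have : 0 < D ^ 2 := by positivity
          nlinarith
        rw [div_le_iff₀ hn]
        have h4 : q (psi B w) * lam w ≤ G * lam w := by
          gcongr; exact hq _ (psi_mem B w)
        refine h4.trans ?_
        have : 2 * G / D ^ 2 * lam w ^ 2 * Complex.normSq w =
          G * lam w * ((2 * lam w * Complex.normSq w) / D ^ 2) := by ring
        rw [this]
        exact le_mul_of_one_le_right (by positivity) ((one_le_div (by positivity)).2 hD2)
    _ = ENNReal.ofReal (2 * G / D ^ 2) * ∫⁻ w in {w | ‖psi B w - z‖ ≤ A}, ENNReal.ofReal (lam w ^ 2) := by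
        rw [lintegral_const_mul' _ _ ENNReal.ofReal_ne_top]
    _ ≤ ENNReal.ofReal (2 * G / D ^ 2) * ENNReal.ofReal (1296 * A ^ 2) := by
        gcongr; exact cap_area B z hA
    _ = _ := by
        rw [← ENNReal.ofReal_mul (by positivity)]; congr 1; ring

lemma dbar_Xc_le (B : OrthonormalBasis (Fin 3) ℝ E3) {χ : E3 → ℝ} (hχ : ContDiff ℝ (⊤ : ℕ∞) χ) (w : ℂ) :
    ‖dbar (Xc χ B) w‖ ≤ 2 * (‖fderiv ℝ χ (psi B w)‖ * lam w) := by
  have h1 : ∀ v : ℂ, ‖v‖ = 1 → ‖pd v (Xc χ B) w‖ ≤ ‖fderiv ℝ χ (psi B w)‖ * lam w := by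
    intro v hv
    have hd : HasFDerivAt (Xc χ B) (Complex.ofRealCLM.comp
        ((fderiv ℝ χ (psi B w)).comp (fderiv ℝ (psi B) w))) w := by
      refine Complex.ofRealCLM.hasFDerivAt.comp w (HasFDerivAt.comp w ?_ ?_)
      · exact (hχ.differentiable (by simp) _).hasFDerivAt
      · exact (cda_diff (psi_contDiff B).contDiffAt).hasFDerivAt
    unfold pd
    rw [hd.fderiv]
    simp only [ContinuousLinearMap.comp_apply, Complex.ofRealCLM_apply, Complex.norm_real]
    refine (ContinuousLinearMap.le_opNorm _ _).trans ?_
    rw [psi_conf, hv, mul_one]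
  unfold dbar
  refine (norm_add_le _ _).trans ?_
  rw [norm_mul, Complex.norm_I, one_mul]
  linarith [h1 1 (by simp), h1 Complex.I (by simp)]

/-- The estimate for a product of finitely many cutoffs. -/
lemma main_est2 {ι : Type} [Fintype ι] {h : E3 → E3} (hH : IsHarmonicSphereMap h) {x : E3}
    (hx : x ∈ S2) {χ : ι → E3 → ℝ} (hχ : ∀ i, ContDiff ℝ (⊤ : ℕ∞) (χ i))
    (hχ0 : ∀ i y, 0 ≤ χ i y ∧ χ i y ≤ 1)
    {K : Set E3} (hK : IsCompact K) (hKS : K ⊆ S2)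
    (hχK : ∀ y ∈ S2, y ∉ K → ∃ i, χ i y = 0) (hχ1 : ∀ i, ∀ᶠ y in nhds x, χ i y = 1)
    (hvol : (μH[2] : Measure E3) (h '' K) ≤ ENNReal.ofReal (((μH[2] : Measure E3) S2).toReal / 2))
    {z : ι → E3} {A D G : ι → ℝ} (hA : ∀ i, 0 < A i) (hD : ∀ i, 0 < D i) (hG : ∀ i, 0 ≤ G i)
    (hq : ∀ i, ∀ y ∈ S2, ‖fderiv ℝ (χ i) y‖ ≤ G i)
    (hs : ∀ i, ∀ y ∈ S2, fderiv ℝ (χ i) y ≠ 0 → ‖y - z i‖ ≤ A i ∧ D i ≤ ‖y - x‖) :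
    √(enDensity h x) ≤ 4096 * 2 * 2592 * ∑ i, G i * A i ^ 2 / D i ^ 2 := by
  classical
  obtain ⟨B, hB⟩ := exists_frame hx
  subst hB
  set X : E3 → ℝ := fun y => ∏ i, χ i y with hX
  have hXs : ContDiff ℝ (⊤ : ℕ∞) X := contDiff_prod fun i _ => hχ i
  have h1 := main_est hH B hXs hK hKS (fun y hy hyK => by
      obtain ⟨i, hi⟩ := hχK y hy hyK
      exact Finset.prod_eq_zero (Finset.mem_univ i) hi)
    (by
      filter_upwards [eventually_all.2 hχ1] with y hy
      simp [hX, hy]) hvol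
  have hfd : ∀ y, ‖fderiv ℝ X y‖ ≤ ∑ i, ‖fderiv ℝ (χ i) y‖ := by
    intro y
    have := HasFDerivAt.finsetProd (u := Finset.univ) (g := χ) (x := y)
      (fun i _ => ((hχ i).differentiable (by simp) y).hasFDerivAt)
    have h2 : fderiv ℝ X y = _ := this.fderiv
    rw [h2]
    refine (norm_sum_le _ _).trans (Finset.sum_le_sum fun i _ => ?_)
    rw [norm_smul]
    refine mul_le_of_le_one_left (norm_nonneg _) ?_
    rw [Real.norm_of_nonneg (Finset.prod_nonneg fun j _ => (hχ0 j y).1)]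
    exact Finset.prod_le_one (fun j _ => (hχ0 j y).1) fun j _ => (hχ0 j y).2
  have h2 : ∫⁻ w, ENNReal.ofReal (‖dbar (Xc X B) w‖ / Complex.normSq w) ≤
      ENNReal.ofReal (2 * ∑ i, 2592 * (G i * A i ^ 2 / D i ^ 2)) := by
    calc _ ≤ ∫⁻ w, 2 * ∑ i, ENNReal.ofReal (‖fderiv ℝ (χ i) (psi B w)‖ * lam w / Complex.normSq w) := by
          refine lintegral_mono fun w => ?_
          have hn := Complex.normSq_nonneg w
          have hl := lam_pos w
          rw [← ENNReal.ofReal_sum_of_nonneg (fun i _ => by positivity), two_mul_ofReal]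
          apply ENNReal.ofReal_le_ofReal
          rw [← Finset.sum_div, ← Finset.sum_mul, ← mul_div_assoc]
          gcongr
          refine (dbar_Xc_le B hXs w).trans ?_
          gcongr
          exact hfd _
      _ = 2 * ∑ i, ∫⁻ w, ENNReal.ofReal (‖fderiv ℝ (χ i) (psi B w)‖ * lam w / Complex.normSq w) := by
          rw [lintegral_const_mul' _ _ (by simp), lintegral_finsetSum]
          intro i _
          refine Measurable.ennreal_ofReal ?_
          refine Measurable.div (Continuous.measurable ?_) Complex.continuous_normSq.measurable
          exact ((((hχ i).continuous_fderiv (by simp)).comp (psi_contDiff B).continuous).norm).mul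
            lam_continuous
      _ ≤ 2 * ∑ i, ENNReal.ofReal (2592 * (G i * A i ^ 2 / D i ^ 2)) := by
          gcongr with i _
          exact grad_int B (q := fun y => ‖fderiv ℝ (χ i) y‖) (hA i) (hD i) (hG i) (hq i)
            fun y hy hne => hs i y hy (norm_ne_zero_iff.1 hne)
      _ = _ := by
          rw [← ENNReal.ofReal_sum_of_nonneg, two_mul_ofReal]
          intro i _
          have := hG i
          positivity
  have h3 : (4096 : ENNReal) = ENNReal.ofReal 4096 := by norm_num
  have h4 := h1.trans (mul_le_mul_right h2 4096)
  have h5 : (4096 : ENNReal) * ENNReal.ofReal (2 * ∑ i, 2592 * (G i * A i ^ 2 / D i ^ 2)) =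
      ENNReal.ofReal (4096 * (2 * ∑ i, 2592 * (G i * A i ^ 2 / D i ^ 2))) := by
    rw [ENNReal.ofReal_mul (p := 4096) (by norm_num), ← h3]
  rw [h5, ENNReal.ofReal_le_ofReal_iff] at h4
  · refine h4.trans (le_of_eq ?_)
    rw [← Finset.mul_sum]; ring
  · have : 0 ≤ ∑ i, 2592 * (G i * A i ^ 2 / D i ^ 2) := Finset.sum_nonneg fun i _ => by
      have := hG i
      positivity
    positivity

/-! ### Lower bounds for the conformal factor -/

lemma exists_orth (x p : E3) : ∃ v : E3, v ≠ 0 ∧ ⟪x, v⟫ = 0 ∧ ⟪p, v⟫ = 0 := by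
  set f : E3 →ₗ[ℝ] ℝ × ℝ := ((innerSL ℝ x : E3 →L[ℝ] ℝ) : E3 →ₗ[ℝ] ℝ).prod
    ((innerSL ℝ p : E3 →L[ℝ] ℝ) : E3 →ₗ[ℝ] ℝ) with hf
  have h1 : LinearMap.ker f ≠ ⊥ := LinearMap.ker_ne_bot_of_finrank_lt (by simp)
  obtain ⟨v, hv, hv0⟩ := Submodule.exists_mem_ne_zero_of_ne_bot h1
  refine ⟨v, hv0, ?_, ?_⟩
  · have := congrArg Prod.fst (LinearMap.mem_ker.1 hv); simpa [hf] using this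
  · have := congrArg Prod.snd (LinearMap.mem_ker.1 hv); simpa [hf] using this

lemma norm_map_deriv {x v : E3} (hx : x ∈ S2) (hv : ⟪x, v⟫ = 0) :
    DifferentiableAt ℝ (fun y : E3 => ‖y‖⁻¹ • y) x ∧ fderiv ℝ (fun y : E3 => ‖y‖⁻¹ • y) x v = v := by
  have hx1 : ‖x‖ = 1 := by simpa [S2] using hx
  have hx0 : x ≠ 0 := S2_ne_zero hx
  have hn : DifferentiableAt ℝ (fun y : E3 => ‖y‖) x := (contDiffAt_norm ℝ hx0 (n := 1)).differentiableAt (by simp)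
  have hsq : fderiv ℝ (fun y : E3 => ‖y‖ ^ 2) x v = 0 := by
    have := (hasStrictFDerivAt_norm_sq (F := E3) x).hasFDerivAt.fderiv
    rw [this]
    simp [hv]
  have hn0 : fderiv ℝ (fun y : E3 => ‖y‖) x v = 0 := by
    have h1 := (hn.hasFDerivAt.pow 2).fderiv
    have h2 : fderiv ℝ (fun y : E3 => ‖y‖ ^ 2) x v = 2 * fderiv ℝ (fun y : E3 => ‖y‖) x v := by
      rw [h1]; simp [hx1]
    linarith
  have hi : HasFDerivAt (fun y : E3 => ‖y‖⁻¹) (-(‖x‖ ^ 2)⁻¹ • fderiv ℝ (fun y : E3 => ‖y‖) x) x := by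
    exact (hasDerivAt_inv (norm_ne_zero_iff.2 hx0)).comp_hasFDerivAt x hn.hasFDerivAt
  have h3 := hi.smul (hasFDerivAt_id x)
  refine ⟨h3.differentiableAt, ?_⟩
  have h4 : fderiv ℝ (fun y : E3 => ‖y‖⁻¹ • y) x = _ := h3.fderiv
  rw [h4]
  simp [hx1, hn0]

lemma S2_inner {x z : E3} (hx : x ∈ S2) (hz : z ∈ S2) :
    ‖x - z‖ ^ 2 = 2 - 2 * ⟪x, z⟫ ∧ ‖x + z‖ ^ 2 = 2 + 2 * ⟪x, z⟫ := by
  have hx1 : ‖x‖ = 1 := by simpa [S2] using hx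
  have hz1 : ‖z‖ = 1 := by simpa [S2] using hz
  constructor
  · rw [norm_sub_sq_real, hx1, hz1]; ring
  · rw [norm_add_sq_real, hx1, hz1]; ring

lemma rho_lower {x z : E3} (hx : x ∈ S2) (hz : z ∈ S2) {R : ℝ} (hR : 0 < R) (hR2 : R < π / 2) :
    0 < tan (R / 2) ^ 2 * ‖x + z‖ ^ 2 + ‖x - z‖ ^ 2 ∧
    (4 * tan (R / 2) / (tan (R / 2) ^ 2 * ‖x + z‖ ^ 2 + ‖x - z‖ ^ 2)) ^ 2 ≤ 2 * rhoSq z R x := by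
  set τ := tan (R / 2) with hτ
  have hτ0 : 0 < τ := tan_pos_of_pos_of_lt_pi_div_two (by linarith) (by linarith)
  obtain ⟨hm, hp⟩ := S2_inner hx hz
  have hm0 := sq_nonneg ‖x - z‖
  have hp0 := sq_nonneg ‖x + z‖
  have hpos : 0 < τ ^ 2 * ‖x + z‖ ^ 2 + ‖x - z‖ ^ 2 := by
    rcases hp0.eq_or_lt with h | h
    · have : 0 < ‖x - z‖ ^ 2 := by linarith
      positivity
    · positivity
  refine ⟨hpos, ?_⟩
  obtain ⟨v, hv0, hxv, hzv⟩ := exists_orth x z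
  set t := ⟪x, z⟫ with ht
  set Dn := (1 + t) + (τ⁻¹) ^ 2 * (1 - t) with hDn
  have hDe : Dn = (τ ^ 2 * ‖x + z‖ ^ 2 + ‖x - z‖ ^ 2) / (2 * τ ^ 2) := by
    rw [hDn, hm, hp]; field_simp
  have hD0 : 0 < Dn := by rw [hDe]; positivity
  have hd : DifferentiableAt ℝ (mobius z τ⁻¹) x := by
    have key : ∀ f : E3 → ℝ, DifferentiableAt ℝ f x → f x = t → DifferentiableAt ℝ (fun y =>
        ((1 + f y) + (τ⁻¹) ^ 2 * (1 - f y))⁻¹ •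
          (((1 + f y) - (τ⁻¹) ^ 2 * (1 - f y)) • z + (2 * τ⁻¹) • (y - f y • z))) x := by
      intro f hf hft
      have h1 : DifferentiableAt ℝ (fun y => (1 + f y) + (τ⁻¹) ^ 2 * (1 - f y)) x := by fun_prop
      have h2 : DifferentiableAt ℝ (fun y =>
          ((1 + f y) - (τ⁻¹) ^ 2 * (1 - f y)) • z + (2 * τ⁻¹) • (y - f y • z)) x := by fun_prop
      exact (h1.inv (by rw [hft]; exact hD0.ne')).smul h2
    exact key (fun y => ⟪y, z⟫) (differentiableAt_id.inner ℝ (differentiableAt_const z)) rfl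
  have hdv : fderiv ℝ (mobius z τ⁻¹) x v = (Dn⁻¹ * (2 * τ⁻¹)) • v := by
    have hl : HasDerivAt (fun s : ℝ => x + s • v) v 0 := by
      simpa using ((hasDerivAt_id (0:ℝ)).smul_const v).const_add x
    have h1 : HasDerivAt (fun s : ℝ => mobius z τ⁻¹ (x + s • v)) (fderiv ℝ (mobius z τ⁻¹) x v) 0 := by
      have : HasFDerivAt (mobius z τ⁻¹) (fderiv ℝ (mobius z τ⁻¹) x) (x + (0:ℝ) • v) := by
        simpa using hd.hasFDerivAt
      exact this.comp_hasDerivAt 0 hl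
    have h2 : (fun s : ℝ => mobius z τ⁻¹ (x + s • v)) = fun s : ℝ =>
        Dn⁻¹ • (((1 + t) - (τ⁻¹) ^ 2 * (1 - t)) • z + (2 * τ⁻¹) • ((x + s • v) - t • z)) := by
      funext s
      have : ⟪x + s • v, z⟫ = t := by
        rw [inner_add_left, inner_smul_left, real_inner_comm z v, hzv, mul_zero, add_zero]
      unfold mobius
      rw [this]
    rw [h2] at h1
    have h3 : HasDerivAt (fun s : ℝ =>
        Dn⁻¹ • (((1 + t) - (τ⁻¹) ^ 2 * (1 - t)) • z + (2 * τ⁻¹) • ((x + s • v) - t • z)))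
        (Dn⁻¹ • ((2 * τ⁻¹) • v)) 0 := by
      exact (((hl.sub_const (t • z)).const_smul (2 * τ⁻¹)).const_add
        (((1 + t) - (τ⁻¹) ^ 2 * (1 - t)) • z)).const_smul Dn⁻¹
    rw [h1.unique h3, smul_smul]
  have hfd : fderiv ℝ (homExt (mobius z τ⁻¹)) x v = (Dn⁻¹ * (2 * τ⁻¹)) • v := by
    obtain ⟨hn, hnv⟩ := norm_map_deriv hx hxv
    have hx1 : ‖x‖⁻¹ • x = x := by
      have : ‖x‖ = 1 := by simpa [S2] using hx
      simp [this]
    have hd' : DifferentiableAt ℝ (mobius z τ⁻¹) (‖x‖⁻¹ • x) := by rwa [hx1]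
    have := fderiv_comp (f := fun y : E3 => ‖y‖⁻¹ • y) x hd' hn
    have e : homExt (mobius z τ⁻¹) = (mobius z τ⁻¹) ∘ fun y : E3 => ‖y‖⁻¹ • y := rfl
    rw [e, this, ContinuousLinearMap.comp_apply, hnv, hx1, hdv]
  have hb := hs_bound (fderiv ℝ (homExt (mobius z τ⁻¹)) x) v
  rw [hfd, norm_smul, mul_pow, Real.norm_eq_abs, sq_abs] at hb
  have hv2 : 0 < ‖v‖ ^ 2 := by positivity
  have h5 := le_of_mul_le_mul_right hb hv2
  have h6 : 2 * rhoSq z R x = ∑ i, ‖fderiv ℝ (homExt (mobius z τ⁻¹)) x (e3 i)‖ ^ 2 := by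
    unfold rhoSq confSq enDensity mobiusDil
    rw [if_pos hR2]; ring
  rw [h6]
  refine le_trans (le_of_eq ?_) h5
  congr 1
  rw [hDe]; field_simp; norm_num

lemma rhoSq_nonneg (z : E3) (R : ℝ) (x : E3) : 0 ≤ rhoSq z R x := by
  unfold rhoSq confSq
  split_ifs
  · have := enDensity_nonneg (mobiusDil z R) x
    positivity
  · norm_num

/-! ### Geodesic balls -/

lemma inner_mem {x z : E3} (hx : x ∈ S2) (hz : z ∈ S2) : -1 ≤ ⟪x, z⟫ ∧ ⟪x, z⟫ ≤ 1 := by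
  obtain ⟨hm, hp⟩ := S2_inner hx hz
  have hm0 := sq_nonneg ‖x - z‖
  have hp0 := sq_nonneg ‖x + z‖
  constructor <;> linarith

/-- the chordal radius -/
lemma norm_lt_of_mem {y z : E3} (hz : z ∈ S2) {R : ℝ} (hR0 : 0 ≤ R) (hR : R ≤ π) (hy : y ∈ gBall z R) :
    ‖y - z‖ < 2 * sin (R / 2) := by
  obtain ⟨hm, _⟩ := S2_inner hz hy.1
  have h1 : arccos ⟪z, y⟫ < R := hy.2
  have h2 : cos R < ⟪z, y⟫ := by
    have := cos_lt_cos_of_nonneg_of_le_pi (arccos_nonneg _) hR h1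
    rwa [cos_arccos (inner_mem hz hy.1).1 (inner_mem hz hy.1).2] at this
  have h3 : cos R = 1 - 2 * sin (R / 2) ^ 2 := by
    have := cos_sq' (R / 2)
    have h4 := cos_two_mul (R / 2)
    rw [show 2 * (R / 2) = R by ring] at h4
    linarith
  have hs : 0 ≤ sin (R / 2) := sin_nonneg_of_nonneg_of_le_pi (by linarith) (by linarith)
  rw [norm_sub_rev]
  refine lt_of_pow_lt_pow_left₀ 2 (by positivity) ?_
  rw [hm]; nlinarith

lemma gdist_le {x y : E3} (hx : x ∈ S2) (hy : y ∈ S2) : gdist x y ≤ 2 * ‖x - y‖ ∧ ‖x - y‖ ≤ gdist x y := by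
  obtain ⟨hm, _⟩ := S2_inner hx hy
  obtain ⟨i1, i2⟩ := inner_mem hx hy
  have hc := cos_arccos i1 i2
  have h0 := arccos_nonneg ⟪x, y⟫
  have hpi := arccos_le_pi ⟪x, y⟫
  unfold gdist
  set θ := arccos ⟪x, y⟫ with hθ
  have h3 : cos θ = 1 - 2 * sin (θ / 2) ^ 2 := by
    have := cos_sq' (θ / 2)
    have h4 := cos_two_mul (θ / 2)
    rw [show 2 * (θ / 2) = θ by ring] at h4
    linarith
  have hs : 0 ≤ sin (θ / 2) := sin_nonneg_of_nonneg_of_le_pi (by linarith) (by linarith)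
  have he : ‖x - y‖ = 2 * sin (θ / 2) := by
    have : ‖x - y‖ ^ 2 = (2 * sin (θ / 2)) ^ 2 := by rw [hm]; nlinarith
    exact (pow_left_inj₀ (norm_nonneg _) (by positivity) (by norm_num)).1 this
  constructor
  · have := mul_le_sin (x := θ / 2) (by linarith) (by linarith)
    have h4 : 1 / 2 ≤ 2 / π := by
      rw [div_le_div_iff₀ (by norm_num) pi_pos]; linarith [pi_le_four]
    have h5 : 1 / 2 * (θ / 2) ≤ 2 / π * (θ / 2) := by gcongr
    rw [he]; linarith
  · rw [he]
    have := sin_le (x := θ / 2) (by linarith)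
    linarith

lemma far_of_not_mem {x z : E3} (hx : x ∈ S2) (hz : z ∈ S2) {R : ℝ} (hR : 0 < R) (h : x ∉ gBall z (4 * R)) :
    R ≤ π / 4 ∧ 2 * (2 * sin (R / 2)) ≤ ‖x - z‖ := by
  have h1 : 4 * R ≤ arccos ⟪z, x⟫ := by
    by_contra hc
    exact h ⟨hx, not_le.1 hc⟩
  have h2 := arccos_le_pi ⟪z, x⟫
  have hR4 : R ≤ π / 4 := by linarith
  refine ⟨hR4, ?_⟩
  obtain ⟨hm, _⟩ := S2_inner hz hx
  have h3 : ⟪z, x⟫ ≤ cos (4 * R) := by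
    have := cos_le_cos_of_nonneg_of_le_pi (by positivity) h2 h1
    rwa [cos_arccos (inner_mem hz hx).1 (inner_mem hz hx).2] at this
  have h4 : cos (4 * R) = 2 * (2 * cos R ^ 2 - 1) ^ 2 - 1 := by
    rw [show 4 * R = 2 * (2 * R) by ring, cos_two_mul, cos_two_mul]
  have h5 : cos R = 1 - 2 * sin (R / 2) ^ 2 := by
    have := cos_sq' (R / 2)
    have h4 := cos_two_mul (R / 2)
    rw [show 2 * (R / 2) = R by ring] at h4
    linarith
  have h6 : √2 / 2 ≤ cos R := by
    rw [← cos_pi_div_four]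
    exact cos_le_cos_of_nonneg_of_le_pi hR.le (by linarith [pi_pos]) hR4
  have h7 : 0 < √2 := by positivity
  have h8 : √2 ^ 2 = 2 := Real.sq_sqrt (by norm_num)
  have h9 : 1 / 2 ≤ cos R ^ 2 := by nlinarith
  have hc1 := cos_le_one R
  rw [norm_sub_rev]
  refine le_of_sq_le_sq ?_ (norm_nonneg _)
  rw [hm]
  have h10 : (2 * (2 * sin (R / 2))) ^ 2 = 8 * (1 - cos R) := by rw [h5]; ring
  have h11 : 2 - 2 * cos (4 * R) = 16 * cos R ^ 2 * (1 + cos R) * (1 - cos R) := by rw [h4]; ring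
  have h12 : 1 / 2 ≤ cos R ^ 2 * (1 + cos R) := by nlinarith
  rw [h10]
  have : 8 * (1 - cos R) ≤ 16 * cos R ^ 2 * (1 + cos R) * (1 - cos R) := by
    have := mul_le_mul_of_nonneg_right h12 (by linarith : 0 ≤ 1 - cos R)
    linarith
  linarith

lemma hole_rho {x z : E3} (hx : x ∈ S2) (hz : z ∈ S2) {R : ℝ} (hR : 0 < R) (h : x ∉ gBall z (4 * R)) :
    (2 * sin (R / 2) / ‖x - z‖ ^ 2) ^ 2 ≤ 2 * rhoSq z R x := by
  obtain ⟨hR4, hf⟩ := far_of_not_mem hx hz hR h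
  obtain ⟨hpos, hr⟩ := rho_lower hx hz hR (by linarith [pi_pos])
  refine le_trans ?_ hr
  have hs : 0 < sin (R / 2) := sin_pos_of_pos_of_lt_pi (by linarith) (by linarith [pi_pos])
  have hxz : 0 < ‖x - z‖ := by linarith
  obtain ⟨hm, hp⟩ := S2_inner hx hz
  have hm0 := sq_nonneg ‖x - z‖
  have hcos : 1 / 2 ≤ cos (R / 2) := by
    rw [← cos_pi_div_three]
    exact cos_le_cos_of_nonneg_of_le_pi (by linarith) (by linarith [pi_pos]) (by linarith [pi_pos])
  have hc1 := cos_le_one (R / 2)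
  have ht1 : sin (R / 2) ≤ tan (R / 2) := by
    rw [tan_eq_sin_div_cos, le_div_iff₀ (by linarith)]; nlinarith
  have ht2 : tan (R / 2) ≤ 2 * sin (R / 2) := by
    rw [tan_eq_sin_div_cos, div_le_iff₀ (by linarith)]; nlinarith
  set τ := tan (R / 2) with hτ
  have hden : τ ^ 2 * ‖x + z‖ ^ 2 + ‖x - z‖ ^ 2 ≤ 2 * ‖x - z‖ ^ 2 := by
    have h1 : τ ^ 2 * ‖x + z‖ ^ 2 ≤ (2 * sin (R / 2)) ^ 2 * 4 := by
      have : ‖x + z‖ ^ 2 ≤ 4 := by linarith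
      have : 0 ≤ τ := by linarith
      gcongr
    have h2 : (2 * (2 * sin (R / 2))) ^ 2 ≤ ‖x - z‖ ^ 2 := by gcongr
    nlinarith
  have : 2 * sin (R / 2) / ‖x - z‖ ^ 2 ≤ 4 * τ / (τ ^ 2 * ‖x + z‖ ^ 2 + ‖x - z‖ ^ 2) := by
    rw [div_le_div_iff₀ (by positivity) hpos]
    nlinarith [mul_le_mul ht1 hden (by positivity) (by linarith)]
  gcongr

lemma outer_rho {x z : E3} (hz : z ∈ S2) {R d : ℝ} (hR : 0 < R) (hd : 0 < d)
    (h : x ∈ gBall z (d⁻¹ * R)) :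
    (1 / R) ^ 2 ≤ ((4 + (d⁻¹) ^ 2) ^ 2) * rhoSq z R x := by
  have hx : x ∈ S2 := h.1
  by_cases hR2 : R < π / 2
  · obtain ⟨hpos, hr⟩ := rho_lower hx hz hR hR2
    have hn : ‖x - z‖ ≤ d⁻¹ * R := by
      rw [norm_sub_rev]; exact (gdist_le hz hx).2.trans h.2.le
    obtain ⟨hm, hp⟩ := S2_inner hx hz
    have hm0 := sq_nonneg ‖x - z‖
    have hcos : 1 / 2 ≤ cos (R / 2) := by
      rw [← cos_pi_div_three]
      exact cos_le_cos_of_nonneg_of_le_pi (by linarith) (by linarith [pi_pos]) (by linarith [pi_pos])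
    have ht1 : R / 2 ≤ tan (R / 2) := le_tan (by linarith) (by linarith)
    have ht2 : tan (R / 2) ≤ R := by
      rw [tan_eq_sin_div_cos, div_le_iff₀ (by linarith)]
      have := sin_le (x := R / 2) (by linarith)
      nlinarith
    set τ := tan (R / 2) with hτ
    have hden : τ ^ 2 * ‖x + z‖ ^ 2 + ‖x - z‖ ^ 2 ≤ (4 + (d⁻¹) ^ 2) * R ^ 2 := by
      have h1 : τ ^ 2 * ‖x + z‖ ^ 2 ≤ R ^ 2 * 4 := by
        have : ‖x + z‖ ^ 2 ≤ 4 := by linarith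
        have : 0 ≤ τ := by linarith
        gcongr
      have h2 : ‖x - z‖ ^ 2 ≤ (d⁻¹ * R) ^ 2 := by gcongr
      nlinarith
    have hc : 0 < 4 + (d⁻¹) ^ 2 := by positivity
    have h3 : 2 / R ≤ (4 + (d⁻¹) ^ 2) * (4 * τ / (τ ^ 2 * ‖x + z‖ ^ 2 + ‖x - z‖ ^ 2)) := by
      rw [← mul_div_assoc, div_le_div_iff₀ hR hpos]
      nlinarith [mul_le_mul_of_nonneg_left ht1 (by positivity : 0 ≤ (4 + (d⁻¹) ^ 2) * R)]
    have h4 : (2 / R) ^ 2 ≤ ((4 + (d⁻¹) ^ 2) * (4 * τ / (τ ^ 2 * ‖x + z‖ ^ 2 + ‖x - z‖ ^ 2))) ^ 2 := by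
      gcongr
    rw [mul_pow] at h4
    have h5 := h4.trans (mul_le_mul_of_nonneg_left hr (sq_nonneg _))
    have h6 : (2 / R) ^ 2 = 4 * (1 / R) ^ 2 := by ring
    have h7 : 0 ≤ (4 + (d⁻¹) ^ 2) ^ 2 * rhoSq z R x := mul_nonneg (sq_nonneg _) (rhoSq_nonneg _ _ _)
    nlinarith
  · have h1 : rhoSq z R x = 1 := by unfold rhoSq; rw [if_neg hR2]
    rw [h1, mul_one]
    have h2 : 1 / R ≤ 1 := by
      rw [div_le_one hR]; linarith [pi_gt_three]
    have h3 : (1:ℝ) ≤ 4 + (d⁻¹) ^ 2 := by nlinarith [sq_nonneg d⁻¹]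
    have h4 : 1 / R ≤ 4 + (d⁻¹) ^ 2 := h2.trans h3
    gcongr

/-! ### Cutoff functions -/

lemma exists_trans_bound : ∃ K : ℝ, 0 < K ∧ ∀ t, ‖deriv Real.smoothTransition t‖ ≤ K := by
  have hc : Continuous (deriv Real.smoothTransition) :=
    (Real.smoothTransition.contDiff (n := 1)).continuous_deriv (by simp)
  obtain ⟨M, hM⟩ := (isCompact_Icc (a := (0:ℝ)) (b := 1)).exists_bound_of_continuousOn hc.continuousOn
  refine ⟨|M| + 1, by positivity, fun t => ?_⟩
  by_cases h0 : t < 0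
  · have : Real.smoothTransition =ᶠ[nhds t] fun _ => 0 := by
      filter_upwards [Iio_mem_nhds h0] with s hs
      exact Real.smoothTransition.zero_of_nonpos (le_of_lt hs)
    rw [this.deriv_eq]; simp; positivity
  by_cases h1 : 1 < t
  · have : Real.smoothTransition =ᶠ[nhds t] fun _ => 1 := by
      filter_upwards [Ioi_mem_nhds h1] with s hs
      exact Real.smoothTransition.one_of_one_le (le_of_lt hs)
    rw [this.deriv_eq]; simp; positivity
  · have := hM t ⟨not_lt.1 h0, not_lt.1 h1⟩
    linarith [le_abs_self M]

def KT : ℝ := exists_trans_bound.choose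
lemma KT_pos : 0 < KT := exists_trans_bound.choose_spec.1
lemma KT_bound (t : ℝ) : ‖deriv Real.smoothTransition t‖ ≤ KT := exists_trans_bound.choose_spec.2 t

/-- the basic radial cutoff -/
def cut (z : E3) (a : ℝ) (y : E3) : ℝ := Real.smoothTransition (‖y - z‖ ^ 2 / a ^ 2 - 1)

lemma cut_contDiff (z : E3) (a : ℝ) : ContDiff ℝ (⊤ : ℕ∞) (cut z a) := by
  unfold cut
  refine Real.smoothTransition.contDiff.comp ?_
  exact (((contDiff_id.sub contDiff_const).norm_sq ℝ).div_const _).sub contDiff_const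

lemma cut_mem (z : E3) (a : ℝ) (y : E3) : 0 ≤ cut z a y ∧ cut z a y ≤ 1 :=
  ⟨Real.smoothTransition.nonneg _, Real.smoothTransition.le_one _⟩

lemma cut_zero {z y : E3} {a : ℝ} (ha : 0 < a) (h : ‖y - z‖ ≤ a) : cut z a y = 0 := by
  apply Real.smoothTransition.zero_of_nonpos
  have : ‖y - z‖ ^ 2 ≤ a ^ 2 := by gcongr
  have := (div_le_one (by positivity : 0 < a ^ 2)).2 this
  linarith

lemma cut_one {z y : E3} {a : ℝ} (ha : 0 < a) (h : 3 / 2 * a ≤ ‖y - z‖) : cut z a y = 1 := by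
  apply Real.smoothTransition.one_of_one_le
  have : (3 / 2 * a) ^ 2 ≤ ‖y - z‖ ^ 2 := by gcongr
  have : 2 ≤ ‖y - z‖ ^ 2 / a ^ 2 := by
    rw [le_div_iff₀ (by positivity)]; nlinarith
  linarith

lemma cut_supp {z y : E3} {a : ℝ} (ha : 0 < a) (h : fderiv ℝ (cut z a) y ≠ 0) :
    a ≤ ‖y - z‖ ∧ ‖y - z‖ ≤ 3 / 2 * a := by
  have hc : Continuous fun y : E3 => ‖y - z‖ := by fun_prop
  constructor
  · by_contra hlt
    push Not at hlt
    apply h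
    have : cut z a =ᶠ[nhds y] fun _ => 0 := by
      filter_upwards [hc.continuousAt.eventually_lt continuousAt_const hlt] with s hs
      exact cut_zero ha hs.le
    rw [this.fderiv_eq (𝕜 := ℝ)]; simp
  · by_contra hlt
    push Not at hlt
    apply h
    have : cut z a =ᶠ[nhds y] fun _ => 1 := by
      filter_upwards [continuousAt_const.eventually_lt hc.continuousAt hlt] with s hs
      exact cut_one ha hs.le
    rw [this.fderiv_eq (𝕜 := ℝ)]; simp

lemma cut_bound (z y : E3) {a : ℝ} (ha : 0 < a) : ‖fderiv ℝ (cut z a) y‖ ≤ 3 * KT / a := by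
  by_cases h0 : fderiv ℝ (cut z a) y = 0
  · rw [h0, norm_zero]; have := KT_pos; positivity
  obtain ⟨-, h2⟩ := cut_supp ha h0
  refine ContinuousLinearMap.opNorm_le_bound _ (by have := KT_pos; positivity) fun v => ?_
  have hl : HasDerivAt (fun s : ℝ => y + s • v) v 0 := by
    simpa using ((hasDerivAt_id (0:ℝ)).smul_const v).const_add y
  have h1 : HasDerivAt (fun s : ℝ => cut z a (y + s • v)) (fderiv ℝ (cut z a) y v) 0 := by
    have : HasFDerivAt (cut z a) (fderiv ℝ (cut z a) y) (y + (0:ℝ) • v) := by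
      simpa using ((cut_contDiff z a).differentiable (by simp) y).hasFDerivAt
    exact this.comp_hasDerivAt 0 hl
  have hn : HasDerivAt (fun s : ℝ => ‖y + s • v - z‖ ^ 2 / a ^ 2 - 1) (2 * ⟪y - z, v⟫ / a ^ 2) 0 := by
    have := ((hl.sub_const z).norm_sq.div_const (a ^ 2)).sub_const 1
    simpa using this
  have h3 : HasDerivAt (fun s : ℝ => cut z a (y + s • v))
      (deriv Real.smoothTransition (‖y + (0:ℝ) • v - z‖ ^ 2 / a ^ 2 - 1) * (2 * ⟪y - z, v⟫ / a ^ 2)) 0 :=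
    HasDerivAt.comp (0:ℝ) (h₂ := Real.smoothTransition)
      ((Real.smoothTransition.contDiff (n := 1)).differentiable (by simp) _).hasDerivAt hn
  rw [h1.unique h3, norm_mul]
  have h4 : ‖2 * ⟪y - z, v⟫ / a ^ 2‖ ≤ 3 / a * ‖v‖ := by
    rw [norm_div, norm_mul, norm_pow, Real.norm_of_nonneg ha.le, Real.norm_ofNat, div_le_iff₀ (by positivity)]
    have h5 := norm_inner_le_norm (𝕜 := ℝ) (y - z) v
    have h6 : 3 / a * ‖v‖ * a ^ 2 = 2 * (3 / 2 * a * ‖v‖) := by field_simp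
    rw [h6]
    have h7 : ‖y - z‖ * ‖v‖ ≤ 3 / 2 * a * ‖v‖ := by gcongr
    linarith
  calc _ ≤ KT * (3 / a * ‖v‖) := mul_le_mul (KT_bound _) h4 (norm_nonneg _) KT_pos.le
    _ = _ := by ring

/-- A cutoff with quantitative control, vanishing on `Z` and equal to one near `x`. -/
def GoodCut (x : E3) (Z : Set E3) (q : ℝ) : Prop :=
  ∃ (χ : E3 → ℝ) (z : E3) (A D G : ℝ), ContDiff ℝ (⊤ : ℕ∞) χ ∧ (∀ y, 0 ≤ χ y ∧ χ y ≤ 1) ∧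
    (∀ y ∈ Z, χ y = 0) ∧ (∀ᶠ y in nhds x, χ y = 1) ∧ 0 < A ∧ 0 < D ∧ 0 ≤ G ∧
    (∀ y ∈ S2, ‖fderiv ℝ χ y‖ ≤ G) ∧
    (∀ y ∈ S2, fderiv ℝ χ y ≠ 0 → ‖y - z‖ ≤ A ∧ D ≤ ‖y - x‖) ∧ (G * A ^ 2 / D ^ 2) ^ 2 ≤ q

lemma main_est3 {ι : Type} [Fintype ι] {h : E3 → E3} (hH : IsHarmonicSphereMap h) {x : E3}
    (hx : x ∈ S2) {Z : ι → Set E3} {q : ι → ℝ} (hg : ∀ i, GoodCut x (Z i) (q i))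
    {K : Set E3} (hK : IsCompact K) (hKS : K ⊆ S2)
    (hχK : ∀ y ∈ S2, y ∉ K → ∃ i, y ∈ Z i)
    (hvol : (μH[2] : Measure E3) (h '' K) ≤ ENNReal.ofReal (((μH[2] : Measure E3) S2).toReal / 2)) :
    enDensity h x ≤ (4096 * 2 * 2592) ^ 2 * (Fintype.card ι * ∑ i, q i) := by
  choose χ z A D G h1 h2 h3 h4 h5 h6 h7 h8 h9 h10 using hg
  have hm := main_est2 hH hx h1 h2 hK hKS
    (fun y hy hyK => (hχK y hy hyK).imp fun i hi => h3 i y hi) h4 hvol h5 h6 h7 h8 h9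
  have hm2 : enDensity h x ≤ (4096 * 2 * 2592 * ∑ i, G i * A i ^ 2 / D i ^ 2) ^ 2 := by
    calc _ = √(enDensity h x) ^ 2 := (Real.sq_sqrt (enDensity_nonneg h x)).symm
      _ ≤ _ := by gcongr
  refine hm2.trans ?_
  rw [mul_pow]
  gcongr
  refine sq_sum_le_card_mul_sum_sq.trans ?_
  rw [Finset.card_univ]
  gcongr with i _
  exact h10 i

lemma hole_good {x z : E3} (hx : x ∈ S2) (hz : z ∈ S2) {R : ℝ} (hR : 0 < R) (h : x ∉ gBall z (4 * R)) :
    GoodCut x (gBall z R) (2 * (108 * KT) ^ 2 * rhoSq z R x) := by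
  obtain ⟨hR4, hf⟩ := far_of_not_mem hx hz hR h
  have hrho := hole_rho hx hz hR h
  have hs : 0 < sin (R / 2) := sin_pos_of_pos_of_lt_pi (by linarith) (by linarith [pi_pos])
  have hball : ∀ y ∈ gBall z R, ‖y - z‖ < 2 * sin (R / 2) := fun y hy =>
    norm_lt_of_mem hz hR.le (by linarith [pi_pos]) hy
  set a := 2 * sin (R / 2) with ha
  have ha0 : 0 < a := by positivity
  have hxz : 0 < ‖x - z‖ := by linarith
  have hK := KT_pos
  refine ⟨cut z a, z, 3 / 2 * a, ‖x - z‖ / 4, 3 * KT / a, cut_contDiff z a, cut_mem z a, ?_, ?_,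
    by positivity, by positivity, by positivity, fun y _ => cut_bound z y ha0, ?_, ?_⟩
  · exact fun y hy => cut_zero ha0 (hball y hy).le
  · have hc : Continuous fun y : E3 => ‖y - z‖ := by fun_prop
    have : 3 / 2 * a < ‖x - z‖ := by linarith
    filter_upwards [continuousAt_const.eventually_lt hc.continuousAt this] with s hs
    exact cut_one ha0 hs.le
  · intro y _ hy
    obtain ⟨h1, h2⟩ := cut_supp ha0 hy
    refine ⟨h2, ?_⟩
    have : x - z = (y - z) - (y - x) := by abel
    have h3 := norm_sub_le (y - z) (y - x)
    rw [← this] at h3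
    linarith
  · have e : 3 * KT / a * (3 / 2 * a) ^ 2 / (‖x - z‖ / 4) ^ 2 = 108 * KT * (a / ‖x - z‖ ^ 2) := by
      field_simp; ring
    rw [e, mul_pow]
    have := mul_le_mul_of_nonneg_left hrho (sq_nonneg (108 * KT))
    linarith

lemma outer_good {x z : E3} (hz : z ∈ S2) {R d : ℝ} (hR : 0 < R) (hd : 0 < d)
    (h : x ∈ gBall z (d⁻¹ * R)) :
    GoodCut x {y | d * R / 4 < ‖y - x‖} ((54 * KT / d) ^ 2 * (4 + (d⁻¹) ^ 2) ^ 2 * rhoSq z R x) := by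
  have hrho := outer_rho hz hR hd h
  set a := d * R / 8 with ha
  have ha0 : 0 < a := by positivity
  have hK := KT_pos
  have hfd : ∀ y, fderiv ℝ (fun y => 1 - cut x a y) y = - fderiv ℝ (cut x a) y := fun y => by
    rw [fderiv_const_sub]
  refine ⟨fun y => 1 - cut x a y, x, 3 / 2 * a, a, 3 * KT / a, contDiff_const.sub (cut_contDiff x a),
    fun y => ?_, fun y hy => ?_, ?_, by positivity, by positivity, by positivity, fun y _ => ?_, ?_, ?_⟩
  · have := cut_mem x a y
    constructor <;> linarith
  · have hy' : d * R / 4 < ‖y - x‖ := hy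
    have := cut_one (z := x) (y := y) ha0 (by linarith)
    simp only [this, sub_self]
  · have hc : Continuous fun y : E3 => ‖y - x‖ := by fun_prop
    have : ‖x - x‖ < a := by simpa using ha0
    filter_upwards [hc.continuousAt.eventually_lt continuousAt_const this] with s hs
    rw [cut_zero ha0 hs.le, sub_zero]
  · rw [hfd, norm_neg]; exact cut_bound x y ha0
  · intro y _ hy
    rw [hfd, neg_ne_zero] at hy
    obtain ⟨h1, h2⟩ := cut_supp ha0 hy
    exact ⟨h2, h1⟩
  · have e : 3 * KT / a * (3 / 2 * a) ^ 2 / a ^ 2 = 54 * KT / d * (1 / R) := by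
      rw [ha]; field_simp; ring
    rw [e, mul_pow]
    have := mul_le_mul_of_nonneg_left hrho (sq_nonneg (54 * KT / d))
    linarith

/-! ### Conclusion -/

lemma gBall_rel (z : E3) (R : ℝ) : ∃ U : Set E3, IsOpen U ∧ gBall z R = S2 ∩ U := by
  refine ⟨{y | gdist z y < R}, ?_, by ext; simp [gBall]⟩
  have : Continuous fun y : E3 => gdist z y := by
    unfold gdist
    exact Real.continuous_arccos.comp (continuous_const.inner continuous_id)
  exact isOpen_lt this continuous_const

lemma gBall_meas (z : E3) (R : ℝ) : MeasurableSet (gBall z R) := by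
  obtain ⟨U, hU, he⟩ := gBall_rel z R
  rw [he]; exact measurableSet_S2.inter hU.measurableSet

lemma compact_diff {ι : Type} {L : Set E3} (hL : IsCompact L) (hLS : L ⊆ S2) (z : ι → E3) (R : ι → ℝ) :
    IsCompact (L \ ⋃ i, gBall (z i) (R i)) := by
  choose U hU he using fun i => gBall_rel (z i) (R i)
  have : L \ ⋃ i, gBall (z i) (R i) = L \ ⋃ i, U i := by
    ext y
    simp only [Set.mem_sdiff, Set.mem_iUnion, he, Set.mem_inter_iff]
    constructor
    · rintro ⟨h1, h2⟩
      exact ⟨h1, fun ⟨i, hi⟩ => h2 ⟨i, hLS h1, hi⟩⟩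
    · rintro ⟨h1, h2⟩
      exact ⟨h1, fun ⟨i, hi⟩ => h2 ⟨i, hi.2⟩⟩
  rw [this]
  exact hL.diff (isOpen_iUnion hU)

lemma vol_small {h : E3 → E3} (hH : IsHarmonicSphereMap h) {K Ω : Set E3} (hK : IsCompact K)
    (hKΩ : K ⊆ Ω) (hΩ : MeasurableSet Ω) (hΩS : Ω ⊆ S2)
    (hE : energyOn h Ω ≤ 2 * (((μH[2] : Measure E3) S2).toReal / 8)) :
    (μH[2] : Measure E3) (h '' K) ≤ ENNReal.ofReal (((μH[2] : Measure E3) S2).toReal / 2) := by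
  refine (area_bound hH.1.1 hK.measurableSet (hKΩ.trans hΩS)).trans ?_
  refine (lintegral_mono_set hKΩ).trans ?_
  refine (energy_lintegral hH.1.1 hΩ hΩS hE).trans (le_of_eq ?_)
  congr 1; ring

/-- Lemma 2.3 / `lemma:rational`: pointwise control of the energy density
of a rational map whose energy is captured by two collections of balls. -/
theorem statement5 (k : ℕ) (hk : 1 ≤ k) :
    ∃ ε₁ : ℝ, 0 < ε₁ ∧
      ∀ d : ℝ, 0 < d →
        ∃ C : ℝ, 0 < C ∧
          ∀ h : E3 → E3, IsHarmonicSphereMap h → |sphDeg h| ≤ k →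
          ∀ (n₁ n₂ : ℕ) (z₁ : Fin n₁ → E3) (R₁ : Fin n₁ → ℝ)
            (z₂ : Fin n₂ → E3) (R₂ : Fin n₂ → ℝ),
            1 ≤ n₁ → n₁ + n₂ ≤ k →
            (∀ i, z₁ i ∈ S2 ∧ 0 < R₁ i) → (∀ i, z₂ i ∈ S2 ∧ 0 < R₂ i) →
            -- (a) most of the energy is contained in the union of the balls
            energyOn h (S2 \ ((⋃ i, gBall (z₁ i) (R₁ i)) ∪ ⋃ i, gBall (z₂ i) (R₂ i)))
                ≤ 2 * ε₁ →
            -- (b) small energy on the annuli around the second collection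
            (∀ i, energyOn h (gBall (z₂ i) (2 * R₂ i) \ gBall (z₂ i) (R₂ i)) ≤ 2 * ε₁) →
            -- (c) local smallness of the energy near the first collection
            (∀ x ∈ ⋃ i, gBall (z₁ i) (4 * R₁ i), ∃ j : Fin n₁,
                x ∈ gBall (z₁ j) (d⁻¹ * R₁ j) ∧
                energyOn h (gBall x (d * R₁ j) \ ⋃ i, gBall (z₂ i) (R₂ i)) ≤ 2 * ε₁) →
            -- conclusion: pointwise bound on the energy density
            ∀ x ∈ S2 \ ⋃ i, gBall (z₂ i) (4 * R₂ i),
              enDensity h x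
                ≤ C * ((∑ i, rhoSq (z₁ i) (R₁ i) x) + ∑ i, rhoSq (z₂ i) (R₂ i) x) := by
  have hσ : 0 < ((μH[2] : Measure E3) S2).toReal := by
    apply ENNReal.toReal_pos
    · intro h0
      have := one_le_haus_S2
      rw [h0] at this
      simp at this
    · exact (haus_S2_le.trans_lt ENNReal.ofReal_lt_top).ne
  refine ⟨((μH[2] : Measure E3) S2).toReal / 8, by positivity, fun d hd => ?_⟩
  have hKT := KT_pos
  set C1 : ℝ := 2 * (108 * KT) ^ 2 with hC1
  set C2 : ℝ := (54 * KT / d) ^ 2 * (4 + (d⁻¹) ^ 2) ^ 2 with hC2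
  have hC10 : 0 < C1 := by positivity
  have hC20 : 0 < C2 := by positivity
  refine ⟨(4096 * 2 * 2592) ^ 2 * (k * (C1 + C2)), by positivity, ?_⟩
  intro h hH _ n₁ n₂ z₁ R₁ z₂ R₂ hn₁ hn hz₁ hz₂ ha _ hc x hx
  obtain ⟨hxS, hx2⟩ := hx
  simp only [mem_iUnion, not_exists] at hx2
  have hr1 : ∀ i, 0 ≤ rhoSq (z₁ i) (R₁ i) x := fun i => rhoSq_nonneg _ _ _
  have hr2 : ∀ i, 0 ≤ rhoSq (z₂ i) (R₂ i) x := fun i => rhoSq_nonneg _ _ _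
  have hs1 : 0 ≤ ∑ i, rhoSq (z₁ i) (R₁ i) x := Finset.sum_nonneg fun i _ => hr1 i
  have hs2 : 0 ≤ ∑ i, rhoSq (z₂ i) (R₂ i) x := Finset.sum_nonneg fun i _ => hr2 i
  have hg2 : ∀ i, GoodCut x (gBall (z₂ i) (R₂ i)) (C1 * rhoSq (z₂ i) (R₂ i) x) := fun i =>
    hole_good hxS (hz₂ i).1 (hz₂ i).2 (hx2 i)
  rw [mul_assoc]
  by_cases hx1 : x ∈ ⋃ i, gBall (z₁ i) (4 * R₁ i)
  · obtain ⟨j, hj, hE⟩ := hc x hx1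
    have hR := (hz₁ j).2
    have hK : IsCompact ((S2 ∩ {y | ‖y - x‖ ≤ d * R₁ j / 4}) \ ⋃ i, gBall (z₂ i) (R₂ i)) := by
      refine compact_diff (isCompact_S2.inter_right ?_) inter_subset_left z₂ R₂
      exact isClosed_le (by fun_prop) continuous_const
    have hdR : 0 < d * R₁ j := by positivity
    have hvol := vol_small hH hK (Ω := gBall x (d * R₁ j) \ ⋃ i, gBall (z₂ i) (R₂ i)) (by
        rintro y ⟨⟨hy1, hy2⟩, hy3⟩
        refine ⟨⟨hy1, ?_⟩, hy3⟩
        have h1 := (gdist_le hxS hy1).1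
        rw [norm_sub_rev] at h1
        have h2 : ‖y - x‖ ≤ d * R₁ j / 4 := hy2
        linarith)
      ((gBall_meas _ _).diff (MeasurableSet.iUnion fun i => gBall_meas _ _))
      (fun y hy => hy.1.1) hE
    have hmain := main_est3 (ι := Option (Fin n₂)) hH hxS
      (Z := fun o => o.elim {y | d * R₁ j / 4 < ‖y - x‖} fun i => gBall (z₂ i) (R₂ i))
      (q := fun o => o.elim (C2 * rhoSq (z₁ j) (R₁ j) x) fun i => C1 * rhoSq (z₂ i) (R₂ i) x)
      (by
        rintro (_ | i)
        · exact outer_good (hz₁ j).1 hR hd hj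
        · exact hg2 i)
      hK (fun y hy => hy.1.1)
      (by
        intro y hy hyK
        by_cases h1 : ‖y - x‖ ≤ d * R₁ j / 4
        · by_cases h2 : y ∈ ⋃ i, gBall (z₂ i) (R₂ i)
          · obtain ⟨i, hi⟩ := mem_iUnion.1 h2
            exact ⟨some i, hi⟩
          · exact absurd ⟨⟨hy, h1⟩, h2⟩ hyK
        · exact ⟨none, not_le.1 h1⟩)
      hvol
    refine hmain.trans ?_
    rw [Fintype.card_option, Fintype.card_fin, Fintype.sum_option]
    simp only [Option.elim]
    rw [← Finset.mul_sum, mul_assoc (k : ℝ)]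
    have h1 : rhoSq (z₁ j) (R₁ j) x ≤ ∑ i, rhoSq (z₁ i) (R₁ i) x :=
      Finset.single_le_sum (f := fun i => rhoSq (z₁ i) (R₁ i) x) (fun i _ => hr1 i) (Finset.mem_univ j)
    have h2 : ((n₂ + 1 : ℕ) : ℝ) ≤ k := by exact_mod_cast (by omega : n₂ + 1 ≤ k)
    have h3 : C2 * rhoSq (z₁ j) (R₁ j) x ≤ C2 * ∑ i, rhoSq (z₁ i) (R₁ i) x := by gcongr
    have h4 : C2 * rhoSq (z₁ j) (R₁ j) x + C1 * ∑ i, rhoSq (z₂ i) (R₂ i) x ≤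
        (C1 + C2) * (∑ i, rhoSq (z₁ i) (R₁ i) x + ∑ i, rhoSq (z₂ i) (R₂ i) x) := by
      nlinarith [mul_nonneg hC10.le hs1, mul_nonneg hC20.le hs2]
    have h5 : 0 ≤ (C1 + C2) * (∑ i, rhoSq (z₁ i) (R₁ i) x + ∑ i, rhoSq (z₂ i) (R₂ i) x) := by
      positivity
    have h6 := hr1 j
    exact mul_le_mul_of_nonneg_left (mul_le_mul h2 h4 (by positivity) (by positivity)) (by positivity)
  · simp only [mem_iUnion, not_exists] at hx1
    have hset : S2 \ ((⋃ i, gBall (z₁ i) (R₁ i)) ∪ ⋃ i, gBall (z₂ i) (R₂ i)) =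
        (S2 \ ⋃ i, gBall (z₁ i) (R₁ i)) \ ⋃ i, gBall (z₂ i) (R₂ i) := sdiff_sdiff.symm
    have hK : IsCompact (S2 \ ((⋃ i, gBall (z₁ i) (R₁ i)) ∪ ⋃ i, gBall (z₂ i) (R₂ i))) := by
      rw [hset]
      exact compact_diff (compact_diff isCompact_S2 Subset.rfl z₁ R₁) (fun y hy => hy.1) z₂ R₂
    have hvol := vol_small hH hK Subset.rfl hK.measurableSet (fun y hy => hy.1) ha
    have hmain := main_est3 (ι := Fin n₁ ⊕ Fin n₂) hH hxS
      (Z := Sum.elim (fun i => gBall (z₁ i) (R₁ i)) fun i => gBall (z₂ i) (R₂ i))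
      (q := Sum.elim (fun i => C1 * rhoSq (z₁ i) (R₁ i) x) fun i => C1 * rhoSq (z₂ i) (R₂ i) x)
      (by
        rintro (i | i)
        · exact hole_good hxS (hz₁ i).1 (hz₁ i).2 (hx1 i)
        · exact hg2 i)
      hK (fun y hy => hy.1)
      (by
        intro y hy hyK
        by_cases h1 : y ∈ ⋃ i, gBall (z₁ i) (R₁ i)
        · obtain ⟨i, hi⟩ := mem_iUnion.1 h1
          exact ⟨Sum.inl i, hi⟩
        · by_cases h2 : y ∈ ⋃ i, gBall (z₂ i) (R₂ i)
          · obtain ⟨i, hi⟩ := mem_iUnion.1 h2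
            exact ⟨Sum.inr i, hi⟩
          · exact absurd ⟨hy, fun hu => hu.elim h1 h2⟩ hyK)
      hvol
    refine hmain.trans ?_
    rw [Fintype.card_sum, Fintype.card_fin, Fintype.card_fin, Fintype.sum_sum_type]
    simp only [Sum.elim_inl, Sum.elim_inr]
    rw [← Finset.mul_sum, ← Finset.mul_sum, ← mul_add, mul_assoc (k : ℝ)]
    have h2 : ((n₁ + n₂ : ℕ) : ℝ) ≤ k := by exact_mod_cast hn
    have h4 : C1 * (∑ i, rhoSq (z₁ i) (R₁ i) x + ∑ i, rhoSq (z₂ i) (R₂ i) x) ≤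
        (C1 + C2) * (∑ i, rhoSq (z₁ i) (R₁ i) x + ∑ i, rhoSq (z₂ i) (R₂ i) x) := by
      gcongr; linarith
    have h5 : 0 ≤ (C1 + C2) * (∑ i, rhoSq (z₁ i) (R₁ i) x + ∑ i, rhoSq (z₂ i) (R₂ i) x) := by
      positivity
    exact mul_le_mul_of_nonneg_left (mul_le_mul h2 h4 (by positivity) (by positivity)) (by positivity)
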